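/- arXiv:2002.02727 — 5 statements merged into one kernel-verified Lean document; each statement's English description precedes it below -/
import Mathlib

section
/- Let A and B be Noetherian local commutative rings containing a field k. If the completed tensor product A⊗̂_k B is a Noetherian ring, then A⊗̂_k B is flat as an A-module and flat as a B-module. -/
open TensorProduct

/-- The ideal `r = m ⊗ B + A ⊗ n` of `C = A ⊗[k] B`, where `m` and `n` are the Jacobson
radicals of `A` and `B` (for a local ring, the Jacobson radical is the maximal ideal). -/
noncomputable def tensorRadical (k A B : Type*) [Field k] [CommRing A] [CommRing B]
    [Algebra k A] [Algebra k B] : Ideal (A ⊗[k] B) :=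
  Ideal.map (Algebra.TensorProduct.includeLeft (R := k) (S := k) (A := A) (B := B))
      ((⊥ : Ideal A).jacobson) ⊔
    Ideal.map (Algebra.TensorProduct.includeRight (R := k) (A := A) (B := B))
      ((⊥ : Ideal B).jacobson)

/-- The completed tensor product `A ⊗̂[k] B`: the `r`-adic separated completion of
`C = A ⊗[k] B`, i.e. the inverse limit of the rings `C ⧸ r ^ i`. -/
noncomputable abbrev CompletedTensor (k A B : Type*) [Field k] [CommRing A] [CommRing B]
    [Algebra k A] [Algebra k B] : Type _ :=
  AdicCompletion (tensorRadical k A B) (A ⊗[k] B)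
/-- The `S`-linear multiplication map `S ⊗[A] I → S`. -/
noncomputable def ctMul (A S : Type*) [CommRing A] [CommRing S] [Algebra A S] (I : Ideal A) :
    S ⊗[A] I →ₗ[S] S :=
  (TensorProduct.AlgebraTensorModule.rid A S S).toLinearMap ∘ₗ
    TensorProduct.AlgebraTensorModule.lTensor S S I.subtype

lemma ctMul_tmul {A S : Type*} [CommRing A] [CommRing S] [Algebra A S] (I : Ideal A)
    (s : S) (a : I) : ctMul A S I (s ⊗ₜ a) = (a : A) • s := by
  simp [ctMul]

lemma ctMul_injective_iff {A S : Type*} [CommRing A] [CommRing S] [Algebra A S] (I : Ideal A) :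
    Function.Injective (ctMul A S I) ↔ Function.Injective (I.subtype.lTensor S) := by
  have : (ctMul A S I : S ⊗[A] I → S) =
      (TensorProduct.AlgebraTensorModule.rid A S S) ∘ (I.subtype.lTensor S) := rfl
  rw [this]
  exact (TensorProduct.AlgebraTensorModule.rid A S S).injective.of_comp_iff _

lemma ctMul_range {A S : Type*} [CommRing A] [CommRing S] [Algebra A S] (I : Ideal A) :
    I.map (algebraMap A S) ≤ LinearMap.range (ctMul A S I) := by
  rw [Ideal.map_le_iff_le_comap]
  intro a ha
  refine ⟨1 ⊗ₜ ⟨a, ha⟩, ?_⟩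
  rw [ctMul_tmul, Algebra.algebraMap_eq_smul_one]

/-- Flatness of a Noetherian completion `E` of a flat `A`-algebra `C`, assuming
an Artin-Rees property for extended ideals. -/
lemma ct_flat_of_artinRees {A C E : Type*} [CommRing A] [CommRing C] [CommRing E]
    [Algebra A C] [Algebra C E] [Algebra A E] [IsScalarTower A C E] [IsNoetherianRing A]
    [IsNoetherianRing E] [Module.Flat A C] (r : Ideal C)
    (h1 : r.map (algebraMap C E) ≤ (⊥ : Ideal E).jacobson)
    (h2 : ∀ (N : ℕ) (e : E), ∃ c : C, e - algebraMap C E c ∈ (r.map (algebraMap C E)) ^ N)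
    (h3 : ∀ (N : ℕ) (c : C), algebraMap C E c ∈ (r.map (algebraMap C E)) ^ N → c ∈ r ^ N)
    (hAR : ∀ (I : Ideal A) (i : ℕ), ∃ N, i ≤ N ∧
      I.map (algebraMap A C) ⊓ r ^ N ≤ r ^ i * I.map (algebraMap A C)) :
    Module.Flat A E := by
  rw [Module.Flat.iff_lTensor_injective']
  intro I
  rw [← ctMul_injective_iff, injective_iff_map_eq_zero]
  intro x hx
  set J := r.map (algebraMap C E) with hJ
  let ι : C ⊗[A] I →ₗ[A] E ⊗[A] I :=
    LinearMap.rTensor I (IsScalarTower.toAlgHom A C E).toLinearMap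
  have hι : ∀ (c : C) (a : I), ι (c ⊗ₜ a) = algebraMap C E c ⊗ₜ a := fun c a => by simp [ι]
  have hιs : ∀ (c : C) (t : C ⊗[A] I), ι (c • t) = algebraMap C E c • ι t := by
    intro c t
    induction t with
    | zero => simp
    | tmul d a => rw [TensorProduct.smul_tmul', hι, hι, TensorProduct.smul_tmul']; simp
    | add t u ht hu => rw [smul_add, map_add, ht, hu, map_add, smul_add]
  have hιμ : ∀ t, ctMul A E I (ι t) = algebraMap C E (ctMul A C I t) := by
    intro t
    induction t with
    | zero => simp
    | tmul d a => rw [hι, ctMul_tmul, ctMul_tmul, Algebra.smul_def, Algebra.smul_def, map_mul,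
        ← IsScalarTower.algebraMap_apply]
    | add t u ht hu => rw [map_add, map_add, ht, hu, map_add, map_add]
  have happ : ∀ (N : ℕ) (y : E ⊗[A] I), ∃ t, y - ι t ∈ J ^ N • (⊤ : Submodule E (E ⊗[A] I)) := by
    intro N y
    induction y with
    | zero => exact ⟨0, by simp⟩
    | tmul e a =>
      obtain ⟨c, hc⟩ := h2 N e
      refine ⟨c ⊗ₜ a, ?_⟩
      rw [hι, ← TensorProduct.sub_tmul]
      have : (e - algebraMap C E c) ⊗ₜ[A] a = (e - algebraMap C E c) • ((1 : E) ⊗ₜ[A] a) := by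
        rw [TensorProduct.smul_tmul']; simp
      rw [this]
      exact Submodule.smul_mem_smul hc trivial
    | add y z hy hz =>
      obtain ⟨t, ht⟩ := hy
      obtain ⟨u, hu⟩ := hz
      refine ⟨t + u, ?_⟩
      rw [map_add, add_sub_add_comm]
      exact add_mem ht hu
  have hιJ : ∀ (i : ℕ) (t : C ⊗[A] I), t ∈ r ^ i • (⊤ : Submodule C (C ⊗[A] I)) →
      ι t ∈ J ^ i • (⊤ : Submodule E (E ⊗[A] I)) := by
    intro i t ht
    induction ht using Submodule.smul_induction_on' with
    | smul c hc t _ =>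
      rw [hιs]
      refine Submodule.smul_mem_smul ?_ trivial
      rw [hJ, ← Ideal.map_pow]
      exact Ideal.mem_map_of_mem _ hc
    | add t _ u _ ht hu => rw [map_add]; exact add_mem ht hu
  have hinjC : Function.Injective (ctMul A C I) := by
    rw [ctMul_injective_iff]
    exact Module.Flat.lTensor_preserves_injective_linearMap _ Subtype.val_injective
  have hH : IsHausdorff J (E ⊗[A] I) := IsHausdorff.of_le_jacobson J _ h1
  refine hH.haus x fun i => ?_
  rw [SModEq.zero]
  obtain ⟨N, hiN, hN⟩ := hAR I i
  obtain ⟨t, ht⟩ := happ N x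
  have hle : J ^ N • (⊤ : Submodule E (E ⊗[A] I)) ≤ J ^ i • ⊤ :=
    Submodule.smul_mono_left (Ideal.pow_le_pow_right hiN)
  have hμt : ctMul A C I t ∈ r ^ N := by
    apply h3
    rw [← hιμ]
    have h4 : ctMul A E I (x - ι t) ∈ J ^ N := by
      generalize x - ι t = w at ht
      induction ht using Submodule.smul_induction_on' with
      | smul c hc t _ => rw [map_smul, smul_eq_mul]; exact Ideal.mul_mem_right _ _ hc
      | add t _ u _ ht hu => rw [map_add]; exact add_mem ht hu
    rw [map_sub, hx, zero_sub] at h4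
    exact neg_mem_iff.mp h4
  have hμt' : ctMul A C I t ∈ I.map (algebraMap A C) := by
    clear ht hμt
    induction t with
    | zero => simp
    | tmul c a =>
      rw [ctMul_tmul, Algebra.smul_def]
      exact Ideal.mul_mem_right _ _ (Ideal.mem_map_of_mem _ a.2)
    | add t u ht hu => rw [map_add]; exact add_mem ht hu
  have h5 : ctMul A C I t ∈ Submodule.map (ctMul A C I) (r ^ i • ⊤) := by
    rw [Submodule.map_smul'', Submodule.map_top]
    exact Ideal.mul_mono_right (ctMul_range I) (hN ⟨hμt', hμt⟩)
  obtain ⟨z, hz, hzt⟩ := h5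
  obtain rfl := hinjC hzt
  have := add_mem (hle ht) (hιJ i _ hz)
  rwa [sub_add_cancel] at this

/-- Artin-Rees property of `A ⊗[k] B` for ideals extended from `A`. -/
lemma ct_artinRees {k A B : Type*} [Field k] [CommRing A] [CommRing B] [IsNoetherianRing A]
    [Algebra k A] [Algebra k B] (m : Ideal A) (n : Ideal B) (I : Ideal A) (i : ℕ) :
    ∃ N, i ≤ N ∧
      I.map (algebraMap A (A ⊗[k] B)) ⊓ (m.map (algebraMap A (A ⊗[k] B)) ⊔ n.map
        (Algebra.TensorProduct.includeRight (R := k) (A := A) (B := B))) ^ N ≤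
      (m.map (algebraMap A (A ⊗[k] B)) ⊔ n.map
        (Algebra.TensorProduct.includeRight (R := k) (A := A) (B := B))) ^ i *
        I.map (algebraMap A (A ⊗[k] B)) := by
  obtain ⟨s, hs⟩ := Ideal.exists_pow_inf_eq_pow_smul m (M := A) I
  have hs' : ∀ a ∈ I, a ∈ m ^ (s + i) → a ∈ m ^ i * I := by
    intro a haI ham
    have h := hs (s + i) (by omega)
    have h2 : a ∈ m ^ (s + i) • (⊤ : Submodule A A) ⊓ I := ⟨by simpa using ham, haI⟩
    rw [h, Nat.add_sub_cancel_left] at h2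
    exact Ideal.mul_mono_right inf_le_right h2
  refine ⟨(s + i) + i, by omega, ?_⟩
  set M := m.map (algebraMap A (A ⊗[k] B)) with hM
  set F := n.map (Algebra.TensorProduct.includeRight (R := k) (A := A) (B := B)) with hF
  rintro y ⟨hyI, hyr⟩
  have hyr := Ideal.sup_pow_add_le_pow_sup_pow hyr
  -- adapted basis
  let V : Submodule k B := (n ^ i).restrictScalars k
  obtain ⟨W, hVW⟩ := V.exists_isCompl
  let bV := Module.Basis.ofVectorSpace k V
  let bW := Module.Basis.ofVectorSpace k W
  let b := (bV.prod bW).map (Submodule.prodEquivOfIsCompl V W hVW)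
  have hb1 : ∀ j, b (Sum.inl j) ∈ n ^ i := by
    intro j
    have : b (Sum.inl j) = (bV j : B) := by simp [b]
    rw [this]
    exact (bV j).2
  have hb2 : ∀ v ∈ n ^ i, ∀ j, b.repr v (Sum.inr j) = 0 := by
    intro v hv j
    have : (Submodule.prodEquivOfIsCompl V W hVW).symm v = (⟨v, hv⟩, 0) :=
      Submodule.prodEquivOfIsCompl_symm_apply_left (p := V) (q := W) hVW ⟨v, hv⟩
    simp [b, this]
  let β := Algebra.TensorProduct.basis A b
  have hcoord : ∀ (K : Ideal A) (c : A ⊗[k] B), c ∈ K.map (algebraMap A (A ⊗[k] B)) →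
      ∀ j, β.repr c j ∈ K := by
    intro K c hc j
    replace hc : c ∈ K • (⊤ : Submodule A (A ⊗[k] B)) := by
      rw [Ideal.smul_top_eq_map]; exact hc
    induction hc using Submodule.smul_induction_on' with
    | smul a ha c _ => simpa using Ideal.mul_mem_right _ _ ha
    | add c _ d _ hc hd => simpa using add_mem hc hd
  have hcoordF : ∀ c ∈ F ^ i, ∀ j, β.repr c (Sum.inr j) = 0 := by
    intro c hc j
    rw [hF, ← Ideal.map_pow, Ideal.map] at hc
    induction hc using Submodule.closure_induction with
    | zero => simp
    | add c d _ _ hc hd => simp [hc, hd]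
    | smul_mem c x hx =>
      obtain ⟨v, hv, rfl⟩ := hx
      induction c with
      | zero => simp
      | tmul a w =>
        have : w * v ∈ n ^ i := Ideal.mul_mem_left _ _ hv
        simp [β, Algebra.TensorProduct.basis_repr_tmul, hb2 _ this]
      | add c d hc hd => rw [add_smul, map_add, Finsupp.add_apply, hc, hd, add_zero]
  have hyM : ∀ j, β.repr y (Sum.inr j) ∈ m ^ (s + i) := by
    intro j
    obtain ⟨c, hc, d, hd, rfl⟩ := Submodule.mem_sup.mp hyr
    rw [hM, ← Ideal.map_pow] at hc
    simpa [hcoordF d hd j] using hcoord _ c hc (Sum.inr j)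
  rw [← β.linearCombination_repr y, Finsupp.linearCombination_apply]
  refine Submodule.sum_mem _ fun j _ => ?_
  have hIj := hcoord I y hyI j
  rcases j with j | j
  all_goals beta_reduce
  · rw [Algebra.smul_def, mul_comm (algebraMap A (A ⊗[k] B) _)]
    refine Ideal.mul_mem_mul (Ideal.pow_right_mono (le_sup_right : F ≤ M ⊔ F) i ?_)
      (Ideal.mem_map_of_mem _ hIj)
    rw [hF, ← Ideal.map_pow]
    have : β (Sum.inl j) = Algebra.TensorProduct.includeRight (R := k) (A := A) (B := B)
        (b (Sum.inl j)) := by simp [β]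
    rw [this]
    exact Ideal.mem_map_of_mem _ (hb1 j)
  · rw [Algebra.smul_def]
    refine Ideal.mul_mem_right _ _ ?_
    have := Ideal.mem_map_of_mem (algebraMap A (A ⊗[k] B)) (hs' _ hIj (hyM j))
    rw [Ideal.map_mul, Ideal.map_pow] at this
    exact Ideal.mul_mono_left (Ideal.pow_right_mono (le_sup_left : M ≤ M ⊔ F) i) this

lemma ct_mem_pow {C : Type*} [CommRing C] (r : Ideal C) (hr : r.FG) (N : ℕ)
    (e : AdicCompletion r C) :
    e ∈ (r.map (algebraMap C (AdicCompletion r C))) ^ N ↔ AdicCompletion.evalₐ r N e = 0 := by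
  have h1 : e ∈ (r ^ N • ⊤ : Submodule C (AdicCompletion r C)) ↔
      e ∈ (r.map (algebraMap C (AdicCompletion r C))) ^ N := by
    rw [Ideal.smul_top_eq_map, Ideal.map_pow]; rfl
  rw [← h1, AdicCompletion.pow_smul_top_eq_ker_eval hr, LinearMap.mem_ker]
  constructor
  · intro h
    rw [← AdicCompletion.factor_eval_eq_evalₐ (I := r) e (by simp), h, map_zero]
  · intro h
    rw [← AdicCompletion.factor_evalₐ_eq_eval (I := r) e (by simp), h, map_zero]

/-- Flatness of a Noetherian adic completion. -/
lemma ct_flat_adicCompletion {A C : Type*} [CommRing A] [CommRing C]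
    [Algebra A C] (r : Ideal C) [IsNoetherianRing A]
    [IsNoetherianRing (AdicCompletion r C)] [Module.Flat A C] (hr : r.FG)
    (hAR : ∀ (I : Ideal A) (i : ℕ), ∃ N, i ≤ N ∧
      I.map (algebraMap A C) ⊓ r ^ N ≤ r ^ i * I.map (algebraMap A C)) :
    @Module.Flat A (AdicCompletion r C) _ _ (@Algebra.toModule _ _ _ _
      ((algebraMap C (AdicCompletion r C)).comp (algebraMap A C)).toAlgebra) := by
  refine @ct_flat_of_artinRees A C (AdicCompletion r C) _ _ _ _ _
    ((algebraMap C (AdicCompletion r C)).comp (algebraMap A C)).toAlgebra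
    (@IsScalarTower.of_algebraMap_eq' A C (AdicCompletion r C) _ _ _ _ _
      ((algebraMap C (AdicCompletion r C)).comp (algebraMap A C)).toAlgebra rfl)
    _ _ _ r ?_ ?_ ?_ hAR
  · have := AdicCompletion.isAdicComplete (M := C) hr
    have : IsAdicComplete (r.map (algebraMap C (AdicCompletion r C))) (AdicCompletion r C) :=
      (IsAdicComplete.map_algebraMap_iff _ _).mpr this
    exact IsAdicComplete.le_jacobson_bot _
  · intro N e
    obtain ⟨c, hc⟩ := Ideal.Quotient.mk_surjective (AdicCompletion.evalₐ r N e)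
    refine ⟨c, ?_⟩
    rw [ct_mem_pow r hr, map_sub, AlgHom.commutes, ← hc, Ideal.Quotient.algebraMap_eq, sub_self]
  · intro N c hc
    rw [ct_mem_pow r hr, AlgHom.commutes, Ideal.Quotient.algebraMap_eq] at hc
    exact Ideal.Quotient.eq_zero_iff_mem.mp hc

theorem completedTensor_flat_of_isNoetherianRing (k A B : Type*) [Field k]
    [CommRing A] [CommRing B] [IsNoetherianRing A] [IsNoetherianRing B]
    [IsLocalRing A] [IsLocalRing B] [Algebra k A] [Algebra k B]
    (hE : IsNoetherianRing (CompletedTensor k A B)) :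
    letI : Algebra A (CompletedTensor k A B) :=
      ((algebraMap (A ⊗[k] B) (CompletedTensor k A B)).comp
        (Algebra.TensorProduct.includeLeft (R := k) (S := k) (A := A) (B := B)).toRingHom).toAlgebra
    letI : Algebra B (CompletedTensor k A B) :=
      ((algebraMap (A ⊗[k] B) (CompletedTensor k A B)).comp
        (Algebra.TensorProduct.includeRight (R := k) (A := A) (B := B)).toRingHom).toAlgebra
    Module.Flat A (CompletedTensor k A B) ∧ Module.Flat B (CompletedTensor k A B) := by
  have hr : (tensorRadical k A B).FG :=
    Submodule.FG.sup (Ideal.FG.map (IsNoetherian.noetherian _) _)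
      (Ideal.FG.map (IsNoetherian.noetherian _) _)
  refine ⟨?_, ?_⟩
  · have h := ct_flat_adicCompletion (A := A) (tensorRadical k A B) hr
      (fun I i => ct_artinRees _ _ I i)
    convert h using 1
    refine Module.ext' _ _ fun a x => ?_
    exact Algebra.smul_def (R := A) (A := AdicCompletion (tensorRadical k A B) (A ⊗[k] B)) a x
  · let σ : (B ⊗[k] A) ≃ₐ[k] (A ⊗[k] B) := Algebra.TensorProduct.comm k B A
    let _ : Algebra B (A ⊗[k] B) := Algebra.TensorProduct.rightAlgebra
    have hσ1 : ∀ x : B, σ (algebraMap B (B ⊗[k] A) x) = algebraMap B (A ⊗[k] B) x := fun x => rfl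
    have hσ : ((σ : B ⊗[k] A ≃+* A ⊗[k] B) : B ⊗[k] A →+* A ⊗[k] B).comp
        (algebraMap B (B ⊗[k] A)) = algebraMap B (A ⊗[k] B) := RingHom.ext hσ1
    have : Module.Flat B (A ⊗[k] B) := by
      let τ : B ⊗[k] A ≃ₐ[B] A ⊗[k] B := AlgEquiv.ofRingEquiv (f := σ.toRingEquiv) hσ1
      exact Module.Flat.of_linearEquiv τ.symm.toLinearEquiv
    have h := ct_flat_adicCompletion (A := B) (tensorRadical k A B) hr (fun I i => ?_)
    · exact h
    obtain ⟨N, hN, h⟩ := ct_artinRees (k := k) (B := A) (⊥ : Ideal B).jacobson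
      (⊥ : Ideal A).jacobson I i
    refine ⟨N, hN, ?_⟩
    set f : B ⊗[k] A →+* A ⊗[k] B := ((σ : B ⊗[k] A ≃+* A ⊗[k] B) : B ⊗[k] A →+* A ⊗[k] B)
      with hf
    have hfinj : Function.Injective f := σ.injective
    have hfsurj : Function.Surjective f := σ.surjective
    set R' := (⊥ : Ideal B).jacobson.map (algebraMap B (B ⊗[k] A)) ⊔ (⊥ : Ideal A).jacobson.map
        (Algebra.TensorProduct.includeRight (R := k) (A := B) (B := A)) with hR'
    have hI : (I.map (algebraMap B (B ⊗[k] A))).map f = I.map (algebraMap B (A ⊗[k] B)) := by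
      rw [Ideal.map_map, hσ]
    have hR : R'.map f = tensorRadical k A B := by
      have e1 : ((⊥ : Ideal B).jacobson.map (algebraMap B (B ⊗[k] A))).map f =
          (⊥ : Ideal B).jacobson.map
            (Algebra.TensorProduct.includeRight (R := k) (A := A) (B := B)) := by
        rw [Ideal.map_map, hσ]; rfl
      have e2 : ((⊥ : Ideal A).jacobson.map
          (Algebra.TensorProduct.includeRight (R := k) (A := B) (B := A))).map f =
          (⊥ : Ideal A).jacobson.map
            (Algebra.TensorProduct.includeLeft (R := k) (S := k) (A := A) (B := B)) :=
        Ideal.map_map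
          (Algebra.TensorProduct.includeRight (R := k) (A := B) (B := A)).toRingHom f
      rw [hR', Ideal.map_sup, tensorRadical, sup_comm, e1, e2]
    rintro y ⟨hy1, hy2⟩
    rw [← hI] at hy1 ⊢
    rw [← hR, ← Ideal.map_pow] at hy2 ⊢
    rw [← Ideal.map_mul]
    obtain ⟨u, hu, rfl⟩ := (Ideal.mem_map_iff_of_surjective f hfsurj).mp hy1
    obtain ⟨v, hv, huv⟩ := (Ideal.mem_map_iff_of_surjective f hfsurj).mp hy2
    obtain rfl := hfinj huv
    exact Ideal.mem_map_of_mem f (h ⟨hu, hv⟩)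
end

section
/- Let A and B be two semilocal Noetherian commutative rings containing a field k such that the completed tensor product A⊗̂_k B is Noetherian. If A and B are Cohen–Macaulay rings (i.e. the localization of A at each of its maximal ideals and the localization of B at each of its maximal ideals are Cohen–Macaulay local rings), then A⊗̂_k B is a Cohen–Macaulay ring. -/
open TensorProduct

open RingTheory.Sequence in
/-- A Noetherian local ring is Cohen–Macaulay iff its depth equals its Krull dimension,
equivalently (since the depth is the maximal length of a regular sequence in the maximal
ideal, and depth ≤ dimension always holds) iff there is a regular sequence contained in
the maximal ideal whose length is the Krull dimension of the ring. -/
def IsCohenMacaulayLocalRing (R : Type*) [CommRing R] [IsLocalRing R] : Prop :=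
  ∃ rs : List R, (∀ x ∈ rs, x ∈ IsLocalRing.maximalIdeal R) ∧ IsRegular R rs ∧
    (rs.length : WithBot ℕ∞) = ringKrullDim R

/-- A commutative ring is Cohen–Macaulay if its localization at every maximal ideal is a
Cohen–Macaulay local ring. -/
def IsCohenMacaulayRing (R : Type*) [CommRing R] : Prop :=
  ∀ (P : Ideal R) (hP : P.IsMaximal),
    haveI : P.IsPrime := hP.isPrime
    IsCohenMacaulayLocalRing (Localization.AtPrime P)

section
open RingTheory.Sequence IsLocalRing

theorem cm_of_crit {S : Type*} [CommRing S] [IsLocalRing S] [IsNoetherianRing S]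
    (rs : List S) (h1 : ∀ x ∈ rs, x ∈ maximalIdeal S) (h2 : IsWeaklyRegular S rs)
    (h3 : ∀ P : Ideal S, P.IsPrime → (∀ x ∈ rs, x ∈ P) → P = maximalIdeal S) :
    IsCohenMacaulayLocalRing S := by
  have hreg : IsRegular S rs := RingTheory.Sequence.IsRegular.of_isWeaklyRegular_of_mem_maximalIdeal _ h1 h2
  refine ⟨rs, h1, hreg, ?_⟩
  rw [← ringKrullDim_add_length_eq_ringKrullDim_of_isRegular rs hreg]
  have hle : Ideal.ofList rs ≤ maximalIdeal S := Ideal.span_le.mpr h1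
  have : Nontrivial (S ⧸ Ideal.ofList rs) :=
    Ideal.Quotient.nontrivial_iff.mpr (ne_top_of_le_ne_top (Ideal.IsPrime.ne_top inferInstance) hle)
  have h0 : Ring.KrullDimLE 0 (S ⧸ Ideal.ofList rs) := by
    rw [Ring.krullDimLE_zero_iff]
    intro I hI
    have hc := h3 (I.comap (Ideal.Quotient.mk _)) inferInstance (fun x hx => by
      have : Ideal.Quotient.mk (Ideal.ofList rs) x = 0 :=
        Ideal.Quotient.eq_zero_iff_mem.mpr (Ideal.subset_span hx)
      simp [this])
    have : (I.comap (Ideal.Quotient.mk (Ideal.ofList rs))).IsMaximal := by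
      rw [hc]; infer_instance
    rw [← Ideal.map_comap_of_surjective _ Ideal.Quotient.mk_surjective I]
    refine Ideal.IsMaximal.map_of_surjective_of_ker_le Ideal.Quotient.mk_surjective ?_
    exact (Ideal.ker_le_comap _)
  rw [ringKrullDimZero_iff_ringKrullDim_eq_zero.mp h0]
  simp

theorem cm_elim {S : Type*} [CommRing S] [IsLocalRing S] [IsNoetherianRing S]
    (h : IsCohenMacaulayLocalRing S) :
    ∃ rs : List S, (∀ x ∈ rs, x ∈ maximalIdeal S) ∧ IsWeaklyRegular S rs ∧
      ringKrullDim (S ⧸ Ideal.ofList rs) = 0 := by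
  obtain ⟨rs, h1, h2, h3⟩ := h
  refine ⟨rs, h1, h2.1, ?_⟩
  have := ringKrullDim_add_length_eq_ringKrullDim_of_isRegular rs h2
  rw [← h3] at this
  generalize ringKrullDim (S ⧸ Ideal.ofList rs) = d at this
  induction d with
  | bot => simp at this
  | coe d =>
    induction d with
    | top => 
      norm_cast at this
    | coe d =>
      norm_cast at this ⊢
      omega

theorem prime_eq_of_dim_zero {S : Type*} [CommRing S] [IsLocalRing S]
    (I : Ideal S) (h : ringKrullDim (S ⧸ I) = 0) (P : Ideal S) [P.IsPrime] (hP : I ≤ P) :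
    P = maximalIdeal S := by
  have h0 : Ring.KrullDimLE 0 (S ⧸ I) := by
    rw [Ring.krullDimLE_iff, h]; simp
  rw [Ring.krullDimLE_zero_iff] at h0
  have hp : (P.map (Ideal.Quotient.mk I)).IsPrime :=
    Ideal.map_isPrime_of_surjective Ideal.Quotient.mk_surjective (by simpa using hP)
  have := h0 _ hp
  have h2 := Ideal.comap_isMaximal_of_surjective (Ideal.Quotient.mk I) Ideal.Quotient.mk_surjective
    (K := P.map (Ideal.Quotient.mk I))
  rw [Ideal.comap_map_of_surjective _ Ideal.Quotient.mk_surjective, ← RingHom.ker_eq_comap_bot,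
    Ideal.mk_ker, sup_eq_left.mpr hP] at h2
  exact IsLocalRing.eq_maximalIdeal h2

theorem cm_of_ringEquiv {S T : Type*} [CommRing S] [IsLocalRing S] [CommRing T] [IsLocalRing T]
    (e : S ≃+* T) (h : IsCohenMacaulayLocalRing S) : IsCohenMacaulayLocalRing T := by
  obtain ⟨rs, h1, h2, h3⟩ := h
  refine ⟨rs.map e, ?_, ?_, ?_⟩
  · intro x hx
    obtain ⟨y, hy, rfl⟩ := List.mem_map.mp hx
    have := h1 y hy
    simp only [mem_maximalIdeal, mem_nonunits_iff] at this ⊢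
    simpa using this
  · refine (AddEquiv.isRegular_congr (e := e.toAddEquiv) ?_).mp h2
    exact List.forall₂_map_right_iff.mpr <| List.forall₂_same.mpr fun r _ x => by simp
  · rw [List.length_map, h3, ringKrullDim_eq_of_ringEquiv e]

theorem wr_of_exact {S : Type*} [CommRing S] {M M' M'' : Type*} [AddCommGroup M] [AddCommGroup M']
    [AddCommGroup M''] [Module S M] [Module S M'] [Module S M''] (rs : List S)
    (f : M →ₗ[S] M') (g : M' →ₗ[S] M'') (hf : Function.Injective f) (hfg : Function.Exact f g)
    (hg : Function.Surjective g) (h1 : IsWeaklyRegular M rs) (h2 : IsWeaklyRegular M'' rs) :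
    IsWeaklyRegular M' rs := by
  induction rs generalizing M M' M'' with
  | nil => simp
  | cons r rs ih =>
    rw [isWeaklyRegular_cons_iff] at h1 h2 ⊢
    refine ⟨isSMulRegular_of_range_eq_ker hf hfg.linearMap_ker_eq.symm h1.1 h2.1, ?_⟩
    refine ih (QuotSMulTop.map r f) (QuotSMulTop.map r g) ?_ 
      (QuotSMulTop.map_exact r hfg hg) (QuotSMulTop.map_surjective r hg) h1.2 h2.2
    have hz : Function.Exact (0 : M →ₗ[S] M) f := by
      rw [LinearMap.exact_zero_iff_injective]; exact hf
    have := QuotSMulTop.map_first_exact_on_four_term_exact_of_isSMulRegular_last hz hfg h2.1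
    rw [map_zero, LinearMap.exact_zero_iff_injective] at this
    exact this

theorem wr_tensor_of_finiteLength {R : Type*} {S : Type*} [CommRing R] [CommRing S] [IsLocalRing R]
    [Algebra R S] [Module.Flat R S] (fs : List S)
    (hf : IsWeaklyRegular (S ⊗[R] (R ⧸ maximalIdeal R)) fs)
    {N : Type*} [AddCommGroup N] [Module R N] (hN : IsFiniteLength R N) :
    IsWeaklyRegular (S ⊗[R] N) fs := by
  induction hN with
  | of_subsingleton =>
    constructor
    intro i h x y _
    exact Subsingleton.elim _ _
  | @of_simple_quotient M _ _ N _ _ ih =>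
    refine wr_of_exact fs (AlgebraTensorModule.lTensor S S N.subtype)
      (AlgebraTensorModule.lTensor S S N.mkQ) ?_ ?_ ?_ ih ?_
    · exact Module.Flat.lTensor_preserves_injective_linearMap _ N.injective_subtype
    · exact lTensor_exact S (LinearMap.exact_subtype_mkQ N) N.mkQ_surjective
    · exact LinearMap.lTensor_surjective S N.mkQ_surjective
    · obtain ⟨I, hI, ⟨e⟩⟩ := isSimpleModule_iff_quot_maximal (R := R) (M := M ⧸ N) |>.mp inferInstance
      obtain rfl := IsLocalRing.eq_maximalIdeal hI
      exact ((AlgebraTensorModule.congr (LinearEquiv.refl S S) e).isWeaklyRegular_congr fs).mpr hf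

theorem cm_of_flat {R S : Type*} [CommRing R] [CommRing S] [IsLocalRing R] [IsLocalRing S]
    [IsNoetherianRing R] [IsNoetherianRing S] [Algebra R S] [IsLocalHom (algebraMap R S)]
    [Module.Flat R S] [IsLocalRing (S ⧸ (maximalIdeal R).map (algebraMap R S))]
    (hR : IsCohenMacaulayLocalRing R)
    (hF : IsCohenMacaulayLocalRing (S ⧸ (maximalIdeal R).map (algebraMap R S))) :
    IsCohenMacaulayLocalRing S := by
  obtain ⟨xs, hx1, hx2, hx3⟩ := cm_elim hR
  obtain ⟨fs', hf1, hf2, hf3⟩ := cm_elim hF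
  obtain ⟨fs, rfl⟩ : ∃ fs : List S, fs.map (algebraMap S _) = fs' :=
    (List.map_surjective_iff.mpr Ideal.Quotient.mk_surjective) fs'
  have hxS : ∀ x ∈ maximalIdeal R, algebraMap R S x ∈ maximalIdeal S := fun x hx => by
    have := (IsLocalRing.local_hom_TFAE (algebraMap R S)).out 0 2
    exact (this.mp inferInstance) (Ideal.mem_map_of_mem _ hx)
  have hfS : ∀ y ∈ fs, y ∈ maximalIdeal S := by
    intro y hy
    have := hf1 _ (List.mem_map_of_mem hy)
    rw [mem_maximalIdeal, mem_nonunits_iff] at this ⊢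
    exact fun h => this (h.map _)
  refine cm_of_crit (xs.map (algebraMap R S) ++ fs) ?_ ?_ ?_
  · intro x hx
    rcases List.mem_append.mp hx with hx | hx
    · obtain ⟨y, hy, rfl⟩ := List.mem_map.mp hx
      exact hxS _ (hx1 y hy)
    · exact hfS x hx
  · rw [isWeaklyRegular_append_iff]
    refine ⟨hx2.of_flat, ?_⟩
    have hfin : IsFiniteLength R (R ⧸ Ideal.ofList xs) := by
      have : Ring.KrullDimLE 0 (R ⧸ Ideal.ofList xs) := by
        rw [Ring.krullDimLE_iff, hx3]; simp
      have : IsArtinianRing (R ⧸ Ideal.ofList xs) := isArtinianRing_iff_isNoetherianRing_krullDimLE_zero.mpr ⟨inferInstance, this⟩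
      rw [isFiniteLength_iff_isNoetherian_isArtinian]
      refine ⟨inferInstance, ?_⟩
      exact isArtinian_of_surjective_algebraMap (R := R ⧸ Ideal.ofList xs) Ideal.Quotient.mk_surjective
    have hmS : IsWeaklyRegular (S ⊗[R] (R ⧸ maximalIdeal R)) fs := by
      rw [isWeaklyRegular_map_algebraMap_iff] at hf2
      refine (LinearEquiv.isWeaklyRegular_congr ?_ fs).mp hf2
      exact (Algebra.TensorProduct.quotIdealMapEquivTensorQuot S _).toLinearEquiv
    have := wr_tensor_of_finiteLength fs hmS hfin
    have e1 := (Algebra.TensorProduct.quotIdealMapEquivTensorQuot (A := R) S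
      (Ideal.ofList xs)).toLinearEquiv
    have e2 : (S ⧸ (Ideal.ofList xs).map (algebraMap R S)) ≃ₗ[S]
        (S ⧸ (Ideal.ofList (xs.map (algebraMap R S)) • ⊤ : Submodule S S)) :=
      Submodule.quotEquivOfEq _ _ (by simp [Ideal.map_ofList])
    exact (LinearEquiv.isWeaklyRegular_congr (e1.symm.trans e2) fs).mp this
  · intro P hP hxP
    have h1 : P.comap (algebraMap R S) = maximalIdeal R := by
      apply prime_eq_of_dim_zero _ hx3
      exact Ideal.span_le.mpr fun x hx => hxP _ (by simp; left; exact ⟨x, hx, rfl⟩)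
    have h2 : (maximalIdeal R).map (algebraMap R S) ≤ P := by
      rw [Ideal.map_le_iff_le_comap, h1]
    have hp : (P.map (Ideal.Quotient.mk ((maximalIdeal R).map (algebraMap R S)))).IsPrime :=
      Ideal.map_isPrime_of_surjective Ideal.Quotient.mk_surjective (by simpa using h2)
    have := prime_eq_of_dim_zero _ hf3 _ (hP := (Ideal.span_le.mpr fun x hx => by
      obtain ⟨y, hy, rfl⟩ := List.mem_map.mp hx
      exact Ideal.mem_map_of_mem _ (hxP y (by simp [hy]))))
    have h3 : P.IsMaximal := by
      have h4 := Ideal.comap_isMaximal_of_surjective (Ideal.Quotient.mk ((maximalIdeal R).map (algebraMap R S))) Ideal.Quotient.mk_surjective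
        (K := P.map (Ideal.Quotient.mk _)) (H := by erw [this]; infer_instance)
      rwa [Ideal.comap_map_of_surjective _ Ideal.Quotient.mk_surjective, ← RingHom.ker_eq_comap_bot,
        Ideal.mk_ker, sup_eq_left.mpr h2] at h4
    exact IsLocalRing.eq_maximalIdeal h3

theorem cm_at_of_flat {R S F : Type*} [CommRing R] [CommRing S] [CommRing F]
    [IsNoetherianRing R] [IsNoetherianRing S] (f : R →+* S) (hflat : f.Flat)
    (φ : S →+* F) (hφ : Function.Surjective φ) (Q' : Ideal F) [Q'.IsPrime]
    (Q : Ideal S) [Q.IsPrime] (hQ : Q = Q'.comap φ) (p : Ideal R) [p.IsPrime]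
    (hp : p = Q.comap f) (hker : RingHom.ker φ = p.map f)
    (hR : IsCohenMacaulayLocalRing (Localization.AtPrime p))
    (hF : IsCohenMacaulayLocalRing (Localization.AtPrime Q')) :
    IsCohenMacaulayLocalRing (Localization.AtPrime Q) := by
  let g := Localization.localRingHom p Q f hp
  let : Algebra (Localization.AtPrime p) (Localization.AtPrime Q) := g.toAlgebra
  have hg : g = algebraMap (Localization.AtPrime p) (Localization.AtPrime Q) := rfl
  have : IsLocalHom (algebraMap (Localization.AtPrime p) (Localization.AtPrime Q)) :=
    Localization.isLocalHom_localRingHom p Q f hp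
  have : Module.Flat (Localization.AtPrime p) (Localization.AtPrime Q) := by
    exact hflat.localRingHom Q p hp
  let ψ := Localization.localRingHom Q Q' φ hQ
  have hψ : Function.Surjective ψ :=
    (RingHom.surjectiveOnStalks_of_surjective hφ).localRingHom_surjective Q Q' hQ
  have hmap : Q.primeCompl.map φ = Q'.primeCompl := by
    ext y
    constructor
    · rintro ⟨x, hx, rfl⟩
      intro h; exact hx (by rw [hQ]; exact h)
    · intro hy
      obtain ⟨x, rfl⟩ := hφ y
      exact ⟨x, fun h => hy (by rw [hQ] at h; exact h), rfl⟩
  have hkerψ : RingHom.ker ψ = (maximalIdeal (Localization.AtPrime p)).map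
      (algebraMap (Localization.AtPrime p) (Localization.AtPrime Q)) := by
    have h1 := IsLocalization.ker_map (S := Localization.AtPrime Q) (Localization.AtPrime Q') (g := φ) (M := Q.primeCompl) hmap
    refine h1.trans ?_
    rw [hker, ← Localization.AtPrime.map_eq_maximalIdeal, Ideal.map_map, Ideal.map_map]
    congr 1
    ext x
    simp [← hg, g, Localization.localRingHom_to_map]
  let e := (Ideal.quotEquivOfEq hkerψ.symm).trans (RingHom.quotientKerEquivOfSurjective hψ)
  have : IsLocalRing (Localization.AtPrime Q ⧸ (maximalIdeal (Localization.AtPrime p)).map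
      (algebraMap (Localization.AtPrime p) (Localization.AtPrime Q))) :=
    e.symm.isLocalRing
  exact cm_of_flat hR (cm_of_ringEquiv e.symm hF)

structure Good {C E : Type*} [CommRing C] [CommRing E] (f : C →+* E) (r : Ideal C) : Prop where
  noeth : IsNoetherianRing E
  jac : r.map f ≤ (⊥ : Ideal E).jacobson
  surj : ∀ (t : ℕ) (e : E), ∃ c, e - f c ∈ (r ^ t).map f
  ker : ∀ (t : ℕ) (c : C), f c ∈ (r ^ t).map f → c ∈ r ^ t

theorem Good.exists_of_mem_map {C E : Type*} [CommRing C] [CommRing E] {f : C →+* E} {r : Ideal C}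
    (h : Good f r) (J : Ideal C) (t : ℕ) (e : E) (he : e ∈ J.map f) :
    ∃ c ∈ J, e - f c ∈ (r ^ t).map f := by
  induction he using Submodule.span_induction with
  | mem x hx =>
    obtain ⟨c, hc, rfl⟩ := hx
    exact ⟨c, hc, by simp⟩
  | zero => exact ⟨0, J.zero_mem, by simp⟩
  | add x y _ _ h1 h2 =>
    obtain ⟨c, hc, h1⟩ := h1
    obtain ⟨d, hd, h2⟩ := h2
    refine ⟨c + d, J.add_mem hc hd, ?_⟩
    convert Ideal.add_mem _ h1 h2 using 1
    rw [map_add]; ring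
  | smul a x _ h1 =>
    obtain ⟨c, hc, h1⟩ := h1
    obtain ⟨d, hd⟩ := h.surj t a
    refine ⟨d * c, J.mul_mem_left _ hc, ?_⟩
    convert Ideal.add_mem _ (Ideal.mul_mem_left _ a h1) (Ideal.mul_mem_right (f c) _ hd) using 1
    rw [map_mul, smul_eq_mul]; ring

theorem Good.mem_of_map {C E : Type*} [CommRing C] [CommRing E] {f : C →+* E} {r : Ideal C}
    (h : Good f r) (J : Ideal C) (t : ℕ) (hJ : r ^ t ≤ J) (c : C) (hc : f c ∈ J.map f) : c ∈ J := by
  obtain ⟨d, hd, h1⟩ := h.exists_of_mem_map J t _ hc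
  rw [← map_sub] at h1
  have := J.add_mem (hJ (h.ker t _ h1)) hd
  simpa using this

theorem Good.quot {C E C' E' : Type*} [CommRing C] [CommRing E] [CommRing C'] [CommRing E']
    {f : C →+* E} {r : Ideal C} (h : Good f r) (f' : C' →+* E') (g : C →+* C') (p : E →+* E')
    (hg : Function.Surjective g) (hp : Function.Surjective p) (hc : f'.comp g = p.comp f)
    (hk : RingHom.ker p = (RingHom.ker g).map f) : Good f' (r.map g) := by
  have hn := h.noeth
  have hmap : ∀ t, ((r.map g) ^ t).map f' = ((r ^ t).map f).map p := by
    intro t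
    rw [← Ideal.map_pow, Ideal.map_map, Ideal.map_map, hc]
  refine ⟨isNoetherianRing_of_surjective _ _ p hp, ?_, ?_, ?_⟩
  · have := hmap 1
    rw [pow_one, pow_one] at this
    rw [this, Ideal.map_le_iff_le_comap]
    intro x hx
    rw [Ideal.mem_comap, Ideal.mem_jacobson_bot]
    intro y
    obtain ⟨y, rfl⟩ := hp y
    have := Ideal.mem_jacobson_bot.mp (h.jac hx) y
    simpa using this.map p
  · intro t e
    obtain ⟨e, rfl⟩ := hp e
    obtain ⟨c, hc1⟩ := h.surj t e
    refine ⟨g c, ?_⟩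
    rw [hmap, ← RingHom.comp_apply, hc, RingHom.comp_apply, ← map_sub]
    exact Ideal.mem_map_of_mem _ hc1
  · intro t c hc1
    obtain ⟨c, rfl⟩ := hg c
    rw [hmap, ← RingHom.comp_apply, hc, RingHom.comp_apply,
      Ideal.mem_map_iff_of_surjective _ hp] at hc1
    obtain ⟨x, hx, hx2⟩ := hc1
    have h1 : f c - x ∈ RingHom.ker p := by simp [RingHom.mem_ker, hx2]
    rw [hk] at h1
    have h2 : f c ∈ (RingHom.ker g ⊔ r ^ t).map f := by
      rw [Ideal.map_sup]
      have := Submodule.add_mem_sup h1 hx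
      simpa using this
    have := h.mem_of_map _ t le_sup_right c h2
    rw [← Ideal.map_pow]
    obtain ⟨a, ha, b, hb, rfl⟩ := Submodule.mem_sup.mp this
    rw [map_add, RingHom.mem_ker.mp ha, zero_add]
    exact Ideal.mem_map_of_mem _ hb

theorem Good.completion {C : Type*} [CommRing C] (r : Ideal C) (hr : r.FG)
    (hE : IsNoetherianRing (AdicCompletion r C)) :
    Good (algebraMap C (AdicCompletion r C)) r := by
  have key : ∀ t (x : AdicCompletion r C), x ∈ (r ^ t).map (algebraMap C (AdicCompletion r C)) ↔
      AdicCompletion.eval r C t x = 0 := by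
    intro t x
    rw [← Submodule.restrictScalars_mem C, ← Ideal.smul_top_eq_map,
      AdicCompletion.pow_smul_top_eq_ker_eval hr]
    rfl
  refine ⟨hE, ?_, ?_, ?_⟩
  · have := AdicCompletion.isAdicComplete_self r hr
    exact IsAdicComplete.le_jacobson_bot _
  · intro t e
    obtain ⟨c, hc⟩ := Submodule.Quotient.mk_surjective _ (AdicCompletion.eval r C t e)
    refine ⟨c, ?_⟩
    rw [key, map_sub, ← hc, AdicCompletion.algebraMap_apply]
    simp [AdicCompletion.eval]
  · intro t c hc
    rw [key, AdicCompletion.algebraMap_apply] at hc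
    simpa [AdicCompletion.eval, Ideal.Quotient.eq_zero_iff_mem] using hc

theorem tensor_ker_lemma {k V V1 W1 J : Type*} [Field k] [AddCommGroup V]
    [AddCommGroup V1] [AddCommGroup W1] [AddCommGroup J] [Module k V] [Module k V1]
    [Module k W1] [Module k J] (g : V →ₗ[k] V1) (hg : Function.Surjective g) (h : J →ₗ[k] W1)
    (w : V ⊗[k] J) (hw : TensorProduct.map g h w = 0) :
    w ∈ LinearMap.range (LinearMap.lTensor V (LinearMap.ker h).subtype) ⊔
      LinearMap.range (LinearMap.rTensor J (LinearMap.ker g).subtype) := by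
  have hsurj : Function.Surjective h.rangeRestrict := h.surjective_rangeRestrict
  have ex1 : Function.Exact (LinearMap.ker g).subtype g := LinearMap.exact_subtype_ker_map g
  have ex2 : Function.Exact (LinearMap.ker h).subtype h.rangeRestrict := by
    rw [LinearMap.exact_iff, LinearMap.ker_rangeRestrict, Submodule.range_subtype]
  rw [← TensorProduct.map_ker ex1 hg ex2 hsurj, LinearMap.mem_ker]
  have hinj : Function.Injective (LinearMap.lTensor V1 (LinearMap.range h).subtype) :=
    Module.Flat.lTensor_preserves_injective_linearMap _ (Submodule.injective_subtype _)
  apply hinj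
  rw [map_zero, ← hw, ← LinearMap.comp_apply, LinearMap.lTensor_comp_map,
    LinearMap.subtype_comp_codRestrict]

theorem Good.flat {k A B E : Type*} [Field k] [CommRing A] [CommRing B] [CommRing E]
    [Algebra k A] [Algebra k B] [Algebra k E] [Algebra B E] [IsScalarTower k B E]
    [IsNoetherianRing B] (m : Ideal A) (n : Ideal B) (f : A ⊗[k] B →ₐ[k] E)
    (hf : ∀ b, f (1 ⊗ₜ b) = algebraMap B E b)
    (h : Good f.toRingHom
      (m.map (Algebra.TensorProduct.includeLeft : A →ₐ[k] A ⊗[k] B) ⊔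
        n.map (Algebra.TensorProduct.includeRight : B →ₐ[k] A ⊗[k] B))) :
    Module.Flat B E := by
  set r := (m.map (Algebra.TensorProduct.includeLeft : A →ₐ[k] A ⊗[k] B) ⊔
        n.map (Algebra.TensorProduct.includeRight : B →ₐ[k] A ⊗[k] B)) with hr
  have hn := h.noeth
  rw [Module.Flat.iff_lTensor_injective]
  intro J hJ
  have : Module.Finite B J := Module.Finite.iff_fg.mpr hJ
  set ρ := r.map f.toRingHom with hρ
  let Φ : E ⊗[B] J →ₗ[E] E := (TensorProduct.AlgebraTensorModule.rid B E E).toLinearMap ∘ₗ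
    (TensorProduct.AlgebraTensorModule.lTensor E E J.subtype)
  let θ : A ⊗[k] J →ₗ[k] E ⊗[B] J := TensorProduct.lift <|
    LinearMap.mk₂ k (fun a j => f (a ⊗ₜ 1) ⊗ₜ[B] j)
      (by intros; rw [TensorProduct.add_tmul, map_add, TensorProduct.add_tmul])
      (by intros; rw [← TensorProduct.smul_tmul', map_smul, TensorProduct.smul_tmul'])
      (by intros; rw [TensorProduct.tmul_add])
      (by
        intro c a j
        rw [TensorProduct.tmul_smul])
  have hθ : ∀ a j, θ (a ⊗ₜ j) = f (a ⊗ₜ 1) ⊗ₜ[B] j := fun a j => by simp [θ]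
  have hΦθ : ∀ w, Φ (θ w) = f (LinearMap.lTensor A (J.subtype.restrictScalars k) w) := by
    intro w
    induction w with
    | zero => simp
    | add x y hx hy => simp only [map_add, hx, hy]
    | tmul a j =>
      rw [hθ]
      simp only [Φ, LinearMap.comp_apply]
      simp
      rw [Algebra.smul_def, ← hf, ← map_mul]
      simp
  have hΦρ : ∀ (I : Ideal E) (x : E ⊗[B] J), x ∈ I • (⊤ : Submodule E (E ⊗[B] J)) → Φ x ∈ I := by
    intro I x hx
    have : I • (⊤ : Submodule E (E ⊗[B] J)) ≤ Submodule.comap Φ I := by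
      rw [Submodule.smul_le]
      intro i hi x _
      simp only [Submodule.mem_comap, map_smul, smul_eq_mul]
      exact I.mul_mem_right _ hi
    exact this hx
  have happrox : ∀ t (z : E ⊗[B] J), ∃ w, z - θ w ∈ (ρ ^ t) • (⊤ : Submodule E (E ⊗[B] J)) := by
    intro t z
    induction z with
    | zero => exact ⟨0, by simp⟩
    | add x y hx hy =>
      obtain ⟨u, hu⟩ := hx
      obtain ⟨v, hv⟩ := hy
      refine ⟨u + v, ?_⟩
      convert Submodule.add_mem _ hu hv using 1
      rw [map_add]; abel
    | tmul e j =>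
      obtain ⟨c, hc⟩ := h.surj t e
      have hw : ∃ w, f c ⊗ₜ[B] j = θ w := by
        clear hc
        induction c with
        | zero => exact ⟨0, by simp⟩
        | add x y hx hy =>
          obtain ⟨u, hu⟩ := hx
          obtain ⟨v, hv⟩ := hy
          exact ⟨u + v, by rw [map_add, map_add, TensorProduct.add_tmul, hu, hv]⟩
        | tmul a b =>
          refine ⟨a ⊗ₜ (b • j), ?_⟩
          rw [hθ, TensorProduct.tmul_smul, TensorProduct.smul_tmul', Algebra.smul_def, ← hf,
            ← map_mul]
          simp
      obtain ⟨w, hw⟩ := hw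
      refine ⟨w, ?_⟩
      rw [← hw, ← TensorProduct.sub_tmul]
      have : (e - f c) ⊗ₜ[B] j = (e - f c) • ((1 : E) ⊗ₜ[B] j) := by
        rw [TensorProduct.smul_tmul', smul_eq_mul, mul_one]
      rw [this]
      refine Submodule.smul_mem_smul ?_ trivial
      rw [hρ, ← Ideal.map_pow]
      exact hc
  obtain ⟨c, hc⟩ := Ideal.exists_pow_inf_eq_pow_smul n J
  have main : ∀ s (w : A ⊗[k] J), LinearMap.lTensor A (J.subtype.restrictScalars k) w ∈
      r ^ (s + (s + c)) → θ w ∈ (ρ ^ s) • (⊤ : Submodule E (E ⊗[B] J)) := by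
    intro s w hw
    have h1 := Ideal.sup_pow_add_le_pow_sup_pow hw
    have h2 : TensorProduct.map (Ideal.Quotient.mkₐ k (m ^ s)).toLinearMap
        ((Ideal.Quotient.mkₐ k (n ^ (s + c))).toLinearMap ∘ₗ J.subtype.restrictScalars k) w = 0 := by
      have h3 : (m.map (Algebra.TensorProduct.includeLeft : A →ₐ[k] A ⊗[k] B)) ^ s ⊔
        (n.map (Algebra.TensorProduct.includeRight : B →ₐ[k] A ⊗[k] B)) ^ (s + c) ≤
        RingHom.ker (Algebra.TensorProduct.map (Ideal.Quotient.mkₐ k (m ^ s))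
          (Ideal.Quotient.mkₐ k (n ^ (s + c)))) := by
        rw [← Ideal.map_pow, ← Ideal.map_pow]
        refine sup_le ?_ ?_
        · rw [Ideal.map_le_iff_le_comap]
          intro x hx
          simp [RingHom.mem_ker, Ideal.Quotient.eq_zero_iff_mem.mpr hx]
        · rw [Ideal.map_le_iff_le_comap]
          intro x hx
          simp [RingHom.mem_ker, Ideal.Quotient.eq_zero_iff_mem.mpr hx]
      have h4 := RingHom.mem_ker.mp (h3 h1)
      rw [← LinearMap.map_comp_lTensor, LinearMap.comp_apply]
      exact h4
    have h5 := tensor_ker_lemma (Ideal.Quotient.mkₐ k (m ^ s)).toLinearMap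
      (Ideal.Quotient.mkₐ_surjective k (m ^ s)) ((Ideal.Quotient.mkₐ k (n ^ (s + c))).toLinearMap ∘ₗ
        J.subtype.restrictScalars k) w h2
    have h6 : Submodule.map θ (LinearMap.range (LinearMap.lTensor A (LinearMap.ker
          ((Ideal.Quotient.mkₐ k (n ^ (s + c))).toLinearMap ∘ₗ J.subtype.restrictScalars k)).subtype) ⊔
      LinearMap.range (LinearMap.rTensor J (LinearMap.ker (Ideal.Quotient.mkₐ k (m ^ s)).toLinearMap).subtype)) ≤
        ((ρ ^ s) • (⊤ : Submodule E (E ⊗[B] J))).restrictScalars k := by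
      rw [Submodule.map_sup]
      refine sup_le ?_ ?_
      · rw [← LinearMap.range_comp]
        rintro _ ⟨x, rfl⟩
        induction x with
        | zero => simp
        | add x y hx hy =>
          rw [map_add]; exact Submodule.add_mem _ hx hy
        | tmul a j =>
          obtain ⟨j, hj⟩ := j
          have hj1 : (j : B) ∈ n ^ (s + c) := by
            simpa [Ideal.Quotient.eq_zero_iff_mem] using hj
          have hj2 : (j : B) ∈ n ^ s • J := by
            have : (j : B) ∈ n ^ (s + c) • ⊤ ⊓ J := ⟨by simpa using hj1, j.2⟩
            rw [hc (s + c) (by omega)] at this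
            rw [Nat.add_sub_cancel] at this
            exact Submodule.smul_mono le_rfl inf_le_right this
          have hj3 : j ∈ n ^ s • (⊤ : Submodule B J) := by
            have : n ^ s • J = Submodule.map J.subtype (n ^ s • ⊤) := by
              rw [Submodule.map_smul'', Submodule.map_top, Submodule.range_subtype]
            rw [this] at hj2
            obtain ⟨y, hy, hy2⟩ := hj2
            rwa [Subtype.ext hy2] at hy
          simp only [LinearMap.comp_apply, LinearMap.lTensor_tmul, Submodule.subtype_apply, hθ,
            Submodule.restrictScalars_mem]
          generalize f (a ⊗ₜ 1) = e
          clear hj hj1 hj2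
          induction hj3 using Submodule.smul_induction_on' with
          | smul b hb y hy =>
            rw [TensorProduct.tmul_smul, ← algebraMap_smul E b]
            refine Submodule.smul_mem_smul ?_ trivial
            rw [← hf, hρ, ← Ideal.map_pow]
            refine Ideal.mem_map_of_mem f.toRingHom ?_
            refine Ideal.pow_right_mono (le_sup_right) s ?_
            rw [← Ideal.map_pow]
            exact Ideal.mem_map_of_mem (Algebra.TensorProduct.includeRight : B →ₐ[k] A ⊗[k] B) hb
          | add x hx y hy h1 h2 =>
            rw [TensorProduct.tmul_add]
            exact Submodule.add_mem _ h1 h2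
      · rw [← LinearMap.range_comp]
        rintro _ ⟨x, rfl⟩
        induction x with
        | zero => simp
        | add x y hx hy =>
          rw [map_add]; exact Submodule.add_mem _ hx hy
        | tmul a j =>
          obtain ⟨a, ha⟩ := a
          have ha1 : a ∈ m ^ s := by
            simpa [Ideal.Quotient.eq_zero_iff_mem] using ha
          simp only [LinearMap.comp_apply, LinearMap.rTensor_tmul, Submodule.subtype_apply, hθ,
            Submodule.restrictScalars_mem]
          have : f (a ⊗ₜ[k] 1) ⊗ₜ[B] j = f (a ⊗ₜ[k] 1) • ((1 : E) ⊗ₜ[B] j) := by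
            rw [TensorProduct.smul_tmul', smul_eq_mul, mul_one]
          rw [this]
          refine Submodule.smul_mem_smul ?_ trivial
          rw [hρ, ← Ideal.map_pow]
          refine Ideal.mem_map_of_mem f.toRingHom ?_
          refine Ideal.pow_right_mono (le_sup_left) s ?_
          rw [← Ideal.map_pow]
          exact Ideal.mem_map_of_mem (Algebra.TensorProduct.includeLeft : A →ₐ[k] A ⊗[k] B) ha1
    exact h6 (Submodule.mem_map_of_mem h5)
  rw [← LinearMap.ker_eq_bot, LinearMap.ker_eq_bot']
  intro z hz
  have hΦz : Φ z = 0 := by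
    have : Φ z = TensorProduct.rid B E (LinearMap.lTensor E J.subtype z) := rfl
    rw [this, hz, map_zero]
  have hall : z ∈ (⨅ i : ℕ, ρ ^ i • (⊤ : Submodule E (E ⊗[B] J))) := by
    rw [Submodule.mem_iInf]
    intro s
    obtain ⟨w, hw⟩ := happrox (s + (s + c)) z
    have h1 := hΦρ _ _ hw
    rw [map_sub, hΦz, zero_sub, neg_mem_iff, hΦθ, hρ, ← Ideal.map_pow] at h1
    have h2 := main s w (h.ker _ _ h1)
    have h3 : z - θ w ∈ (ρ ^ s) • (⊤ : Submodule E (E ⊗[B] J)) :=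
      Submodule.smul_mono_left (Ideal.pow_le_pow_right (by omega)) hw
    simpa using Submodule.add_mem _ h3 h2
  rw [Ideal.iInf_pow_smul_eq_bot_of_le_jacobson ρ h.jac] at hall
  simpa using hall

theorem cm_loc_of_list {R : Type*} [CommRing R] [IsNoetherianRing R] (Q : Ideal R) [Q.IsPrime]
    (rs : List R) (h1 : ∀ x ∈ rs, x ∈ Q)
    (h2 : IsWeaklyRegular (Localization.AtPrime Q) (rs.map (algebraMap R (Localization.AtPrime Q))))
    (h3 : ∀ P : Ideal R, P.IsPrime → P ≤ Q → (∀ x ∈ rs, x ∈ P) → Q ≤ P) :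
    IsCohenMacaulayLocalRing (Localization.AtPrime Q) := by
  have : IsNoetherianRing (Localization.AtPrime Q) :=
    IsLocalization.isNoetherianRing Q.primeCompl _ inferInstance
  refine cm_of_crit _ ?_ h2 ?_
  · intro x hx
    obtain ⟨y, hy, rfl⟩ := List.mem_map.mp hx
    exact (IsLocalization.AtPrime.to_map_mem_maximal_iff _ Q y).mpr (h1 y hy)
  · intro P hP hx
    have hle : P.comap (algebraMap R (Localization.AtPrime Q)) ≤ Q := by
      intro x hx
      exact (IsLocalization.AtPrime.to_map_mem_maximal_iff _ Q x).mp
        (le_maximalIdeal hP.ne_top hx)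
    have := h3 (P.comap (algebraMap R (Localization.AtPrime Q))) inferInstance hle
      (fun x hx1 => hx _ (List.mem_map_of_mem hx1))
    refine le_antisymm (le_maximalIdeal hP.ne_top) ?_
    rw [← Localization.AtPrime.map_eq_maximalIdeal]
    exact Ideal.map_le_iff_le_comap.mpr this

theorem cm_loc_of_min {R : Type*} [CommRing R] [IsNoetherianRing R] (Q : Ideal R) [Q.IsPrime]
    (h3 : ∀ P : Ideal R, P.IsPrime → P ≤ Q → Q ≤ P) :
    IsCohenMacaulayLocalRing (Localization.AtPrime Q) :=
  cm_loc_of_list Q [] (by simp) (by simp) (fun P hP hle _ => h3 P hP hle)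

open Polynomial in
theorem cm_poly_fiber {D : Type*} [CommRing D] [IsDomain D] [IsNoetherianRing D] (Q : Ideal D[X])
    [Q.IsPrime] (hQ : ∀ d : D, C d ∈ Q → d = 0) :
    IsCohenMacaulayLocalRing (Localization.AtPrime Q) := by
  classical
  by_cases hb : Q = ⊥
  · exact cm_loc_of_min Q (fun P _ _ => by rw [hb]; exact bot_le)
  have hex : ∃ n, ∃ f ∈ Q, f ≠ 0 ∧ f.natDegree = n := by
    obtain ⟨f, hf, hf0⟩ := Submodule.exists_mem_ne_zero_of_ne_bot hb
    exact ⟨_, f, hf, hf0, rfl⟩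
  obtain ⟨f, hf, hf0, hn⟩ := Nat.find_spec hex
  have hmin : ∀ g ∈ Q, g.natDegree < f.natDegree → g = 0 := by
    intro g hg hlt
    by_contra h0
    rw [hn] at hlt
    exact Nat.find_min hex hlt ⟨g, hg, h0, rfl⟩
  refine cm_loc_of_list Q [f] (by simpa using hf) ?_ ?_
  · have : IsDomain (Localization.AtPrime Q) :=
      IsLocalization.isDomain_localization (Ideal.primeCompl_le_nonZeroDivisors Q)
    simp only [List.map_cons, List.map_nil, isWeaklyRegular_cons_iff, IsWeaklyRegular.nil, and_true]
    refine IsSMulRegular.of_ne_zero ?_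
    intro h
    exact hf0 ((IsLocalization.to_map_eq_zero_iff (Localization.AtPrime Q) (Ideal.primeCompl_le_nonZeroDivisors Q)).mp h)
  · intro P hP hPQ hfP
    have hfP : f ∈ P := hfP f (by simp)
    have : ∀ n, ∀ g ∈ Q, g.natDegree = n → g ∈ P := by
      intro n
      induction n using Nat.strong_induction_on with
      | _ n ih =>
      intro g hg hgn
      by_cases hlt : g.natDegree < f.natDegree
      · rw [hmin g hg hlt]; exact P.zero_mem
      push Not at hlt
      have hfd : f.natDegree ≠ 0 := by
        intro h0
        rw [natDegree_eq_zero] at h0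
        obtain ⟨d, rfl⟩ := h0
        exact hf0 (by rw [hQ d hf, C_0])
      have hlt2 : (f.cancelLeads g).natDegree < g.natDegree :=
        natDegree_cancelLeads_lt_of_natDegree_le_natDegree hlt (by omega)
      have hmem : f.cancelLeads g ∈ Q :=
        Q.sub_mem (Q.mul_mem_left _ hg) (Q.mul_mem_left _ hf)
      have h1 := ih _ (hgn ▸ hlt2) _ hmem rfl
      rw [Polynomial.cancelLeads, Nat.sub_eq_zero_of_le hlt, pow_zero, mul_one] at h1
      have h2 := P.add_mem h1 (P.mul_mem_left (C g.leadingCoeff * X ^ (g.natDegree - f.natDegree)) hfP)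
      rw [sub_add_cancel] at h2
      rcases hP.mem_or_mem h2 with h3 | h3
      · have := hQ _ (hPQ h3)
        exact absurd (leadingCoeff_eq_zero.mp this) hf0
      · exact h3
    intro g hg
    exact this _ g hg rfl

/-- all localizations at primes are CM -/
def AllCM (R : Type*) [CommRing R] : Prop :=
  ∀ (p : Ideal R) [p.IsPrime], IsCohenMacaulayLocalRing (Localization.AtPrime p)

theorem AllCM.of_ringEquiv {R R' : Type*} [CommRing R] [CommRing R'] (e : R ≃+* R') (h : AllCM R) :
    AllCM R' := by
  intro p hp
  refine cm_of_ringEquiv ?_ (h (p.comap e))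
  exact IsLocalization.ringEquivOfRingEquiv
    (M := (p.comap e).primeCompl) (T := p.primeCompl) _ _ e (by
      ext x
      constructor
      · rintro ⟨y, hy, rfl⟩; exact hy
      · intro hx
        exact ⟨e.symm x, by simpa [Ideal.primeCompl] using hx, by simp⟩)

open Polynomial in
theorem AllCM.polynomial {R : Type*} [CommRing R] [IsNoetherianRing R] (h : AllCM R) :
    AllCM R[X] := by
  intro Q hQ
  let p := Q.comap (C : R →+* R[X])
  have hker : RingHom.ker (mapRingHom (Ideal.Quotient.mk p)) = p.map (C : R →+* R[X]) := by
    rw [ker_mapRingHom, Ideal.mk_ker]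
  have hsurj : Function.Surjective (mapRingHom (Ideal.Quotient.mk p)) :=
    map_surjective _ Ideal.Quotient.mk_surjective
  have hle : RingHom.ker (mapRingHom (Ideal.Quotient.mk p)) ≤ Q := by
    rw [hker]; exact Ideal.map_comap_le
  let Q' := Q.map (mapRingHom (Ideal.Quotient.mk p))
  have : Q'.IsPrime := Ideal.map_isPrime_of_surjective hsurj hle
  have hQQ : Q = Q'.comap (mapRingHom (Ideal.Quotient.mk p)) := by
    rw [Ideal.comap_map_of_surjective _ hsurj, ← RingHom.ker_eq_comap_bot, sup_eq_left.mpr hle]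
  refine cm_at_of_flat (C : R →+* R[X]) ?_ (mapRingHom (Ideal.Quotient.mk p)) hsurj Q' Q hQQ p rfl
    hker (h p) (cm_poly_fiber Q' ?_)
  · have : Module.Flat R R[X] := inferInstance
    exact (RingHom.flat_algebraMap_iff (R := R) (S := R[X])).mpr this
  · intro d hd
    obtain ⟨d, rfl⟩ := Ideal.Quotient.mk_surjective d
    rw [Ideal.Quotient.eq_zero_iff_mem]
    have : mapRingHom (Ideal.Quotient.mk p) (C d) ∈ Q' := by simpa using hd
    change C d ∈ Q
    rw [hQQ]
    exact this

theorem AllCM.mvPolynomial {R : Type*} [CommRing R] [IsNoetherianRing R] (h : AllCM R)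
    {ι : Type*} [Finite ι] : AllCM (MvPolynomial ι R) := by
  induction ι using Finite.induction_empty_option with
  | of_equiv e H => exact H.of_ringEquiv (MvPolynomial.renameEquiv _ e).toRingEquiv
  | h_empty => exact h.of_ringEquiv (MvPolynomial.isEmptyRingEquiv R _).symm
  | h_option IH =>
    exact IH.polynomial.of_ringEquiv (MvPolynomial.optionEquivLeft _ _).toRingEquiv.symm

theorem AllCM.field (K : Type*) [Field K] : AllCM K := by
  intro p hp
  refine cm_loc_of_min p (fun P hP _ => ?_)
  rw [(Ideal.eq_bot_or_top p).resolve_right hp.ne_top]; exact bot_le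

noncomputable def tF (k L K : Type*) [Field k] [Field L] [Field K] [Algebra k L] [Algebra k K] {ι : Type*}
    (x : ι → K) : MvPolynomial ι L →ₐ[L] L ⊗[k] K :=
  MvPolynomial.aeval (fun i => (1 : L) ⊗ₜ[k] x i)

theorem flat_aeval {k K ι : Type*} [Field k] [Field K] [Algebra k K] {x : ι → K}
    (hx : AlgebraicIndependent k x) : (MvPolynomial.aeval (R := k) x).toRingHom.Flat := by
  have hinj : Function.Injective (MvPolynomial.aeval (R := k) x).toRingHom := hx
  have : (MvPolynomial.aeval (R := k) x).toRingHom =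
    (IsFractionRing.lift hinj).comp (algebraMap _ (FractionRing (MvPolynomial ι k))) := by
    refine RingHom.ext fun y => ?_
    rw [RingHom.comp_apply, IsFractionRing.lift_algebraMap]
  rw [this]
  refine RingHom.Flat.comp ?_ (RingHom.Flat.of_isField (Field.toIsField _) _)
  rw [RingHom.flat_algebraMap_iff]
  exact IsLocalization.flat _ (nonZeroDivisors _)

theorem tF_flat {k L K ι : Type*} [Field k] [Field L] [Field K] [Algebra k L] [Algebra k K]
    {x : ι → K} (hx : AlgebraicIndependent k x) : (tF k L K x).toRingHom.Flat := by
  have h1 : tF k L K x = (Algebra.TensorProduct.map (AlgHom.id L L) (MvPolynomial.aeval (R := k) x)).comp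
      (MvPolynomial.algebraTensorAlgEquiv k L).symm.toAlgHom := by
    refine MvPolynomial.algHom_ext fun i => ?_
    simp [tF]
  have h2 : (tF k L K x).toRingHom = (Algebra.TensorProduct.map (AlgHom.id L L) (MvPolynomial.aeval (R := k) x)).toRingHom.comp
      ((MvPolynomial.algebraTensorAlgEquiv k L).symm : MvPolynomial ι L ≃ₐ[L] _).toAlgHom.toRingHom := by
    rw [h1]; rfl
  rw [h2]
  refine RingHom.Flat.comp (RingHom.Flat.of_bijective (AlgEquiv.bijective _)) ?_
  exact RingHom.Flat.tensorProductMap (f := AlgHom.id L L) (RingHom.Flat.id _) (flat_aeval hx)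

theorem tF_smul {k L K ι : Type*} [Field k] [Field L] [Field K] [Algebra k L] [Algebra k K]
    {x : ι → K} (l : L) (p : MvPolynomial ι k) :
    tF k L K x (MvPolynomial.C l * MvPolynomial.map (algebraMap k L) p) =
      l ⊗ₜ MvPolynomial.aeval x p := by
  rw [map_mul, tF, MvPolynomial.aeval_C, MvPolynomial.aeval_map_algebraMap,
    MvPolynomial.aeval_one_tmul]
  simp

theorem comap_not_le_of_integral {R S : Type*} [CommRing R] [CommRing S] (f : R →+* S) (I J : Ideal S)
    [I.IsPrime] (hIJ : I ≤ J) (z : S) (hz : z ∈ J) (hzI : z ∉ I) (hzint : f.IsIntegralElem z) :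
    ∃ y, f y ∈ J ∧ f y ∉ I := by
  let := f.toAlgebra
  have hlt := Ideal.comap_lt_comap_of_integral_mem_sdiff (R := R) hIJ ⟨hz, hzI⟩ hzint
  exact Set.not_subset.mp hlt.not_ge

theorem tensor_integral {k L k' K : Type*} [Field k] [Field L] [Field K] [Field k'] [Algebra k L]
    [Algebra k K] [Algebra k k'] [Algebra k' K] [IsScalarTower k k' K] [Algebra.IsAlgebraic k' K]
    (g : L ⊗[k] k' →ₐ[L] L ⊗[k] K)
    (hg : ∀ l y, g (l ⊗ₜ y) = l ⊗ₜ algebraMap k' K y) :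
    ∀ z : L ⊗[k] K, g.toRingHom.IsIntegralElem z := by
  intro z
  induction z with
  | zero => exact RingHom.isIntegralElem_zero _
  | add a b ha hb => exact RingHom.IsIntegralElem.add _ ha hb
  | tmul l a =>
    have h1 : l ⊗ₜ[k] a = g.toRingHom (l ⊗ₜ 1) * ((1 : L) ⊗ₜ[k] a) := by
      simp [hg]
    rw [h1]
    refine RingHom.IsIntegralElem.mul _ (RingHom.isIntegralElem_map _) ?_
    obtain ⟨p, hp, hpa⟩ := (Algebra.IsAlgebraic.isAlgebraic (R := k') a).isIntegral
    refine ⟨p.map (Algebra.TensorProduct.includeRight : k' →ₐ[k] L ⊗[k] k').toRingHom, hp.map _, ?_⟩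
    rw [Polynomial.eval₂_map]
    have h2 : g.toRingHom.comp
        (Algebra.TensorProduct.includeRight : k' →ₐ[k] L ⊗[k] k').toRingHom =
        (Algebra.TensorProduct.includeRight : K →ₐ[k] L ⊗[k] K).toRingHom.comp (algebraMap k' K) := by
      refine RingHom.ext fun y => ?_
      change g (1 ⊗ₜ y) = (1 : L) ⊗ₜ algebraMap k' K y
      simp [hg]
    rw [h2]
    have h3 := Polynomial.hom_eval₂ p (algebraMap k' K)
      (Algebra.TensorProduct.includeRight : K →ₐ[k] L ⊗[k] K).toRingHom a
    rw [hpa, map_zero] at h3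
    exact h3.symm

theorem tensor_integral' {k L k' K : Type*} [Field k] [Field L] [Field K] [Field k'] [Algebra k L]
    [Algebra k K] [Algebra k k'] [Algebra k' K] [IsScalarTower k k' K] [Algebra.IsAlgebraic k' K]
    (g : L ⊗[k] k' →ₐ[L] L ⊗[k] K)
    (hg : ∀ l y, g (l ⊗ₜ y) = l ⊗ₜ algebraMap k' K y) (P Q : Ideal (L ⊗[k] K)) [P.IsPrime]
    (hPQ : P ≤ Q) (z : L ⊗[k] K) (hz : z ∈ Q) (hzP : z ∉ P) : ∃ y, g y ∈ Q ∧ g y ∉ P :=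
  comap_not_le_of_integral g.toRingHom P Q hPQ z hz hzP (tensor_integral g hg z)

theorem tensor_incomp {k L K ι : Type*} [Field k] [Field L] [Field K] [Algebra k L] [Algebra k K]
    {x : ι → K} (hx : IsTranscendenceBasis k x) (P Q : Ideal (L ⊗[k] K)) [P.IsPrime] [Q.IsPrime]
    (hPQ : P ≤ Q) (h : ∀ p, tF k L K x p ∈ Q → tF k L K x p ∈ P) : Q ≤ P := by
  have halg := hx.isAlgebraic_field
  set k' := IntermediateField.adjoin k (Set.range x) with hk'
  let g : L ⊗[k] k' →ₐ[L] L ⊗[k] K := Algebra.TensorProduct.map (AlgHom.id L L) k'.val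
  have hden : ∀ y : L ⊗[k] k', ∃ s : MvPolynomial ι k, MvPolynomial.aeval x s ≠ 0 ∧
      ∃ p, ((1 : L) ⊗ₜ[k] MvPolynomial.aeval x s) * g y = tF k L K x p := by
    intro y
    induction y with
    | zero => exact ⟨1, by simp, 0, by simp⟩
    | add a b ha hb =>
      obtain ⟨s, hs, p, hp⟩ := ha
      obtain ⟨t, ht, q, hq⟩ := hb
      refine ⟨s * t, by rw [map_mul]; exact mul_ne_zero hs ht,
        MvPolynomial.C 1 * MvPolynomial.map (algebraMap k L) t * p + MvPolynomial.C 1 * MvPolynomial.map (algebraMap k L) s * q, ?_⟩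
      rw [map_add (tF k L K x), map_mul (tF k L K x) _ p, map_mul (tF k L K x) _ q, tF_smul, tF_smul, ← hp, ← hq,
        map_add, map_mul]
      have : (1 : L) ⊗ₜ[k] (MvPolynomial.aeval x s * MvPolynomial.aeval x t) =
        ((1 : L) ⊗ₜ[k] MvPolynomial.aeval x s) * ((1 : L) ⊗ₜ[k] MvPolynomial.aeval x t) := by simp
      rw [this]
      ring
    | tmul l a =>
      obtain ⟨r, s, hrs⟩ := (IntermediateField.mem_adjoin_range_iff k x (a : K)).mp a.2
      by_cases hs : MvPolynomial.aeval x s = 0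
      · refine ⟨1, by simp, 0, ?_⟩
        rw [hs, div_zero] at hrs
        simp [g, hrs]
      · refine ⟨s, hs, MvPolynomial.C l * MvPolynomial.map (algebraMap k L) r, ?_⟩
        rw [tF_smul]
        simp only [g, Algebra.TensorProduct.map_tmul, Algebra.TensorProduct.tmul_mul_tmul, one_mul,
          AlgHom.coe_id, id_eq, IntermediateField.coe_val]
        rw [hrs, mul_div_cancel₀ _ hs]
  by_contra hcon
  obtain ⟨z, hzQ, hzP⟩ := Set.not_subset.mp hcon
  obtain ⟨y, hy, hyP⟩ := tensor_integral' g (fun l y => by simp [g]) P Q hPQ z hzQ hzP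
  refine hyP ?_
  obtain ⟨s, hs, p, hp⟩ := hden y
  have h1 : tF k L K x p ∈ Q := by rw [← hp]; exact Q.mul_mem_left _ hy
  have h2 := h _ h1
  rw [← hp] at h2
  have h3 : g y = ((1 : L) ⊗ₜ[k] (MvPolynomial.aeval x s)⁻¹) * (((1 : L) ⊗ₜ[k] MvPolynomial.aeval x s) * g y) := by
    rw [← mul_assoc, Algebra.TensorProduct.tmul_mul_tmul, inv_mul_cancel₀ hs, one_mul]
    exact (one_mul _).symm
  rw [h3]
  exact P.mul_mem_left _ h2

theorem cm_field_tensor {k L K : Type*} [Field k] [Field L] [Field K] [Algebra k L] [Algebra k K]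
    (hN : IsNoetherianRing (L ⊗[k] K)) : AllCM (L ⊗[k] K) := by
  classical
  intro Q hQ
  obtain ⟨ι, x, hx⟩ := exists_isTranscendenceBasis' k K
  have hfg : ((Q.comap (tF k L K x)).map (tF k L K x)).FG := IsNoetherian.noetherian _
  obtain ⟨s', hs', hspan⟩ := (Submodule.fg_span_iff_fg_span_finset_subset _).mp hfg
  obtain ⟨T, hT, rfl⟩ := Finset.subset_set_image_iff.mp hs'
  let V : Finset ι := T.biUnion MvPolynomial.vars
  let xV : V → K := fun i => x i
  have hxV : AlgebraicIndependent k xV := hx.1.comp _ Subtype.val_injective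
  have hren : ∀ p, tF k L K xV p = tF k L K x (MvPolynomial.rename Subtype.val p) := by
    intro p
    simp only [tF, MvPolynomial.aeval_rename]
    rfl
  let f := (tF k L K xV).toRingHom
  let p := Q.comap f
  let I := p.map f
  have hIQ : I ≤ Q := Ideal.map_comap_le
  have hsurj : Function.Surjective (Ideal.Quotient.mk I) := Ideal.Quotient.mk_surjective
  let Q' := Q.map (Ideal.Quotient.mk I)
  have hQ'p : Q'.IsPrime := Ideal.map_isPrime_of_surjective hsurj (by rwa [Ideal.mk_ker])
  have hQQ : Q = Q'.comap (Ideal.Quotient.mk I) := by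
    rw [Ideal.comap_map_of_surjective _ hsurj, ← RingHom.ker_eq_comap_bot, Ideal.mk_ker,
      sup_eq_left.mpr hIQ]
  refine cm_at_of_flat f (tF_flat hxV) (Ideal.Quotient.mk I) hsurj Q' Q hQQ p rfl Ideal.mk_ker
    ((AllCM.field L).mvPolynomial p) (cm_loc_of_min Q' ?_)
  intro P' hP' hle
  rw [Ideal.map_le_iff_le_comap]
  have hP : (P'.comap (Ideal.Quotient.mk I)).IsPrime := inferInstance
  have hPQ : P'.comap (Ideal.Quotient.mk I) ≤ Q := by
    conv_rhs => rw [hQQ]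
    exact Ideal.comap_mono hle
  have hIP : I ≤ P'.comap (Ideal.Quotient.mk I) := by
    intro y hy
    rw [Ideal.mem_comap, Ideal.Quotient.eq_zero_iff_mem.mpr hy]
    exact P'.zero_mem
  refine tensor_incomp hx _ Q hPQ ?_
  intro q hq
  have h1 : tF k L K x q ∈ (Q.comap (tF k L K x)).map (tF k L K x) :=
    Ideal.mem_map_of_mem _ hq
  have h2 : (Q.comap (tF k L K x)).map (tF k L K x) ≤ P'.comap (Ideal.Quotient.mk I) := by
    refine hspan.trans_le ?_
    rw [Submodule.span_le]
    intro y hy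
    simp only [Finset.coe_image, Set.mem_image, Finset.mem_coe] at hy
    obtain ⟨t, ht, rfl⟩ := hy
    obtain ⟨t', rfl⟩ := MvPolynomial.exists_rename_eq_of_vars_subset_range t (Subtype.val : V → ι)
      Subtype.val_injective (by
        intro i hi
        exact ⟨⟨i, Finset.mem_biUnion.mpr ⟨t, ht, hi⟩⟩, rfl⟩)
    have h3 := hT ht
    refine hIP ?_
    rw [← hren]
    refine Ideal.mem_map_of_mem f ?_
    change tF k L K xV t' ∈ Q
    rw [hren]
    exact h3
  exact h2 h1

theorem exists_lift_of_surj {C C1 E : Type*} [CommRing C] [CommRing C1] [CommRing E] (g : C →+* C1)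
    (hg : Function.Surjective g) (q : C →+* E) (h : RingHom.ker g ≤ RingHom.ker q) :
    ∃ f' : C1 →+* E, f'.comp g = q :=
  ⟨g.liftOfSurjective hg ⟨q, h⟩, g.liftOfRightInverse_comp _ _ ⟨q, h⟩⟩

theorem cm_at_of_flat' {R S : Type*} [CommRing R] [CommRing S]
    [IsNoetherianRing R] [IsNoetherianRing S] (f : R →+* S) (hflat : f.Flat)
    (Q : Ideal S) [Q.IsPrime] (p : Ideal R) [p.IsPrime] (hp : p = Q.comap f)
    (hR : IsCohenMacaulayLocalRing (Localization.AtPrime p))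
    (hF : ∀ (Q' : Ideal (S ⧸ p.map f)) [Q'.IsPrime], Q = Q'.comap (Ideal.Quotient.mk (p.map f)) →
      IsCohenMacaulayLocalRing (Localization.AtPrime Q')) :
    IsCohenMacaulayLocalRing (Localization.AtPrime Q) := by
  have hle : p.map f ≤ Q := by rw [hp]; exact Ideal.map_comap_le
  have hsurj : Function.Surjective (Ideal.Quotient.mk (p.map f)) := Ideal.Quotient.mk_surjective
  let Q' := Q.map (Ideal.Quotient.mk (p.map f))
  have hQ'p : Q'.IsPrime := Ideal.map_isPrime_of_surjective hsurj (by rwa [Ideal.mk_ker])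
  have hQQ : Q = Q'.comap (Ideal.Quotient.mk (p.map f)) := by
    rw [Ideal.comap_map_of_surjective _ hsurj, ← RingHom.ker_eq_comap_bot, Ideal.mk_ker,
      sup_eq_left.mpr hle]
  exact cm_at_of_flat f hflat (Ideal.Quotient.mk (p.map f)) hsurj Q' Q hQQ p hp Ideal.mk_ker hR
    (hF Q' hQQ)

section
variable {k A B E : Type*} [Field k] [CommRing A] [CommRing B] [CommRing E]
    [Algebra k A] [Algebra k B]

/-- inclusion on the left as a ring hom -/
noncomputable def inL (k A B : Type*) [Field k] [CommRing A] [CommRing B]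
    [Algebra k A] [Algebra k B] : A →+* A ⊗[k] B :=
  (Algebra.TensorProduct.includeLeft : A →ₐ[k] A ⊗[k] B).toRingHom

/-- inclusion on the right as a ring hom -/
noncomputable def inR (k A B : Type*) [Field k] [CommRing A] [CommRing B]
    [Algebra k A] [Algebra k B] : B →+* A ⊗[k] B :=
  (Algebra.TensorProduct.includeRight : B →ₐ[k] A ⊗[k] B).toRingHom

/-- the ideal generated by two ideals -/
noncomputable def rad2 (k : Type*) {A B : Type*} [Field k] [CommRing A] [CommRing B]
    [Algebra k A] [Algebra k B] (m : Ideal A) (n : Ideal B) : Ideal (A ⊗[k] B) :=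
  m.map (inL k A B) ⊔ n.map (inR k A B)

theorem Good.flat_right [IsNoetherianRing B] (m : Ideal A) (n : Ideal B) (f : A ⊗[k] B →+* E)
    (h : Good f (rad2 k m n)) : (f.comp (inR k A B)).Flat := by
  let _ : Algebra k E := (f.comp (algebraMap k (A ⊗[k] B))).toAlgebra
  let _ : Algebra B E := (f.comp (inR k A B)).toAlgebra
  have : IsScalarTower k B E := IsScalarTower.of_algebraMap_eq (fun c => by
    change f (algebraMap k (A ⊗[k] B) c) = f ((Algebra.TensorProduct.includeRight : B →ₐ[k] A ⊗[k] B) (algebraMap k B c))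
    rw [AlgHom.commutes])
  let f' : A ⊗[k] B →ₐ[k] E := { f with commutes' := fun c => rfl }
  have := Good.flat m n f' (fun b => rfl) h
  exact this

theorem Good.flat_left [IsNoetherianRing A] (m : Ideal A) (n : Ideal B) (f : A ⊗[k] B →+* E)
    (h : Good f (rad2 k m n)) : (f.comp (inL k A B)).Flat := by
  let g : A ⊗[k] B →+* B ⊗[k] A := (Algebra.TensorProduct.comm k A B).toAlgHom.toRingHom
  let g' : B ⊗[k] A →+* A ⊗[k] B := (Algebra.TensorProduct.comm k B A).toAlgHom.toRingHom
  have hgg : g'.comp g = RingHom.id _ := by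
    refine RingHom.ext fun x => ?_
    exact (Algebra.TensorProduct.comm k A B).symm_apply_apply x
  have hginj : Function.Injective g := (Algebra.TensorProduct.comm k A B).injective
  have hgs : Function.Surjective g := (Algebra.TensorProduct.comm k A B).surjective
  have h1 := h.quot (f.comp g') g (RingHom.id E) hgs Function.surjective_id
    (by rw [RingHom.comp_assoc, hgg]; rfl)
    (by rw [(RingHom.injective_iff_ker_eq_bot g).mp hginj, Ideal.map_bot,
      (RingHom.injective_iff_ker_eq_bot (RingHom.id E)).mp Function.injective_id])
  have hgL : g.comp (inL k A B) = inR k B A := by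
    refine RingHom.ext fun x => ?_
    simp [g, inL, inR]
  have hgR : g.comp (inR k A B) = inL k B A := by
    refine RingHom.ext fun x => ?_
    simp [g, inL, inR]
  have hg'R : g'.comp (inR k B A) = inL k A B := by
    refine RingHom.ext fun x => ?_
    simp [g', inL, inR]
  have h2 : (rad2 k m n).map g = rad2 k n m := by
    rw [rad2, rad2, Ideal.map_sup, Ideal.map_map, Ideal.map_map, hgL, hgR, sup_comm]
  rw [h2] at h1
  have := Good.flat_right n m _ h1
  rwa [RingHom.comp_assoc, hg'R] at this

end

section
variable {k A B E : Type*} [Field k] [CommRing A] [CommRing B] [CommRing E]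
    [Algebra k A] [Algebra k B]

theorem Good.exists_quot {A' B' : Type*} [CommRing A'] [CommRing B'] [Algebra k A'] [Algebra k B']
    (m : Ideal A) (n : Ideal B) (f : A ⊗[k] B →+* E)
    (h : Good f (rad2 k m n)) (πA : A →ₐ[k] A') (hA : Function.Surjective πA)
    (πB : B →ₐ[k] B') (hB : Function.Surjective πB) (I : Ideal E)
    (hI : I = (RingHom.ker πA).map (f.comp (inL k A B)) ⊔
      (RingHom.ker πB).map (f.comp (inR k A B))) :
    ∃ f' : A' ⊗[k] B' →+* E ⧸ I, Good f' (rad2 k (m.map πA.toRingHom) (n.map πB.toRingHom)) ∧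
      (∀ a, f' (inL k A' B' (πA a)) = Ideal.Quotient.mk I (f (inL k A B a))) ∧
      (∀ b, f' (inR k A' B' (πB b)) = Ideal.Quotient.mk I (f (inR k A B b))) := by
  let g : A ⊗[k] B →+* A' ⊗[k] B' := (Algebra.TensorProduct.map πA πB).toRingHom
  have hg : Function.Surjective g := TensorProduct.map_surjective hA hB
  have hker : RingHom.ker g = (RingHom.ker πA).map (inL k A B) ⊔ (RingHom.ker πB).map (inR k A B) :=
    Algebra.TensorProduct.map_ker πA πB hA hB
  have hI' : I = (RingHom.ker g).map f := by
    rw [hker, Ideal.map_sup, Ideal.map_map, Ideal.map_map, hI]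
  obtain ⟨f', hf'⟩ := exists_lift_of_surj g hg ((Ideal.Quotient.mk I).comp f) (by
    intro c hc
    rw [RingHom.mem_ker, RingHom.comp_apply, Ideal.Quotient.eq_zero_iff_mem, hI']
    exact Ideal.mem_map_of_mem _ hc)
  have hgL : g.comp (inL k A B) = (inL k A' B').comp πA.toRingHom := by
    refine RingHom.ext fun x => ?_
    simp [g, inL]
  have hgR : g.comp (inR k A B) = (inR k A' B').comp πB.toRingHom := by
    refine RingHom.ext fun x => ?_
    simp [g, inR]
  have h1 := h.quot f' g (Ideal.Quotient.mk I) hg Ideal.Quotient.mk_surjective hf'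
    (by rw [Ideal.mk_ker, hI'])
  have h2 : (rad2 k m n).map g = rad2 k (m.map πA.toRingHom) (n.map πB.toRingHom) := by
    rw [rad2, rad2, Ideal.map_sup, Ideal.map_map, Ideal.map_map, Ideal.map_map, Ideal.map_map,
      hgL, hgR]
  rw [h2] at h1
  refine ⟨f', h1, fun a => ?_, fun b => ?_⟩
  · have e1 := RingHom.congr_fun hgL a
    have e2 := RingHom.congr_fun hf' (inL k A B a)
    simp only [RingHom.comp_apply] at e1 e2
    rw [e1] at e2
    exact e2
  · have e1 := RingHom.congr_fun hgR b
    have e2 := RingHom.congr_fun hf' (inR k A B b)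
    simp only [RingHom.comp_apply] at e1 e2
    rw [e1] at e2
    exact e2

theorem cm_of_good_bot {L K F : Type*} [Field L] [Field K] [CommRing F] [Algebra k L] [Algebra k K]
    (f : L ⊗[k] K →+* F) (h : Good f (⊥ : Ideal (L ⊗[k] K))) : AllCM F := by
  have hinj : Function.Injective f := by
    rw [injective_iff_map_eq_zero]
    intro c hc
    have := h.ker 1 c (by rw [hc]; exact Ideal.zero_mem _)
    simpa using this
  have hsurj : Function.Surjective f := by
    intro e
    obtain ⟨c, hc⟩ := h.surj 1 e
    refine ⟨c, ?_⟩
    rw [pow_one, Ideal.map_bot, Ideal.mem_bot, sub_eq_zero] at hc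
    exact hc.symm
  let e : L ⊗[k] K ≃+* F := RingEquiv.ofBijective f ⟨hinj, hsurj⟩
  have := h.noeth
  exact AllCM.of_ringEquiv e (cm_field_tensor (isNoetherianRing_of_ringEquiv F e.symm))

theorem assemble {KA KB : Type*} [Field KA] [Field KB] [Algebra k KA] [Algebra k KB]
    [IsNoetherianRing A] [IsNoetherianRing B] (m : Ideal A) (n : Ideal B) (f : A ⊗[k] B →+* E)
    (h : Good f (rad2 k m n)) (πA : A →ₐ[k] KA) (hA : Function.Surjective πA)
    (πB : B →ₐ[k] KB) (hB : Function.Surjective πB)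
    (pA : Ideal A) [pA.IsPrime] (pB : Ideal B) [pB.IsPrime]
    (hpA : pA = RingHom.ker πA) (hpB : pB = RingHom.ker πB) (hm : m ≤ pA) (hn : n ≤ pB)
    (Q : Ideal E) [Q.IsPrime] (hQA : pA = Q.comap (f.comp (inL k A B)))
    (hQB : pB = Q.comap (f.comp (inR k A B)))
    (hcA : IsCohenMacaulayLocalRing (Localization.AtPrime pA))
    (hcB : IsCohenMacaulayLocalRing (Localization.AtPrime pB)) :
    IsCohenMacaulayLocalRing (Localization.AtPrime Q) := by
  have := h.noeth
  refine cm_at_of_flat' (f.comp (inL k A B)) (Good.flat_left m n f h) Q pA hQA hcA ?_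
  intro Q' _ hQ'
  obtain ⟨f1, h1, -, h1R⟩ := h.exists_quot m n f πA hA (AlgHom.id k B) Function.surjective_id
    (pA.map (f.comp (inL k A B))) (by
      have : RingHom.ker (AlgHom.id k B) = ⊥ :=
        (RingHom.injective_iff_ker_eq_bot (AlgHom.id k B)).mp Function.injective_id
      rw [this, Ideal.map_bot, sup_bot_eq, hpA])
  have hm0 : m.map πA.toRingHom = ⊥ := by
    rw [eq_bot_iff, Ideal.map_le_iff_le_comap]
    intro x hx
    have := hm hx
    rw [hpA] at this
    exact this
  have hn0 : n.map πB.toRingHom = ⊥ := by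
    rw [eq_bot_iff, Ideal.map_le_iff_le_comap]
    intro x hx
    have := hn hx
    rw [hpB] at this
    exact this
  have hnid : n.map (AlgHom.id k B).toRingHom = n := Ideal.map_id n
  rw [hm0, hnid] at h1
  have hN1 := h1.noeth
  refine cm_at_of_flat' (f1.comp (inR k KA B)) (Good.flat_right _ n f1 h1) Q' pB ?_ hcB ?_
  · rw [hQB, hQ']
    ext b
    rw [Ideal.mem_comap, Ideal.mem_comap, Ideal.mem_comap, RingHom.comp_apply, RingHom.comp_apply,
      ← h1R b]
    rfl
  intro Q'' _ _
  obtain ⟨f2, h2, -, -⟩ := h1.exists_quot ⊥ n f1 (AlgHom.id k KA) Function.surjective_id πB hB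
    (pB.map (f1.comp (inR k KA B))) (by
      have : RingHom.ker (AlgHom.id k KA) = ⊥ :=
        (RingHom.injective_iff_ker_eq_bot (AlgHom.id k KA)).mp Function.injective_id
      rw [this, Ideal.map_bot, bot_sup_eq, hpB])
  rw [hn0, Ideal.map_bot, rad2, Ideal.map_bot, Ideal.map_bot, sup_bot_eq] at h2
  exact cm_of_good_bot f2 h2 Q''

theorem isMaximal_of_jacobson_le (hs : {P : Ideal A | P.IsMaximal}.Finite) (p : Ideal A)
    [hp : p.IsPrime] (h : (⊥ : Ideal A).jacobson ≤ p) : p.IsMaximal := by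
  have h1 : hs.toFinset.inf id ≤ p := by
    refine le_trans ?_ h
    rw [Ideal.jacobson]
    refine le_sInf fun M hM => ?_
    exact Finset.inf_le (f := id) (by simpa using hM.2)
  obtain ⟨M, hM, hle⟩ := (Ideal.IsPrime.inf_le' hp).mp h1
  have hM : M.IsMaximal := by simpa using hM
  have := hM.eq_of_le hp.ne_top hle
  exact this ▸ hM
end

end

/-- Let `A` and `B` be two semilocal Noetherian commutative rings
containing a field `k` such that the completed tensor product `A ⊗̂[k] B` is Noetherian.
If `A` and `B` are Cohen–Macaulay, then so is `A ⊗̂[k] B`. -/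
theorem isCohenMacaulayRing_completedTensor (k A B : Type*) [Field k]
    [CommRing A] [CommRing B] [IsNoetherianRing A] [IsNoetherianRing B]
    [Algebra k A] [Algebra k B]
    (hsemiA : {P : Ideal A | P.IsMaximal}.Finite)
    (hsemiB : {P : Ideal B | P.IsMaximal}.Finite)
    (hE : IsNoetherianRing (CompletedTensor k A B))
    (hA : IsCohenMacaulayRing A) (hB : IsCohenMacaulayRing B) :
    IsCohenMacaulayRing (CompletedTensor k A B) := by
  intro Q hQ
  have hQp : Q.IsPrime := hQ.isPrime
  have hr : tensorRadical k A B = rad2 k (⊥ : Ideal A).jacobson (⊥ : Ideal B).jacobson := rfl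
  have hfg : (tensorRadical k A B).FG := by
    rw [hr, rad2]
    exact Submodule.FG.sup (Ideal.FG.map (IsNoetherian.noetherian _) _)
      (Ideal.FG.map (IsNoetherian.noetherian _) _)
  have hG := Good.completion (tensorRadical k A B) hfg hE
  set f := algebraMap (A ⊗[k] B) (CompletedTensor k A B) with hf
  have hle : (tensorRadical k A B).map f ≤ Q := hG.jac.trans (by
    rw [Ideal.jacobson]
    exact sInf_le ⟨bot_le, hQ⟩)
  have hG' : Good f (rad2 k (⊥ : Ideal A).jacobson (⊥ : Ideal B).jacobson) := hG
  have hle' : rad2 k (⊥ : Ideal A).jacobson (⊥ : Ideal B).jacobson ≤ Q.comap f :=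
    Ideal.map_le_iff_le_comap.mp hle
  have hmA : (⊥ : Ideal A).jacobson ≤ Q.comap (f.comp (inL k A B)) := by
    intro x hx
    exact hle' (Ideal.mem_sup_left (Ideal.mem_map_of_mem _ hx))
  have hmB : (⊥ : Ideal B).jacobson ≤ Q.comap (f.comp (inR k A B)) := by
    intro x hx
    exact hle' (Ideal.mem_sup_right (Ideal.mem_map_of_mem _ hx))
  have hpA : (Q.comap (f.comp (inL k A B))).IsPrime := Ideal.comap_isPrime _ _
  have hpB : (Q.comap (f.comp (inR k A B))).IsPrime := Ideal.comap_isPrime _ _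
  have hxA := isMaximal_of_jacobson_le hsemiA _ hmA
  have hxB := isMaximal_of_jacobson_le hsemiB _ hmB
  letI := Ideal.Quotient.field (Q.comap (f.comp (inL k A B)))
  letI := Ideal.Quotient.field (Q.comap (f.comp (inR k A B)))
  exact assemble (KA := A ⧸ Q.comap (f.comp (inL k A B))) (KB := B ⧸ Q.comap (f.comp (inR k A B)))
    _ _ f hG' (Ideal.Quotient.mkₐ k _) Ideal.Quotient.mk_surjective
    (Ideal.Quotient.mkₐ k _) Ideal.Quotient.mk_surjective _ _
    (Ideal.Quotient.mkₐ_ker k _).symm (Ideal.Quotient.mkₐ_ker k _).symm hmA hmB Q rfl rfl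
    (hA _ hxA) (hB _ hxB)
end

section
/- Let A and B be two semilocal Noetherian commutative rings containing a field k such that the completed tensor product A⊗̂_k B is Noetherian, with maximal ideals m_1,…,m_p of A and n_1,…,n_q of B. Then the Krull dimension of A⊗̂_k B equals the supremum over all pairs (r,s) of ht(m_r) + ht(n_s) + min(trdeg_k(A/m_r), trdeg_k(B/n_s)), where ht denotes the height of the ideal and trdeg_k the transcendence degree of the residue field over k. -/
open TensorProduct

/-- The height of a prime ideal: the Krull dimension of the localization at it. -/
noncomputable def primeHeight {R : Type*} [CommRing R] (P : Ideal R) [P.IsPrime] :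
    WithBot ℕ∞ :=
  ringKrullDim (Localization.AtPrime P)

/-- The transcendence degree of a commutative `F`-algebra `K` (as an element of `ℕ∞`):
the supremum of the cardinalities of algebraically independent subsets of `K`. -/
noncomputable def trdeg' (F K : Type*) [CommRing F] [CommRing K] [Algebra F K] : ℕ∞ :=
  Cardinal.toENat
    (⨆ s : { s : Set K // AlgebraicIndependent F ((↑) : s → K) }, Cardinal.mk s.1)


section
variable {k A B : Type*} [Field k] [CommRing A] [CommRing B] [Algebra k A] [Algebra k B]

/-- generalised `tensorRadical` -/
noncomputable abbrev tRad (k : Type*) {A B : Type*} [Field k] [CommRing A] [CommRing B]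
    [Algebra k A] [Algebra k B] (m : Ideal A) (n : Ideal B) : Ideal (A ⊗[k] B) :=
  m.map (Algebra.TensorProduct.includeLeft (R := k) (S := k) (A := A) (B := B)) ⊔
    n.map (Algebra.TensorProduct.includeRight (R := k) (A := A) (B := B))

lemma sup_pow_le {R : Type*} [CommRing R] (I J : Ideal R) (a b : ℕ) :
    (I ⊔ J) ^ (a + b) ≤ I ^ a ⊔ J ^ b := by
  exact Ideal.sup_pow_add_le_pow_sup_pow

/-- the natural map `a ⊗ B → C ⊗_A a`. -/
noncomputable def theta (k : Type*) {A : Type*} (B : Type*) [Field k] [CommRing A] [CommRing B]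
    [Algebra k A] [Algebra k B] (a : Ideal A) : (a ⊗[k] B) →ₗ[k] ((A ⊗[k] B) ⊗[A] a) :=
  TensorProduct.lift (LinearMap.mk₂ k (fun x b => ((1 : A) ⊗ₜ[k] b) ⊗ₜ[A] x)
    (by intros; simp [tmul_add]) (by intros; simp)
    (by intros; simp [tmul_add, add_tmul]) (by intros; simp [smul_tmul']))

@[simp] lemma theta_tmul (a : Ideal A) (x : a) (b : B) :
    theta k B a (x ⊗ₜ b) = ((1 : A) ⊗ₜ[k] b) ⊗ₜ[A] x := rfl

lemma theta_surj (a : Ideal A) : Function.Surjective (theta k B a) := by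
  intro w
  induction w with
  | zero => exact ⟨0, map_zero _⟩
  | add x y hx hy =>
    obtain ⟨x, rfl⟩ := hx; obtain ⟨y, rfl⟩ := hy; exact ⟨x + y, map_add _ _ _⟩
  | tmul c x =>
    induction c with
    | zero => exact ⟨0, by simp⟩
    | add c d hc hd =>
      obtain ⟨c', hc⟩ := hc; obtain ⟨d', hd⟩ := hd
      exact ⟨c' + d', by simp [add_tmul, hc, hd]⟩
    | tmul p b =>
      refine ⟨(p • x) ⊗ₜ b, ?_⟩
      rw [theta_tmul, ← smul_tmul, smul_tmul']
      simp

/-- multiplication `E ⊗_A a → E`. -/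
noncomputable def mulMap {A : Type*} (E : Type*) [CommRing A] [CommRing E] [Algebra A E] (a : Ideal A) :
    (E ⊗[A] a) →ₗ[E] E :=
  (TensorProduct.AlgebraTensorModule.rid A E E).toLinearMap ∘ₗ
    TensorProduct.AlgebraTensorModule.map LinearMap.id a.subtype

@[simp] lemma mulMap_tmul {E : Type*} [CommRing E] [Algebra A E] (a : Ideal A) (e : E) (x : a) :
    mulMap E a (e ⊗ₜ x) = (x : A) • e := by
  simp [mulMap]

lemma key [IsNoetherianRing A] (m : Ideal A) (n : Ideal B) (a : Ideal A) (N : ℕ) :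
    ∃ M, N ≤ M ∧ ∀ w : (A ⊗[k] B) ⊗[A] a, mulMap (A ⊗[k] B) a w ∈ (tRad k m n) ^ M →
      w ∈ (tRad k m n) ^ N • (⊤ : Submodule (A ⊗[k] B) ((A ⊗[k] B) ⊗[A] a)) := by
  obtain ⟨l, hl⟩ := Ideal.exists_pow_inf_eq_pow_smul m a
  refine ⟨(N + l) + N, by omega, fun w hw => ?_⟩
  obtain ⟨w, rfl⟩ := theta_surj a w
  set q₁ : A →ₐ[k] A ⧸ (m ^ (N + l)) := Ideal.Quotient.mkₐ k _
  set q₂ : B →ₐ[k] B ⧸ (n ^ N) := Ideal.Quotient.mkₐ k _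
  have h0 : Algebra.TensorProduct.map q₁ q₂ (mulMap (A ⊗[k] B) a (theta k B a w)) = 0 := by
    have h1 := sup_pow_le _ _ _ _ hw
    rw [← RingHom.mem_ker, ]
    rw [← Ideal.map_pow, ← Ideal.map_pow] at h1
    revert h1
    apply SetLike.le_def.mp
    refine sup_le ?_ ?_
    · rw [Ideal.map_le_iff_le_comap]
      intro x hx
      have : q₁ x = 0 := Ideal.Quotient.eq_zero_iff_mem.mpr hx
      simp [RingHom.mem_ker, this]
    · rw [Ideal.map_le_iff_le_comap]
      intro x hx
      have : q₂ x = 0 := Ideal.Quotient.eq_zero_iff_mem.mpr hx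
      simp [RingHom.mem_ker, this]
  let g : a →ₗ[k] A ⧸ (m ^ (N + l)) := q₁.toLinearMap ∘ₗ (a.subtype.restrictScalars k)
  have h1 : ∀ w, Algebra.TensorProduct.map q₁ q₂ (mulMap (A ⊗[k] B) a (theta k B a w)) =
      (LinearMap.rTensor _ g.range.subtype) (TensorProduct.map g.rangeRestrict q₂.toLinearMap w) := by
    intro w
    induction w with
    | zero => simp
    | add x y hx hy => simp only [map_add, hx, hy]
    | tmul x b => simp [g, smul_tmul']
  rw [h1] at h0
  have h2 : TensorProduct.map g.rangeRestrict q₂.toLinearMap w = 0 := by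
    apply Module.Flat.rTensor_preserves_injective_linearMap (M := B ⧸ n ^ N) g.range.subtype
      (Submodule.subtype_injective _)
    rw [h0, map_zero]
  have h3 := TensorProduct.map_ker (f := g.rangeRestrict.ker.subtype) (g := g.rangeRestrict)
    (f' := q₂.toLinearMap.ker.subtype) (g' := q₂.toLinearMap)
    (LinearMap.exact_subtype_ker_map _) (LinearMap.surjective_rangeRestrict _)
    (LinearMap.exact_subtype_ker_map _) (Ideal.Quotient.mk_surjective)
  have h4 : w ∈ (TensorProduct.map g.rangeRestrict q₂.toLinearMap).ker := h2
  rw [h3, Submodule.mem_sup] at h4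
  obtain ⟨_, ⟨u, rfl⟩, _, ⟨v, rfl⟩, rfl⟩ := h4
  rw [map_add]
  clear h2 h0 hw
  refine add_mem ?_ ?_
  · induction u with
    | zero => simp
    | add x y hx hy => simp only [map_add]; exact add_mem hx hy
    | tmul x y =>
      obtain ⟨y, hy⟩ := y
      have hy' : y ∈ n ^ N := Ideal.Quotient.eq_zero_iff_mem.mp hy
      simp only [LinearMap.lTensor_tmul, Submodule.subtype_apply, theta_tmul]
      have : ((1 : A) ⊗ₜ[k] y) ⊗ₜ[A] x = ((1 : A) ⊗ₜ[k] y) • (((1 : A ⊗[k] B)) ⊗ₜ[A] x) := by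
        simp [smul_tmul']
      rw [this]
      refine Submodule.smul_mem_smul ?_ trivial
      refine Ideal.pow_right_mono (le_sup_right) N ?_
      rw [← Ideal.map_pow]
      exact Ideal.mem_map_of_mem _ hy'
  · induction v with
    | zero => simp
    | add x y hx hy => simp only [map_add]; exact add_mem hx hy
    | tmul x y =>
      obtain ⟨⟨x, hxa⟩, hx⟩ := x
      have hx' : x ∈ m ^ (N + l) := by
        apply Ideal.Quotient.eq_zero_iff_mem.mp
        have := congrArg Subtype.val hx
        exact this
      have hx2 : x ∈ m ^ N * a := by
        have : x ∈ m ^ (N + l) • ⊤ ⊓ a := ⟨by simpa using hx', hxa⟩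
        rw [hl _ (by omega)] at this
        simp only [Nat.add_sub_cancel] at this
        exact Ideal.mul_mono_right inf_le_right this
      have hx3 : (⟨x, hxa⟩ : a) ∈ m ^ N • (⊤ : Submodule A a) := by
        have : (m ^ N • (⊤ : Submodule A a)).map a.subtype = m ^ N * a := by
          rw [Submodule.map_smul'']; simp
        rw [← this] at hx2
        obtain ⟨z, hz, rfl⟩ := hx2
        exact hz
      simp only [LinearMap.rTensor_tmul, Submodule.subtype_apply, theta_tmul]
      generalize (⟨x, hxa⟩ : a) = z at hx3
      refine Submodule.smul_induction_on hx3 ?_ ?_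
      · intro r hr z _
        have : ((1 : A) ⊗ₜ[k] y) ⊗ₜ[A] (r • z) =
            (r ⊗ₜ[k] (1 : B)) • (((1 : A) ⊗ₜ[k] y) ⊗ₜ[A] z) := by
          rw [← smul_tmul, smul_tmul', smul_tmul']
          simp
        rw [this]
        refine Submodule.smul_mem_smul ?_ trivial
        refine Ideal.pow_right_mono (le_sup_left) N ?_
        rw [← Ideal.map_pow]
        exact Ideal.mem_map_of_mem _ hr
      · intro x y hx hy
        rw [tmul_add]; exact add_mem hx hy

/-- `φ : R → E` looks like an `r`-adic completion. -/
structure Good_s7 {R E : Type*} [CommRing R] [CommRing E] (φ : R →+* E) (r : Ideal R) : Prop where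
  jac : r.map φ ≤ Ideal.jacobson ⊥
  surj : ∀ N e, ∃ c, e - φ c ∈ (r.map φ) ^ N
  inj : ∀ N c, φ c ∈ (r.map φ) ^ N → c ∈ r ^ N

lemma flat_of_good [IsNoetherianRing A] (m : Ideal A) (n : Ideal B) {E : Type*} [CommRing E]
    [IsNoetherianRing E] [Algebra A E] (φ : A ⊗[k] B →+* E)
    (hφ : ∀ a, φ (a ⊗ₜ 1) = algebraMap A E a)
    (h : Good_s7 φ (tRad k m n)) : Module.Flat A E := by
  let _ := φ.toAlgebra
  have : IsScalarTower A (A ⊗[k] B) E := IsScalarTower.of_algebraMap_eq fun a => (hφ a).symm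
  rw [Module.Flat.iff_lTensor_injective']
  intro a
  have hfin : Module.Finite A a := Module.Finite.of_fg (IsNoetherian.noetherian a)
  have hsep := Ideal.iInf_pow_smul_eq_bot_of_le_jacobson (M := E ⊗[A] a) _ h.jac
  suffices H : Function.Injective (mulMap E a) by
    intro x y hxy
    apply H
    have h2 : ∀ x, mulMap E a x = TensorProduct.rid A E (LinearMap.lTensor E a.subtype x) := by
      intro x
      induction x with
      | zero => simp
      | add x y hx hy => simp only [map_add, hx, hy]
      | tmul x y => simp
    rw [h2, h2, hxy]
  rw [injective_iff_map_eq_zero]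
  intro u hu
  rw [← Submodule.mem_bot E, ← hsep, Submodule.mem_iInf]
  intro N
  obtain ⟨M, hNM, hM⟩ := key (k := k) m n a N
  set r := tRad k m n
  set I := r.map φ
  let ψ : (A ⊗[k] B) ⊗[A] a →ₗ[A ⊗[k] B] E ⊗[A] a :=
    TensorProduct.AlgebraTensorModule.map (Algebra.linearMap (A ⊗[k] B) E) LinearMap.id
  have hψ : ∀ w, mulMap E a (ψ w) = φ (mulMap (A ⊗[k] B) a w) := by
    intro w
    induction w with
    | zero => simp
    | add x y hx hy => simp only [map_add, hx, hy]
    | tmul x y =>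
      simp only [ψ, AlgebraTensorModule.map_tmul, Algebra.linearMap_apply, LinearMap.id_apply,
        mulMap_tmul, Algebra.smul_def, map_mul]
      congr 1
      exact (hφ _).symm
  have hdec : ∀ u : E ⊗[A] a, ∃ w, u - ψ w ∈ I ^ M • (⊤ : Submodule E (E ⊗[A] a)) := by
    intro u
    induction u with
    | zero => exact ⟨0, by simp⟩
    | add x y hx hy =>
      obtain ⟨c, hc⟩ := hx; obtain ⟨d, hd⟩ := hy
      refine ⟨c + d, ?_⟩
      rw [map_add, add_sub_add_comm]; exact add_mem hc hd
    | tmul e x =>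
      obtain ⟨c, hc⟩ := h.surj M e
      refine ⟨c ⊗ₜ x, ?_⟩
      have : e ⊗ₜ x - ψ (c ⊗ₜ x) = (e - φ c) • ((1 : E) ⊗ₜ[A] x) := by
        simp only [ψ, AlgebraTensorModule.map_tmul, Algebra.linearMap_apply, LinearMap.id_apply]
        rw [← sub_tmul, smul_tmul', smul_eq_mul, mul_one]; rfl
      rw [this]
      exact Submodule.smul_mem_smul hc trivial
  obtain ⟨w, hw⟩ := hdec u
  have h1 : mulMap E a (u - ψ w) ∈ I ^ M := by
    have : (I ^ M • (⊤ : Submodule E (E ⊗[A] a))).map (mulMap E a) ≤ I ^ M := by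
      rw [Submodule.map_smul'']
      exact Ideal.mul_le_left (I := I ^ M)
    exact this ⟨_, hw, rfl⟩
  rw [map_sub, hu, zero_sub, neg_mem_iff, hψ] at h1
  have h2 := hM w (h.inj M _ h1)
  have h3 : ψ w ∈ I ^ N • (⊤ : Submodule E (E ⊗[A] a)) := by
    refine Submodule.smul_induction_on h2 ?_ ?_
    · intro c hc z _
      rw [map_smul, ← algebraMap_smul E c (ψ z)]
      refine Submodule.smul_mem_smul ?_ trivial
      rw [← Ideal.map_pow]
      exact Ideal.mem_map_of_mem φ hc
    · intro x y hx hy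
      rw [map_add]; exact add_mem hx hy
  have h4 := Submodule.smul_mono_left (Ideal.pow_le_pow_right hNM) hw
  simpa using add_mem h4 h3

lemma Good_s7.quot {R E R' E' : Type*} [CommRing R] [CommRing E] [CommRing R'] [CommRing E']
    {φ : R →+* E} {r : Ideal R} (h : Good_s7 φ r) (π : R →+* R') (hπ : Function.Surjective π)
    (ρ : E →+* E') (hρ : Function.Surjective ρ) (φ' : R' →+* E')
    (hcomm : ∀ x, φ' (π x) = ρ (φ x)) (hker : RingHom.ker ρ ≤ (RingHom.ker π).map φ) :
    Good_s7 φ' (r.map π) := by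
  have hc : φ'.comp π = ρ.comp φ := RingHom.ext hcomm
  have hI : (r.map π).map φ' = (r.map φ).map ρ := by
    rw [Ideal.map_map, hc, ← Ideal.map_map]
  refine ⟨?_, ?_, ?_⟩
  · rw [hI]
    refine (Ideal.map_mono h.jac).trans ?_
    rw [Ideal.map_le_iff_le_comap]
    intro x hx
    rw [Ideal.mem_comap, Ideal.mem_jacobson_bot]
    intro y
    obtain ⟨y, rfl⟩ := hρ y
    rw [← map_mul, ← map_one ρ, ← map_add]
    exact (Ideal.mem_jacobson_bot.mp hx y).map ρ
  · intro N e
    obtain ⟨e, rfl⟩ := hρ e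
    obtain ⟨c, hc⟩ := h.surj N e
    refine ⟨π c, ?_⟩
    rw [hcomm, ← map_sub, hI, ← Ideal.map_pow]
    exact Ideal.mem_map_of_mem _ hc
  · intro N c hc'
    obtain ⟨c, rfl⟩ := hπ c
    rw [hcomm, hI, ← Ideal.map_pow, Ideal.mem_map_iff_of_surjective _ hρ] at hc'
    obtain ⟨e, he, hec⟩ := hc'
    have h1 : φ c - e ∈ (RingHom.ker π).map φ := hker (by simp [RingHom.mem_ker, hec])
    have h2 : ∀ z ∈ (RingHom.ker π).map φ, ∃ d ∈ RingHom.ker π, z - φ d ∈ (r.map φ) ^ N := by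
      intro z hz
      refine Submodule.span_induction ?_ ?_ ?_ ?_ hz
      · rintro _ ⟨d, hd, rfl⟩
        exact ⟨d, hd, by simp⟩
      · exact ⟨0, by simp, by simp⟩
      · rintro x y _ _ ⟨d, hd, hd'⟩ ⟨f, hf, hf'⟩
        refine ⟨d + f, add_mem hd hf, ?_⟩
        rw [map_add, add_sub_add_comm]; exact add_mem hd' hf'
      · rintro s x _ ⟨d, hd, hd'⟩
        obtain ⟨t, ht⟩ := h.surj N s
        refine ⟨t * d, Ideal.mul_mem_left _ _ hd, ?_⟩
        have : s • x - φ (t * d) = s * (x - φ d) + φ d * (s - φ t) := by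
          rw [map_mul, smul_eq_mul]; ring
        rw [this]
        exact add_mem (Ideal.mul_mem_left _ _ hd') (Ideal.mul_mem_left _ _ ht)
    obtain ⟨d, hd, hd'⟩ := h2 _ h1
    have h3 : φ (c - d) ∈ (r.map φ) ^ N := by
      have := add_mem hd' he
      convert this using 1
      rw [map_sub]; ring
    have h4 := h.inj N _ h3
    have h5 : π c = π (c - d) := by
      rw [map_sub, (RingHom.mem_ker).mp hd, sub_zero]
    rw [h5, ← Ideal.map_pow]
    exact Ideal.mem_map_of_mem _ h4

lemma Good_s7.bijective {R E : Type*} [CommRing R] [CommRing E] {φ : R →+* E} (h : Good_s7 φ ⊥) :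
    Function.Bijective φ := by
  constructor
  · rw [injective_iff_map_eq_zero]
    intro x hx
    have := h.inj 1 x (by rw [hx]; exact zero_mem _)
    simpa using this
  · intro e
    obtain ⟨c, hc⟩ := h.surj 1 e
    refine ⟨c, ?_⟩
    simp only [Ideal.map_bot, pow_one, Submodule.mem_bot] at hc
    exact (sub_eq_zero.mp hc).symm

lemma good_adic {R : Type*} [CommRing R] (r : Ideal R) (hr : r.FG) :
    Good_s7 (algebraMap R (AdicCompletion r R)) r := by
  have hpow : ∀ N x, x ∈ (r.map (algebraMap R (AdicCompletion r R))) ^ N ↔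
      AdicCompletion.eval r R N x = 0 := by
    intro N x
    rw [← LinearMap.mem_ker, ← AdicCompletion.pow_smul_top_eq_ker_eval hr, ← Ideal.map_pow,
      ← Submodule.restrictScalars_mem R, ← Ideal.smul_top_eq_map]
  have hcomp := AdicCompletion.isAdicComplete (M := R) hr
  refine ⟨?_, ?_, ?_⟩
  · have : IsAdicComplete (r.map (algebraMap R (AdicCompletion r R))) (AdicCompletion r R) := by
      exact (IsAdicComplete.map_algebraMap_iff _ _).mpr hcomp
    exact IsAdicComplete.le_jacobson_bot _
  · intro N e
    obtain ⟨c, hc⟩ := Submodule.mkQ_surjective _ (AdicCompletion.eval r R N e)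
    refine ⟨c, ?_⟩
    rw [hpow, map_sub, ← hc, sub_eq_zero]
    rfl
  · intro N c hc
    rw [hpow] at hc
    have : (Submodule.mkQ (r ^ N • ⊤ : Submodule R R) c) = 0 := hc
    simpa [-smul_eq_mul, -Submodule.mkQ_apply, ← LinearMap.mem_ker, Submodule.ker_mkQ] using this
end

lemma trdeg'_eq (F K : Type*) [CommRing F] [CommRing K] [Algebra F K] :
    trdeg' F K = Cardinal.toENat (Algebra.trdeg F K) := rfl

lemma dim_le_of_strict {R S : Type*} [CommRing R] [CommRing S] (f : R →+* S)
    (hf : ∀ I J : Ideal S, I.IsPrime → J.IsPrime → I < J → I.comap f < J.comap f) :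
    ringKrullDim S ≤ ringKrullDim R :=
  Order.krullDim_le_of_strictMono (PrimeSpectrum.comap f)
    (fun I J h => hf I.asIdeal J.asIdeal I.2 J.2 h)

lemma dim_le_of_integral {R S : Type*} [CommRing R] [CommRing S] (f : R →+* S)
    (hf : f.IsIntegral) : ringKrullDim S ≤ ringKrullDim R := by
  refine dim_le_of_strict f fun I J _ _ h => ?_
  algebraize [f]
  exact Ideal.IsIntegral.comap_lt_comap h

lemma dim_le_of_frac {R S : Type*} [CommRing R] [CommRing S] (f : R →+* S)
    (hf : ∀ y, ∃ p q, IsUnit (f p) ∧ f p * y = f q) : ringKrullDim S ≤ ringKrullDim R := by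
  refine dim_le_of_strict f fun I J _ _ h => ?_
  obtain ⟨h1, y, hyJ, hyI⟩ := SetLike.lt_iff_le_and_exists.mp h
  refine SetLike.lt_iff_le_and_exists.mpr ⟨Ideal.comap_mono h1, ?_⟩
  obtain ⟨p, q, hp, hq⟩ := hf y
  refine ⟨q, ?_, ?_⟩
  · rw [Ideal.mem_comap, ← hq]; exact Ideal.mul_mem_left _ _ hyJ
  · rw [Ideal.mem_comap, ← hq]
    intro hmem
    exact hyI ((Ideal.unit_mul_mem_iff_mem I hp).mp hmem)

section sharp
variable (k K L : Type*) [Field k] [Field K] [Field L] [Algebra k K] [Algebra k L]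

lemma integral_map_val (F : IntermediateField k K) [Algebra.IsAlgebraic F K] :
    (Algebra.TensorProduct.map F.val (AlgHom.id k L)).toRingHom.IsIntegral := by
  intro y
  induction y with
  | zero => exact RingHom.isIntegralElem_zero _
  | add a b ha hb => exact RingHom.IsIntegralElem.add _ ha hb
  | tmul a b =>
    have h : a ⊗ₜ[k] b = (a ⊗ₜ[k] (1 : L)) * ((1 : K) ⊗ₜ[k] b) := by simp
    rw [h]
    refine RingHom.IsIntegralElem.mul _ ?_ ?_
    · obtain ⟨p, hp, hpa⟩ := (Algebra.IsAlgebraic.isAlgebraic (R := F) a).isIntegral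
      refine ⟨p.map (algebraMap F (F ⊗[k] L)), hp.map _, ?_⟩
      rw [Polynomial.eval₂_map]
      have := congrArg (Algebra.TensorProduct.includeLeft (R := k) (S := k) (A := K) (B := L)).toRingHom hpa
      rw [Polynomial.hom_eval₂, map_zero] at this
      exact this
    · have : (1 : K) ⊗ₜ[k] b = (Algebra.TensorProduct.map F.val (AlgHom.id k L)).toRingHom (1 ⊗ₜ b) := by
        simp
      rw [this]
      exact RingHom.isIntegralElem_map _

lemma dim_adjoin_le {ι : Type*} [Finite ι] (x : ι → K) :
    ringKrullDim (IntermediateField.adjoin k (Set.range x) ⊗[k] L) ≤ Nat.card ι := by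
  have h0 : ringKrullDim (MvPolynomial ι L) = Nat.card ι := by
    rw [MvPolynomial.ringKrullDim_of_isNoetherianRing, ringKrullDim_eq_zero_of_field]; simp
  rw [← h0]
  let F := IntermediateField.adjoin k (Set.range x)
  let x' : ι → F := fun i => ⟨x i, IntermediateField.subset_adjoin _ _ ⟨i, rfl⟩⟩
  let f : MvPolynomial ι L →+* F ⊗[k] L := MvPolynomial.eval₂Hom
    (Algebra.TensorProduct.includeRight (R := k) (A := F) (B := L)).toRingHom
    (fun i => x' i ⊗ₜ 1)
  have hf : ∀ p : MvPolynomial ι k, f (p.map (algebraMap k L)) =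
      (MvPolynomial.aeval x' p) ⊗ₜ 1 := by
    intro p
    induction p using MvPolynomial.induction_on with
    | C c =>
      simp only [f, MvPolynomial.map_C, MvPolynomial.coe_eval₂Hom,
          MvPolynomial.eval₂_C, AlgHom.toRingHom_eq_coe, RingHom.coe_coe,
          MvPolynomial.algHom_C, Algebra.TensorProduct.includeRight_apply]
      rw [Algebra.algebraMap_eq_smul_one, Algebra.algebraMap_eq_smul_one, TensorProduct.smul_tmul]
    | add p q hp hq => simp only [map_add, hp, hq, TensorProduct.add_tmul]
    | mul_X p i hp =>
      have : f (MvPolynomial.X i) = x' i ⊗ₜ 1 := by simp [f]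
      simp only [map_mul, hp, MvPolynomial.map_X, this, MvPolynomial.aeval_X,
        Algebra.TensorProduct.tmul_mul_tmul, mul_one]
  have hval : ∀ p : MvPolynomial ι k, ((MvPolynomial.aeval x' p : F) : K) = MvPolynomial.aeval x p := by
    intro p
    have := MvPolynomial.comp_aeval_apply (f := x') F.val p
    exact this
  refine dim_le_of_frac (R := MvPolynomial ι L) (S := F ⊗[k] L) f ?_
  intro y
  induction y with
  | zero => exact ⟨1, 0, by simp, by simp⟩
  | add a b ha hb =>
    obtain ⟨p, q, hp, hq⟩ := ha
    obtain ⟨p', q', hp', hq'⟩ := hb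
    refine ⟨p * p', q * p' + q' * p, by rw [map_mul]; exact hp.mul hp', ?_⟩
    rw [map_add, map_mul, map_mul, map_mul, ← hq, ← hq']; ring
  | tmul a b =>
    obtain ⟨r, s, hrs⟩ := (IntermediateField.mem_adjoin_range_iff k x a.1).mp a.2
    by_cases hs : MvPolynomial.aeval x s = 0
    · have : a = 0 := Subtype.ext (by rw [hrs, hs]; simp)
      exact ⟨1, 0, by simp, by simp [this]⟩
    · have hs' : (MvPolynomial.aeval x' s : F) ≠ 0 := by
        intro h; apply hs; rw [← hval, h]; rfl
      refine ⟨s.map (algebraMap k L), r.map (algebraMap k L) * MvPolynomial.C b, ?_, ?_⟩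
      · rw [hf]
        exact (IsUnit.mk0 _ hs').map (Algebra.TensorProduct.includeLeft (R := k) (S := k) (A := F) (B := L))
      · rw [map_mul, hf, hf]
        have : f (MvPolynomial.C b) = 1 ⊗ₜ b := by simp [f]
        rw [this]
        have h2 : (MvPolynomial.aeval x' s : F) * a = MvPolynomial.aeval x' r := by
          apply Subtype.ext
          change ((MvPolynomial.aeval x' s : F) : K) * (a : K) = _
          rw [hval, hval, hrs]; field_simp
        simp [h2]

lemma sharp_upper : ringKrullDim (K ⊗[k] L) ≤ (trdeg' k K : WithBot ℕ∞) := by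
  rw [trdeg'_eq]
  by_cases htop : Cardinal.toENat (Algebra.trdeg k K) = ⊤
  · rw [htop]; exact le_top
  obtain ⟨ι, x, hx⟩ := exists_isTranscendenceBasis' k K
  have hc := hx.cardinalMk_eq_trdeg
  rw [← hc] at htop ⊢
  have hfin : Finite ι := by
    rw [← Cardinal.lt_aleph0_iff_finite]
    by_contra h
    exact htop (Cardinal.toENat_eq_top.mpr (not_lt.mp h))
  have : Algebra.IsAlgebraic (IntermediateField.adjoin k (Set.range x)) K := hx.isAlgebraic_field
  refine (dim_le_of_integral _ (integral_map_val k K L (IntermediateField.adjoin k (Set.range x)))).trans ?_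
  refine (dim_adjoin_le k K L x).trans ?_
  have := Fintype.ofFinite ι
  simp

lemma exists_indep (n : ℕ) (h : (n : ℕ∞) ≤ trdeg' k K) :
    ∃ x : Fin n → K, AlgebraicIndependent k x := by
  obtain ⟨ι, x, hx⟩ := exists_isTranscendenceBasis' k K
  rw [trdeg'_eq, ← hx.cardinalMk_eq_trdeg] at h
  have h1 : (n : Cardinal) ≤ Cardinal.mk ι := Cardinal.natCast_le_toENat.mp h
  have h2 : Cardinal.lift.{_, 0} (Cardinal.mk (Fin n)) ≤ Cardinal.lift.{0, _} (Cardinal.mk ι) := by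
    simpa using h1
  obtain ⟨e⟩ := Cardinal.lift_mk_le'.mp h2
  exact ⟨x ∘ e, hx.1.comp e e.injective⟩

lemma height_ker_ge {n : ℕ} (x : Fin n → K) :
    (n : ℕ∞) ≤ (RingHom.ker (MvPolynomial.aeval x : MvPolynomial (Fin n) K →ₐ[K] K)).height := by
  let g : ℕ → (MvPolynomial (Fin n) K →ₐ[K] MvPolynomial (Fin n) K) := fun i =>
    MvPolynomial.aeval (fun j => if j.1 < i then MvPolynomial.C (x j) else MvPolynomial.X j)
  have hpr : ∀ i, (RingHom.ker (g i)).IsPrime := fun i => RingHom.ker_isPrime _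
  have hcomp : ∀ i, (g (i+1)).comp (g i) = g (i+1) := by
    intro i
    ext j
    simp only [g, AlgHom.comp_apply, MvPolynomial.aeval_X]
    split_ifs with h1 h2 h2
    · simp
    · omega
    · rw [MvPolynomial.aeval_X, if_pos h2]
    · rw [MvPolynomial.aeval_X, if_neg h2]
  have hstep : ∀ i, i < n → RingHom.ker (g i) < RingHom.ker (g (i+1)) := by
    intro i hi
    refine SetLike.lt_iff_le_and_exists.mpr ⟨?_, ?_⟩
    · intro p hp
      rw [RingHom.mem_ker] at hp ⊢
      rw [← hcomp i, AlgHom.comp_apply, hp, map_zero]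
    · refine ⟨MvPolynomial.X ⟨i, hi⟩ - MvPolynomial.C (x ⟨i, hi⟩), ?_, ?_⟩
      · rw [RingHom.mem_ker]; simp [g]
      · rw [RingHom.mem_ker]
        simp only [g, map_sub, MvPolynomial.aeval_X, lt_irrefl, if_false, MvPolynomial.algHom_C]
        intro h
        have := congrArg (MvPolynomial.aeval (fun _ : Fin n => x ⟨i, hi⟩ + 1)) h
        simp at this
  have hall : ∀ i : ℕ, i ≤ n → (i : ℕ∞) ≤ (RingHom.ker (g i)).height := by
    intro i
    induction i with
    | zero => intro _; simp
    | succ i ih =>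
      intro hi
      have := hpr i
      have := hpr (i+1)
      refine le_trans ?_ (Ideal.height_add_one_le_of_lt_of_isPrime (hstep i hi))
      push_cast
      gcongr
      exact ih (by omega)
  refine (hall n le_rfl).trans (Ideal.height_mono ?_)
  intro p hp
  rw [RingHom.mem_ker] at hp ⊢
  have : (MvPolynomial.aeval x).comp (g n) = MvPolynomial.aeval x := by
    ext j
    simp [g]
  rw [← this, AlgHom.comp_apply, hp, map_zero]

lemma flat_aeval_s7 {n : ℕ} (y : Fin n → L) (hy : AlgebraicIndependent k y) :
    (MvPolynomial.aeval y : MvPolynomial (Fin n) k →ₐ[k] L).toRingHom.Flat := by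
  have h : (MvPolynomial.aeval y : MvPolynomial (Fin n) k →ₐ[k] L).toRingHom =
    (IsFractionRing.lift (K := FractionRing (MvPolynomial (Fin n) k)) hy).comp
      (algebraMap (MvPolynomial (Fin n) k) (FractionRing (MvPolynomial (Fin n) k))) := by
    ext <;> simp
  rw [h]
  refine RingHom.Flat.comp ?_ (RingHom.Flat.of_isField (Field.toIsField _) _)
  rw [RingHom.flat_algebraMap_iff]
  exact IsLocalization.flat _ (nonZeroDivisors _)

lemma exists_prime {n : ℕ} (x : Fin n → K) (y : Fin n → L) (hx : AlgebraicIndependent k x)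
    (hy : AlgebraicIndependent k y) :
    ∃ M : Ideal (K ⊗[k] L), M.IsPrime ∧ ∀ i, x i ⊗ₜ[k] (1 : L) - (1 : K) ⊗ₜ[k] y i ∈ M := by
  let S := MvPolynomial (Fin n) k
  let R := FractionRing S
  let fx : R →+* K := IsFractionRing.lift (K := R) hx
  let fy : R →+* L := IsFractionRing.lift (K := R) hy
  algebraize [fx, fy]
  have hX : ∀ i, algebraMap R K (algebraMap S R (MvPolynomial.X i)) = x i := by
    intro i
    exact (IsFractionRing.lift_algebraMap hx _).trans (by simp)
  have hY : ∀ i, algebraMap R L (algebraMap S R (MvPolynomial.X i)) = y i := by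
    intro i
    exact (IsFractionRing.lift_algebraMap hy _).trans (by simp)
  have : IsScalarTower k R K := IsScalarTower.of_algebraMap_eq fun c => by
    rw [IsScalarTower.algebraMap_apply k S R]
    refine Eq.symm ((IsFractionRing.lift_algebraMap hx _).trans ?_)
    simp [S]
  have : IsScalarTower k R L := IsScalarTower.of_algebraMap_eq fun c => by
    rw [IsScalarTower.algebraMap_apply k S R]
    refine Eq.symm ((IsFractionRing.lift_algebraMap hy _).trans ?_)
    simp [S]
  obtain ⟨Q, hQ⟩ := Ideal.exists_maximal (K ⊗[R] L)
  have := hQ.isPrime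
  let f : K ⊗[k] L →ₐ[k] K ⊗[R] L := Algebra.TensorProduct.mapOfCompatibleSMul R k k K L
  refine ⟨Q.comap f, Ideal.comap_isPrime _ _, fun i => ?_⟩
  rw [Ideal.mem_comap]
  have : f (x i ⊗ₜ[k] (1 : L) - (1 : K) ⊗ₜ[k] y i) = 0 := by
    have : f (x i ⊗ₜ[k] (1 : L) - (1 : K) ⊗ₜ[k] y i) = x i ⊗ₜ[R] (1 : L) - (1 : K) ⊗ₜ[R] y i := by
      rw [map_sub]; rfl
    rw [this, ← hX, ← hY, Algebra.algebraMap_eq_smul_one (A := K), 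
      Algebra.algebraMap_eq_smul_one (A := L), TensorProduct.smul_tmul, sub_self]
  rw [this]; exact Q.zero_mem

lemma sharp_lower_aux [IsNoetherianRing (K ⊗[k] L)] {n : ℕ} (x : Fin n → K) (y : Fin n → L)
    (hx : AlgebraicIndependent k x) (hy : AlgebraicIndependent k y) :
    (n : WithBot ℕ∞) ≤ ringKrullDim (K ⊗[k] L) := by
  obtain ⟨M, hM, hMx⟩ := exists_prime k K L x y hx hy
  let g : MvPolynomial (Fin n) K →+* K ⊗[k] L :=
    (Algebra.TensorProduct.lTensor (S := K) K
      (MvPolynomial.aeval y : MvPolynomial (Fin n) k →ₐ[k] L)).toRingHom.comp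
      (MvPolynomial.algebraTensorAlgEquiv (σ := Fin n) k K).symm.toRingEquiv.toRingHom
  have hg : g.Flat := RingHom.Flat.comp (RingHom.Flat.of_bijective (RingEquiv.bijective _))
    (RingHom.Flat.lTensor K (flat_aeval_s7 k L y hy))
  have hgX : ∀ i, g (MvPolynomial.X i) = 1 ⊗ₜ y i := by
    intro i
    simp [g]
  have hgC : ∀ c, g (MvPolynomial.C c) = c ⊗ₜ 1 := by
    intro c
    have : (MvPolynomial.algebraTensorAlgEquiv (σ := Fin n) k K).symm (MvPolynomial.C c) = c ⊗ₜ 1 := by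
      rw [AlgEquiv.symm_apply_eq]; simp [MvPolynomial.smul_eq_C_mul]
    simp [g, this]
  algebraize [g]
  have hle : RingHom.ker (MvPolynomial.aeval x : MvPolynomial (Fin n) K →ₐ[K] K) ≤
      M.under (MvPolynomial (Fin n) K) := by
    intro p hp
    have h1 : (Ideal.Quotient.mk M).comp g = ((Ideal.Quotient.mk M).comp 
      (Algebra.TensorProduct.includeLeft (R := k) (S := k) (A := K) (B := L)).toRingHom).comp
        (MvPolynomial.aeval x : MvPolynomial (Fin n) K →ₐ[K] K).toRingHom := by
      ext i
      · simp [hgC]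
      · simp only [RingHom.comp_apply, hgX]
        symm
        simp only [AlgHom.toRingHom_eq_coe, RingHom.coe_coe, MvPolynomial.aeval_X]
        rw [Ideal.Quotient.eq]
        exact hMx i
    have h2 := congrArg (fun h => h p) h1
    simp only [RingHom.comp_apply] at h2
    rw [RingHom.mem_ker] at hp
    have h3 : (MvPolynomial.aeval x : MvPolynomial (Fin n) K →ₐ[K] K).toRingHom p = 0 := hp
    rw [h3, map_zero, map_zero] at h2
    rw [Ideal.under_def, Ideal.mem_comap]
    exact Ideal.Quotient.eq_zero_iff_mem.mp h2
  have h1 := (height_ker_ge K x).trans (Ideal.height_mono hle)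
  have h2 := Ideal.height_eq_height_add_of_liesOver_of_hasGoingDown
    (M.under (MvPolynomial (Fin n) K)) M
  have h3 : (n : ℕ∞) ≤ M.height := by
    rw [h2]; exact h1.trans le_self_add
  exact le_trans (by exact_mod_cast h3) (Ideal.height_le_ringKrullDim_of_ne_top hM.ne_top)

theorem sharp [IsNoetherianRing (K ⊗[k] L)] :
    ringKrullDim (K ⊗[k] L) = ((min (trdeg' k K) (trdeg' k L) : ℕ∞) : WithBot ℕ∞) := by
  apply le_antisymm
  · have h1 := sharp_upper k K L
    have h2 := sharp_upper k L K
    rw [ringKrullDim_eq_of_ringEquiv (Algebra.TensorProduct.comm k L K).toRingEquiv] at h2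
    rw [WithBot.coe_min]
    exact le_min h1 h2
  · rw [← Ideal.sup_isPrime_height_eq_ringKrullDim, WithBot.coe_le_coe]
    refine ENat.forall_natCast_le_iff_le.mp ?_
    intro n hn
    obtain ⟨x, hx⟩ := exists_indep k K n (hn.trans (min_le_left _ _))
    obtain ⟨y, hy⟩ := exists_indep k L n (hn.trans (min_le_right _ _))
    have := sharp_lower_aux k K L x y hx hy
    rw [← Ideal.sup_isPrime_height_eq_ringKrullDim] at this
    exact_mod_cast this
end sharp


lemma Good_s7.exists_quot {R E R' : Type*} [CommRing R] [CommRing E] [CommRing R']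
    {φ : R →+* E} {r : Ideal R} (h : Good_s7 φ r) (π : R →+* R') (hπ : Function.Surjective π)
    (J : Ideal E) (hJ : J = (RingHom.ker π).map φ) :
    ∃ φ' : R' →+* E ⧸ J, (∀ x, φ' (π x) = Ideal.Quotient.mk J (φ x)) ∧ Good_s7 φ' (r.map π) := by
  have hk : RingHom.ker π ≤ RingHom.ker ((Ideal.Quotient.mk J).comp φ) := by
    intro x hx
    rw [RingHom.mem_ker, RingHom.comp_apply, Ideal.Quotient.eq_zero_iff_mem, hJ]
    exact Ideal.mem_map_of_mem _ hx
  have hc : ∀ x, RingHom.liftOfSurjective π hπ ⟨_, hk⟩ (π x) = Ideal.Quotient.mk J (φ x) :=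
    fun x => RingHom.liftOfRightInverse_comp_apply π _ _ ⟨_, hk⟩ x
  refine ⟨RingHom.liftOfSurjective π hπ ⟨_, hk⟩, hc, ?_⟩
  refine h.quot π hπ (Ideal.Quotient.mk J) Ideal.Quotient.mk_surjective _ hc ?_
  rw [Ideal.mk_ker, hJ]

lemma step_quot {k A B E : Type*} [Field k] [CommRing A] [CommRing B] [Algebra k A] [Algebra k B]
    [CommRing E] [Algebra A E] (m M : Ideal A) (hm : m ≤ M) (n : Ideal B) (φ : A ⊗[k] B →+* E)
    (hφ : ∀ a, φ (a ⊗ₜ 1) = algebraMap A E a) (h : Good_s7 φ (tRad k m n)) :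
    ∃ φ' : B ⊗[k] (A ⧸ M) →+* E ⧸ M.map (algebraMap A E),
      (∀ b, φ' (b ⊗ₜ 1) = Ideal.Quotient.mk _ (φ (1 ⊗ₜ b))) ∧ Good_s7 φ' (tRad k n ⊥) := by
  let f := Algebra.TensorProduct.map (Ideal.Quotient.mkₐ k M) (AlgHom.id k B)
  let e := Algebra.TensorProduct.comm k (A ⧸ M) B
  let π : A ⊗[k] B →+* B ⊗[k] (A ⧸ M) := (e.toAlgHom.comp f).toRingHom
  have hf : Function.Surjective f :=
    TensorProduct.map_surjective (Ideal.Quotient.mkₐ_surjective k M) Function.surjective_id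
  have hπ : Function.Surjective π := e.surjective.comp hf
  have hker : RingHom.ker π =
      M.map (Algebra.TensorProduct.includeLeft (R := k) (S := k) (A := A) (B := B)) := by
    have h1 : RingHom.ker π = RingHom.ker f := by
      ext x
      rw [RingHom.mem_ker, RingHom.mem_ker]
      change e (f x) = 0 ↔ _
      exact e.map_eq_zero_iff
    rw [h1, Algebra.TensorProduct.map_ker _ _ (Ideal.Quotient.mkₐ_surjective k M)
      Function.surjective_id]
    have h2 : RingHom.ker (AlgHom.id k B) = ⊥ := by
      ext x; simp [RingHom.mem_ker]
    have h3 : RingHom.ker (Ideal.Quotient.mkₐ k M) = M := by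
      ext x
      exact Ideal.Quotient.eq_zero_iff_mem
    rw [h2, Ideal.map_bot, sup_bot_eq, h3]
  have hJ : M.map (algebraMap A E) = (RingHom.ker π).map φ := by
    rw [hker]
    apply le_antisymm
    · rw [Ideal.map_le_iff_le_comap]
      intro a ha
      rw [Ideal.mem_comap, ← hφ]
      exact Ideal.mem_map_of_mem φ (Ideal.mem_map_of_mem
        (Algebra.TensorProduct.includeLeft (R := k) (S := k) (A := A) (B := B)) ha)
    · rw [Ideal.map_le_iff_le_comap, Ideal.map_le_iff_le_comap]
      intro a ha
      rw [Ideal.mem_comap, Ideal.mem_comap, Algebra.TensorProduct.includeLeft_apply, hφ]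
      exact Ideal.mem_map_of_mem _ ha
  obtain ⟨φ', h1, h2⟩ := h.exists_quot π hπ _ hJ
  refine ⟨φ', fun b => ?_, ?_⟩
  · rw [← h1]; congr 1
  · convert h2 using 1
    have hL : ((m.map (Algebra.TensorProduct.includeLeft (R := k) (S := k) (A := A) (B := B))).map π)
        = ⊥ := by
      rw [eq_bot_iff, Ideal.map_le_iff_le_comap, Ideal.map_le_iff_le_comap]
      intro a ha
      rw [Ideal.mem_comap, Ideal.mem_comap, Ideal.mem_bot]
      change (1 : B) ⊗ₜ[k] (Ideal.Quotient.mk M a) = 0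
      rw [Ideal.Quotient.eq_zero_iff_mem.mpr (hm ha), TensorProduct.tmul_zero]
    have hR : ((n.map (Algebra.TensorProduct.includeRight (R := k) (A := A) (B := B))).map π)
        = n.map (Algebra.TensorProduct.includeLeft (R := k) (S := k) (A := B) (B := A ⧸ M)) := by
      have : ∀ b : B, π ((1 : A) ⊗ₜ b) = b ⊗ₜ 1 := fun b => rfl
      apply le_antisymm
      · rw [Ideal.map_le_iff_le_comap, Ideal.map_le_iff_le_comap]
        intro b hb
        exact Ideal.mem_map_of_mem
          (Algebra.TensorProduct.includeLeft (R := k) (S := k) (A := B) (B := A ⧸ M)) hb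
      · rw [Ideal.map_le_iff_le_comap]
        intro b hb
        exact Ideal.mem_map_of_mem π (Ideal.mem_map_of_mem
          (Algebra.TensorProduct.includeRight (R := k) (A := A) (B := B)) hb)
    rw [Ideal.map_sup, hL, hR, bot_sup_eq, tRad, Ideal.map_bot, sup_bot_eq]

lemma height_step {A E : Type*} [CommRing A] [IsNoetherianRing A] [CommRing E] [IsNoetherianRing E] [Algebra A E]
    [Module.Flat A E] (M : Ideal A) [M.IsMaximal] (Q : Ideal (E ⧸ M.map (algebraMap A E)))
    [Q.IsPrime] :
    (Q.comap (Ideal.Quotient.mk (M.map (algebraMap A E)))).height = M.height + Q.height := by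
  let P := Q.comap (Ideal.Quotient.mk (M.map (algebraMap A E)))
  have hP : P.IsPrime := Ideal.comap_isPrime _ _
  have hle : M ≤ P.under A := by
    intro a ha
    rw [Ideal.under_def, Ideal.mem_comap, Ideal.mem_comap,
      Ideal.Quotient.eq_zero_iff_mem.mpr (Ideal.mem_map_of_mem _ ha)]
    exact Q.zero_mem
  have hne : P.under A ≠ ⊤ := (Ideal.comap_isPrime (algebraMap A E) P).ne_top
  have : P.LiesOver M := ⟨Ideal.IsMaximal.eq_of_le ‹_› hne hle⟩
  have := Ideal.height_eq_height_add_of_liesOver_of_hasGoingDown M P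
  rw [Ideal.map_comap_of_surjective _ Ideal.Quotient.mk_surjective] at this
  exact this

lemma sharp' {k K L : Type*} [Field k] [CommRing K] [CommRing L] [Algebra k K] [Algebra k L]
    (hK : IsField K) (hL : IsField L) [IsNoetherianRing (K ⊗[k] L)] :
    ringKrullDim (K ⊗[k] L) = ((min (trdeg' k K) (trdeg' k L) : ℕ∞) : WithBot ℕ∞) := by
  let _ := hK.toField
  let _ := hL.toField
  exact sharp k K L

lemma exists_eq_of_jacobson_le {A : Type*} [CommRing A] [Finite (MaximalSpectrum A)] (P : Ideal A)
    [P.IsPrime] (h : (⊥ : Ideal A).jacobson ≤ P) : ∃ M : MaximalSpectrum A, M.asIdeal = P := by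
  have := Fintype.ofFinite (MaximalSpectrum A)
  have h1 : (Finset.univ : Finset (MaximalSpectrum A)).inf (fun M => M.asIdeal) ≤ P := by
    refine le_trans ?_ h
    rw [Ideal.jacobson_bot, Ring.jacobson_eq_sInf_isMaximal]
    refine le_sInf fun I hI => ?_
    exact Finset.inf_le (f := fun M : MaximalSpectrum A => M.asIdeal) (Finset.mem_univ ⟨I, hI⟩)
  obtain ⟨M, -, hM⟩ := (Ideal.IsPrime.inf_le' ‹_›).mp h1
  exact ⟨M, M.2.eq_of_le (Ideal.IsPrime.ne_top ‹_›) hM⟩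

/-- The analysis for one pair of maximal ideals. -/
lemma pair_analysis {k A B E : Type*} [Field k] [CommRing A] [CommRing B] [Algebra k A]
    [Algebra k B] [IsNoetherianRing A] [IsNoetherianRing B]
    [CommRing E] [IsNoetherianRing E] [Algebra A E] [Algebra B E] (m M : Ideal A) (hm : m ≤ M)
    (n N : Ideal B) (hn : n ≤ N) (hM : M.IsMaximal) (hN : N.IsMaximal)
    (φ : A ⊗[k] B →+* E)
    (hφA : ∀ a, φ (a ⊗ₜ 1) = algebraMap A E a) (hφB : ∀ b, φ (1 ⊗ₜ b) = algebraMap B E b)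
    (h : Good_s7 φ (tRad k m n)) :
    (∀ P : Ideal E, P.IsPrime → M.map (algebraMap A E) ≤ P → N.map (algebraMap B E) ≤ P →
      (P.height : WithBot ℕ∞) ≤
        (M.height + N.height + min (trdeg' k (A ⧸ M)) (trdeg' k (B ⧸ N)) : ℕ∞)) ∧
    ((M.height + N.height + min (trdeg' k (A ⧸ M)) (trdeg' k (B ⧸ N)) : ℕ∞) : WithBot ℕ∞) ≤
      ringKrullDim E := by
  have hflat : Module.Flat A E := flat_of_good m n φ hφA h
  obtain ⟨φ₁, hφ₁, h₁⟩ := step_quot m M hm n φ hφA h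
  have hφ₁' : ∀ b, φ₁ (b ⊗ₜ 1) = algebraMap B (E ⧸ M.map (algebraMap A E)) b := by
    intro b; rw [hφ₁, hφB]; rfl
  have hflat₁ : Module.Flat B (E ⧸ M.map (algebraMap A E)) := flat_of_good n ⊥ φ₁ hφ₁' h₁
  obtain ⟨φ₂, -, h₂⟩ := step_quot n N hn ⊥ φ₁ hφ₁' h₁
  have hbot : tRad k (⊥ : Ideal (A ⧸ M)) (⊥ : Ideal (B ⧸ N)) = ⊥ := by
    simp [tRad, Ideal.map_bot]
  rw [hbot] at h₂
  let e := RingEquiv.ofBijective φ₂ h₂.bijective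
  have hnoeth : IsNoetherianRing ((A ⧸ M) ⊗[k] (B ⧸ N)) := isNoetherianRing_of_ringEquiv _ e.symm
  have hdim := sharp' (k := k) ((Ideal.Quotient.maximal_ideal_iff_isField_quotient M).mp hM)
    ((Ideal.Quotient.maximal_ideal_iff_isField_quotient N).mp hN)
  rw [ringKrullDim_eq_of_ringEquiv e] at hdim
  set I₁ := M.map (algebraMap A E) with hI₁
  set I₂ := N.map (algebraMap B (E ⧸ I₁)) with hI₂
  have hht : ∀ Q : Ideal ((E ⧸ I₁) ⧸ I₂), Q.IsPrime →
      ((Q.comap (Ideal.Quotient.mk I₂)).comap (Ideal.Quotient.mk I₁)).height =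
        M.height + N.height + Q.height := by
    intro Q hQ
    rw [height_step M, height_step N, add_assoc]
  constructor
  · intro P hP hMP hNP
    have hP1 : (P.map (Ideal.Quotient.mk I₁)).IsPrime :=
      Ideal.map_isPrime_of_surjective Ideal.Quotient.mk_surjective (by rw [Ideal.mk_ker]; exact hMP)
    have hc1 : (P.map (Ideal.Quotient.mk I₁)).comap (Ideal.Quotient.mk I₁) = P := by
      rw [Ideal.comap_map_of_surjective _ Ideal.Quotient.mk_surjective, ← RingHom.ker_eq_comap_bot,
        Ideal.mk_ker, sup_eq_left]
      exact hMP
    have hle2 : I₂ ≤ P.map (Ideal.Quotient.mk I₁) := by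
      rw [hI₂, Ideal.map_le_iff_le_comap]
      intro b hb
      exact Ideal.mem_map_of_mem (Ideal.Quotient.mk I₁) (hNP (Ideal.mem_map_of_mem _ hb))
    let P1 := P.map (Ideal.Quotient.mk I₁)
    have hP2 : (P1.map (Ideal.Quotient.mk I₂)).IsPrime :=
      Ideal.map_isPrime_of_surjective Ideal.Quotient.mk_surjective (by rw [Ideal.mk_ker]; exact hle2)
    have hc2 : (P1.map (Ideal.Quotient.mk I₂)).comap (Ideal.Quotient.mk I₂) = P1 := by
      rw [Ideal.comap_map_of_surjective _ Ideal.Quotient.mk_surjective, ← RingHom.ker_eq_comap_bot,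
        Ideal.mk_ker, sup_eq_left]
      exact hle2
    have h3 := hht _ hP2
    rw [hc2, hc1] at h3
    have h4 := Ideal.height_le_ringKrullDim_of_ne_top hP2.ne_top
    rw [hdim, WithBot.coe_le_coe] at h4
    rw [h3, WithBot.coe_le_coe]
    gcongr
  · have : Nontrivial ((E ⧸ I₁) ⧸ I₂) := by
      by_contra hcon
      rw [not_nontrivial_iff_subsingleton] at hcon
      rw [ringKrullDim_eq_bot_of_subsingleton] at hdim
      exact WithBot.bot_ne_coe hdim
    rw [← Ideal.sup_isPrime_height_eq_ringKrullDim, WithBot.coe_inj, iSup_subtype'] at hdim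
    obtain ⟨Q₀, hQ₀⟩ := Ideal.exists_maximal ((E ⧸ I₁) ⧸ I₂)
    have : Nonempty {Q : Ideal ((E ⧸ I₁) ⧸ I₂) // Q.IsPrime} := ⟨⟨Q₀, hQ₀.isPrime⟩⟩
    have : Nontrivial E := by
      have h1 : Function.Surjective ((Ideal.Quotient.mk I₂).comp (Ideal.Quotient.mk I₁)) :=
        Ideal.Quotient.mk_surjective.comp Ideal.Quotient.mk_surjective
      exact h1.nontrivial
    rw [← hdim, ENat.add_iSup, ← Ideal.sup_isPrime_height_eq_ringKrullDim, WithBot.coe_le_coe]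
    refine iSup_le fun Q => ?_
    rw [← hht Q.1 Q.2]
    have := Q.2
    exact le_iSup₂_of_le _ (Ideal.comap_isPrime _ _) le_rfl
  
lemma jac_le {R : Type*} [CommRing R] (M : MaximalSpectrum R) :
    (⊥ : Ideal R).jacobson ≤ M.asIdeal :=
  sInf_le ⟨bot_le, M.2⟩

lemma main_general {k A B E : Type*} [Field k] [CommRing A] [CommRing B] [Algebra k A]
    [Algebra k B] [IsNoetherianRing A] [IsNoetherianRing B]
    [Finite (MaximalSpectrum A)] [Finite (MaximalSpectrum B)]
    [CommRing E] [IsNoetherianRing E] [Algebra A E] [Algebra B E]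
    (φ : A ⊗[k] B →+* E)
    (hφA : ∀ a, φ (a ⊗ₜ 1) = algebraMap A E a) (hφB : ∀ b, φ (1 ⊗ₜ b) = algebraMap B E b)
    (h : Good_s7 φ (tRad k ((⊥ : Ideal A).jacobson) ((⊥ : Ideal B).jacobson))) :
    ringKrullDim E =
      ⨆ pq : MaximalSpectrum A × MaximalSpectrum B,
        (primeHeight pq.1.asIdeal + primeHeight pq.2.asIdeal +
          (min (trdeg' k (A ⧸ pq.1.asIdeal)) (trdeg' k (B ⧸ pq.2.asIdeal)) : ℕ∞)) := by
  have hH : ∀ pq : MaximalSpectrum A × MaximalSpectrum B,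
      (primeHeight pq.1.asIdeal + primeHeight pq.2.asIdeal +
          (min (trdeg' k (A ⧸ pq.1.asIdeal)) (trdeg' k (B ⧸ pq.2.asIdeal)) : ℕ∞)) =
      ((pq.1.asIdeal.height + pq.2.asIdeal.height +
        min (trdeg' k (A ⧸ pq.1.asIdeal)) (trdeg' k (B ⧸ pq.2.asIdeal)) : ℕ∞) : WithBot ℕ∞) := by
    intro pq
    rw [primeHeight, primeHeight, IsLocalization.AtPrime.ringKrullDim_eq_height pq.1.asIdeal,
      IsLocalization.AtPrime.ringKrullDim_eq_height pq.2.asIdeal]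
    rfl
  apply le_antisymm
  · rw [ringKrullDim_le_iff_isMaximal_height_le]
    intro P hP
    have := hP.isPrime
    have hrP : (tRad k ((⊥ : Ideal A).jacobson) ((⊥ : Ideal B).jacobson)).map φ ≤ P :=
      h.jac.trans (jac_le ⟨P, hP⟩)
    have hA : (⊥ : Ideal A).jacobson ≤ P.comap (algebraMap A E) := by
      intro a ha
      rw [Ideal.mem_comap, ← hφA]
      exact hrP (Ideal.mem_map_of_mem φ (Ideal.mem_sup_left (Ideal.mem_map_of_mem 
        (Algebra.TensorProduct.includeLeft (R := k) (S := k) (A := A) (B := B)) ha)))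
    have hB : (⊥ : Ideal B).jacobson ≤ P.comap (algebraMap B E) := by
      intro a ha
      rw [Ideal.mem_comap, ← hφB]
      exact hrP (Ideal.mem_map_of_mem φ (Ideal.mem_sup_right (Ideal.mem_map_of_mem 
        (Algebra.TensorProduct.includeRight (R := k) (A := A) (B := B)) ha)))
    obtain ⟨M, hM⟩ := exists_eq_of_jacobson_le _ hA
    obtain ⟨N, hN⟩ := exists_eq_of_jacobson_le _ hB
    refine le_trans ?_ (le_iSup _ (M, N))
    rw [hH]
    exact (pair_analysis _ M.asIdeal (jac_le M) _ N.asIdeal (jac_le N) M.2 N.2 φ hφA hφB h).1 P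
      hP.isPrime (Ideal.map_le_iff_le_comap.mpr hM.le) (Ideal.map_le_iff_le_comap.mpr hN.le)
  · refine iSup_le fun pq => ?_
    rw [hH]
    exact (pair_analysis _ _ (jac_le pq.1) _ _ (jac_le pq.2) pq.1.2 pq.2.2 φ hφA hφB h).2


/-- Let `A` and `B` be two semilocal Noetherian commutative rings
containing a field `k` such that `A ⊗̂[k] B` is Noetherian, with maximal ideals
`m_1, …, m_p` of `A` and `n_1, …, n_q` of `B`. Then
`dim (A ⊗̂[k] B) = sup_{r,s} { ht m_r + ht n_s + min (trdeg_k A/m_r, trdeg_k B/n_s) }`. -/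
theorem ringKrullDim_completedTensor (k A B : Type*) [Field k]
    [CommRing A] [CommRing B] [IsNoetherianRing A] [IsNoetherianRing B]
    [Algebra k A] [Algebra k B]
    [Finite (MaximalSpectrum A)] [Finite (MaximalSpectrum B)]
    (hE : IsNoetherianRing (CompletedTensor k A B)) :
    ringKrullDim (CompletedTensor k A B) =
      ⨆ pq : MaximalSpectrum A × MaximalSpectrum B,
        (primeHeight pq.1.asIdeal + primeHeight pq.2.asIdeal +
          (min (trdeg' k (A ⧸ pq.1.asIdeal)) (trdeg' k (B ⧸ pq.2.asIdeal)) : ℕ∞)) := by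
  have hFG : (tensorRadical k A B).FG :=
    Submodule.FG.sup (Ideal.FG.map (IsNoetherian.noetherian _) _)
      (Ideal.FG.map (IsNoetherian.noetherian _) _)
  have hgood := good_adic _ hFG
  let _ : Algebra B (CompletedTensor k A B) :=
    ((algebraMap (A ⊗[k] B) (CompletedTensor k A B)).comp
      (Algebra.TensorProduct.includeRight (R := k) (A := A) (B := B)).toRingHom).toAlgebra
  let _ : Algebra A (CompletedTensor k A B) :=
    ((algebraMap (A ⊗[k] B) (CompletedTensor k A B)).comp
      (Algebra.TensorProduct.includeLeft (R := k) (S := k) (A := A) (B := B)).toRingHom).toAlgebra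
  exact main_general (algebraMap (A ⊗[k] B) (CompletedTensor k A B)) (fun _ => rfl) (fun _ => rfl)
    hgood
end

section
/- Let A and B be two semilocal Noetherian commutative rings containing a field k such that the completed tensor product A⊗̂_k B is Noetherian. If for every maximal ideal m_r of A and every maximal ideal n_s of B at least one of the residue field extensions A/m_r or B/n_s is algebraic over k, then the Krull dimension of A⊗̂_k B equals dim(A) + dim(B). -/
open TensorProduct

/-! ### Generic facts on a ring map `φ : C → E` that looks like an `r`-adic completion -/

/-- `φ : C → E` looks like an `r`-adic completion. -/
structure LikeCompletion {C E : Type*} [CommRing C] [CommRing E] (φ : C →+* E) (r : Ideal C) :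
    Prop where
  jac : r.map φ ≤ (⊥ : Ideal E).jacobson
  inj : ∀ N c, φ c ∈ (r ^ N).map φ → c ∈ r ^ N
  surj : ∀ N x, ∃ c, x - φ c ∈ (r ^ N).map φ

theorem likeCompletion_adic {C : Type*} [CommRing C] (r : Ideal C) (hr : r.FG) :
    LikeCompletion (algebraMap C (AdicCompletion r C)) r where
  jac := by
    have := AdicCompletion.isAdicComplete_self r hr
    exact IsAdicComplete.le_jacobson_bot _
  inj N c hc := by
    have h : (r ^ N).map (algebraMap C (AdicCompletion r C)) ≤
        RingHom.ker (AdicCompletion.evalₐ r N).toRingHom := by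
      rw [Ideal.map_le_iff_le_comap]
      intro x hx
      rw [Ideal.mem_comap, RingHom.mem_ker]
      change AdicCompletion.evalₐ r N (algebraMap C _ x) = 0
      rw [AlgHom.commutes]
      exact Ideal.Quotient.eq_zero_iff_mem.mpr hx
    have := h hc
    rw [RingHom.mem_ker] at this
    change AdicCompletion.evalₐ r N (algebraMap C _ c) = 0 at this
    rw [AlgHom.commutes] at this
    exact Ideal.Quotient.eq_zero_iff_mem.mp this
  surj N x := by
    obtain ⟨c, hc⟩ := Ideal.Quotient.mk_surjective (AdicCompletion.evalₐ r N x)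
    refine ⟨c, ?_⟩
    have h0 : AdicCompletion.evalₐ r N (x - algebraMap C _ c) = 0 := by
      rw [map_sub, AlgHom.commutes, ← hc]
      exact sub_self _
    have h1 : (x - algebraMap C (AdicCompletion r C) c) ∈ (AdicCompletion.eval r C N).ker := by
      rw [LinearMap.mem_ker]
      rw [← AdicCompletion.factor_evalₐ_eq_eval r _ (by simp), h0, map_zero]
    rw [← AdicCompletion.pow_smul_top_eq_ker_eval hr] at h1
    simpa using h1

section
variable {C E : Type*} [CommRing C] [CommRing E] {φ : C →+* E} {r : Ideal C}

theorem LikeCompletion.inj' (h : LikeCompletion φ r) (K : Ideal C) (N : ℕ) (c : C)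
    (hc : φ c ∈ K.map φ ⊔ (r ^ N).map φ) : c ∈ K ⊔ r ^ N := by
  let ψ := (Ideal.Quotient.mk ((r ^ N).map φ)).comp φ
  have hψ : Function.Surjective ψ := by
    intro y
    obtain ⟨x, rfl⟩ := Ideal.Quotient.mk_surjective y
    obtain ⟨c, hc⟩ := h.surj N x
    exact ⟨c, (Ideal.Quotient.eq.mpr hc).symm⟩
  have h1 : ψ c ∈ K.map ψ := by
    have := Ideal.mem_map_of_mem (Ideal.Quotient.mk ((r ^ N).map φ)) hc
    rw [Ideal.map_sup, Ideal.map_quotient_self, sup_bot_eq, Ideal.map_map] at this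
    exact this
  obtain ⟨k, hk, hkc⟩ := (Ideal.mem_map_iff_of_surjective ψ hψ).mp h1
  have h2 : φ (c - k) ∈ (r ^ N).map φ := by
    rw [map_sub]
    exact Ideal.Quotient.eq.mp hkc.symm
  have h3 := h.inj _ _ h2
  have : c = k + (c - k) := by ring
  rw [this]
  exact Ideal.add_mem _ (Ideal.mem_sup_left hk) (Ideal.mem_sup_right h3)

theorem LikeCompletion.closed [IsNoetherianRing E] (h : LikeCompletion φ r) (K : Ideal E) (x : E)
    (hx : ∀ N, x ∈ K ⊔ (r ^ N).map φ) : x ∈ K := by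
  have h1 := Ideal.iInf_pow_smul_eq_bot_of_le_jacobson (r.map φ) (M := E ⧸ K) h.jac
  have h2 : (Submodule.Quotient.mk x : E ⧸ K) ∈
      (⨅ i : ℕ, (r.map φ) ^ i • ⊤ : Submodule E (E ⧸ K)) := by
    rw [Submodule.mem_iInf]
    intro i
    obtain ⟨a, ha, b, hb, rfl⟩ := Submodule.mem_sup.mp (hx i)
    rw [Ideal.map_pow] at hb
    have : (Submodule.Quotient.mk (a + b) : E ⧸ K) = b • (Submodule.Quotient.mk 1 : E ⧸ K) := by
      rw [← Submodule.Quotient.mk_smul, Submodule.Quotient.eq]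
      simpa using ha
    rw [this]
    exact Submodule.smul_mem_smul hb trivial
  rw [h1, Submodule.mem_bot, Submodule.Quotient.mk_eq_zero] at h2
  exact h2

theorem LikeCompletion.nzd [IsNoetherianRing E] (h : LikeCompletion φ r) (K : Ideal C) (t : C)
    (ht : ∀ N, ∃ N', ∀ c, t * c ∈ K ⊔ r ^ N' → c ∈ K ⊔ r ^ N) (x : E)
    (hx : φ t * x ∈ K.map φ) : x ∈ K.map φ := by
  refine h.closed _ _ fun N => ?_
  obtain ⟨N', hN'⟩ := ht N
  obtain ⟨c, hc⟩ := h.surj (max N N') x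
  have hc1 := Ideal.map_mono (f := φ) (Ideal.pow_le_pow_right (I := r) (le_max_left N N')) hc
  have hc2 := Ideal.map_mono (f := φ) (Ideal.pow_le_pow_right (I := r) (le_max_right N N')) hc
  have h1 : c ∈ K ⊔ r ^ N := by
    apply hN'
    apply h.inj'
    have : φ (t * c) = φ t * x + (- φ t) * (x - φ c) := by rw [map_mul]; ring
    rw [this]
    exact Ideal.add_mem _ (Ideal.mem_sup_left hx)
      (Ideal.mem_sup_right (Ideal.mul_mem_left _ _ hc2))
  have h2 := Ideal.mem_map_of_mem φ h1
  rw [Ideal.map_sup] at h2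
  have : x = φ c + (x - φ c) := by ring
  rw [this]
  exact Ideal.add_mem _ h2 (Ideal.mem_sup_right hc1)

theorem LikeCompletion.dim_step [IsNoetherianRing E] (h : LikeCompletion φ r) (K K' : Ideal C)
    (hK : K ≤ K') (t : C) (htK : t ∈ K')
    (ht : ∀ N, ∃ N', ∀ c, t * c ∈ K ⊔ r ^ N' → c ∈ K ⊔ r ^ N) :
    ringKrullDim (E ⧸ K'.map φ) + 1 ≤ ringKrullDim (E ⧸ K.map φ) := by
  have hle := Ideal.map_mono (f := φ) hK
  refine ringKrullDim_succ_le_of_surjective (Ideal.Quotient.factor hle)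
    (Ideal.Quotient.factor_surjective hle) (r := Ideal.Quotient.mk _ (φ t)) ?_ ?_
  · rw [mem_nonZeroDivisors_iff_right]
    intro y hy
    obtain ⟨x, rfl⟩ := Ideal.Quotient.mk_surjective y
    rw [← map_mul, Ideal.Quotient.eq_zero_iff_mem, mul_comm] at hy
    exact Ideal.Quotient.eq_zero_iff_mem.mpr (h.nzd K t ht x hy)
  · rw [Ideal.Quotient.factor_mk]
    exact Ideal.Quotient.eq_zero_iff_mem.mpr (Ideal.mem_map_of_mem _ htK)

theorem LikeCompletion.nontrivial_quot (h : LikeCompletion φ r) (K : Ideal C)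
    (hK : K ⊔ r ≠ ⊤) : Nontrivial (E ⧸ K.map φ) := by
  rw [Ideal.Quotient.nontrivial_iff]
  intro htop
  apply hK
  rw [Ideal.eq_top_iff_one]
  have := h.inj' K 1 1 (by rw [htop]; simp)
  simpa using this

end

/-! ### Artin-Rees and colon ideals -/

theorem artinRees_colon {A : Type*} [CommRing A] [IsNoetherianRing A] (m P : Ideal A)
    [P.IsPrime] (a : A) (ha : a ∉ P) :
    ∃ n₀ : ℕ, ∀ N x, a * x ∈ P ⊔ m ^ (N + n₀) → x ∈ P ⊔ m ^ N := by
  let f := Ideal.Quotient.mk P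
  obtain ⟨k, hk⟩ := Ideal.exists_pow_inf_eq_pow_smul (m.map f) (Ideal.span {f a})
  refine ⟨k, fun N x hx => ?_⟩
  have h1 : f (a * x) ∈ (m.map f) ^ (N + k) • ⊤ ⊓ Ideal.span {f a} := by
    refine ⟨?_, ?_⟩
    · have := Ideal.mem_map_of_mem f hx
      rw [Ideal.map_sup, Ideal.map_quotient_self, bot_sup_eq, Ideal.map_pow] at this
      simpa using this
    · rw [map_mul]; exact Ideal.mul_mem_right _ _ (Ideal.mem_span_singleton_self _)
  rw [hk _ (by omega), Nat.add_sub_cancel] at h1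
  have h2 : f (a * x) ∈ (m.map f) ^ N * Ideal.span {f a} := by
    exact Ideal.mul_mono_right inf_le_right h1
  obtain ⟨z, hz, hza⟩ := Ideal.mem_mul_span_singleton.mp h2
  have ha' : f a ≠ 0 := fun h => ha (Ideal.Quotient.eq_zero_iff_mem.mp h)
  have hzx : z = f x := by
    apply mul_right_cancel₀ ha'
    rw [hza, map_mul, mul_comm]
  rw [hzx, ← Ideal.map_pow] at hz
  have := Ideal.mem_comap.mpr hz
  rw [Ideal.comap_map_of_surjective' _ Ideal.Quotient.mk_surjective, Ideal.mk_ker, sup_comm] at this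
  exact this

/-! ### Ideals `U ⊗ B + A ⊗ V` -/

section tI
variable (k : Type*) {A B : Type*} [Field k] [CommRing A] [CommRing B]
  [Algebra k A] [Algebra k B]

/-- The ideal `U ⊗ B + A ⊗ V`. -/
noncomputable def tI (U : Ideal A) (V : Ideal B) : Ideal (A ⊗[k] B) :=
  Ideal.map (Algebra.TensorProduct.includeLeft (R := k) (S := k) (A := A) (B := B)) U ⊔
    Ideal.map (Algebra.TensorProduct.includeRight (R := k) (A := A) (B := B)) V

theorem tensorRadical_eq : tensorRadical k A B = tI k (⊥ : Ideal A).jacobson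
    (⊥ : Ideal B).jacobson := rfl

theorem tI_ker (U : Ideal A) (V : Ideal B) : RingHom.ker (Algebra.TensorProduct.map
    (Ideal.Quotient.mkₐ k U) (Ideal.Quotient.mkₐ k V)) = tI k U V := by
  rw [Algebra.TensorProduct.map_ker _ _ (Ideal.Quotient.mkₐ_surjective k U)
    (Ideal.Quotient.mkₐ_surjective k V)]
  have h1 : RingHom.ker (Ideal.Quotient.mkₐ k U) = U :=
    Ideal.ext fun x => Ideal.Quotient.eq_zero_iff_mem
  have h2 : RingHom.ker (Ideal.Quotient.mkₐ k V) = V :=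
    Ideal.ext fun x => Ideal.Quotient.eq_zero_iff_mem
  rw [h1, h2]
  rfl

theorem tI_mono {U U' : Ideal A} {V V' : Ideal B} (h : U ≤ U') (h' : V ≤ V') :
    tI k U V ≤ tI k U' V' :=
  sup_le_sup (Ideal.map_mono h) (Ideal.map_mono h')

theorem tI_sup (U U' : Ideal A) (V V' : Ideal B) :
    tI k (U ⊔ U') (V ⊔ V') = tI k U V ⊔ tI k U' V' := by
  simp only [tI, Ideal.map_sup]
  exact sup_sup_sup_comm _ _ _ _

theorem tI_pow_le (U : Ideal A) (V : Ideal B) (N : ℕ) :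
    (tI k U V) ^ (N + N) ≤ tI k (U ^ N) (V ^ N) := by
  simp only [tI, Ideal.map_pow]
  exact Ideal.sup_pow_add_le_pow_sup_pow

theorem le_tI_pow (U : Ideal A) (V : Ideal B) (N : ℕ) :
    tI k (U ^ N) (V ^ N) ≤ (tI k U V) ^ N := by
  simp only [tI, Ideal.map_pow]
  exact sup_le (Ideal.pow_right_mono le_sup_left _) (Ideal.pow_right_mono le_sup_right _)

theorem tI_fg [IsNoetherianRing A] [IsNoetherianRing B] (U : Ideal A) (V : Ideal B) :
    (tI k U V).FG :=
  Submodule.FG.sup (Ideal.FG.map (IsNoetherian.noetherian U) _)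
    (Ideal.FG.map (IsNoetherian.noetherian V) _)

theorem tI_ne_top {U : Ideal A} {V : Ideal B} (hU : U ≠ ⊤) (hV : V ≠ ⊤) : tI k U V ≠ ⊤ := by
  have := Ideal.Quotient.nontrivial_iff.mpr hU
  have := Ideal.Quotient.nontrivial_iff.mpr hV
  rw [← tI_ker]
  exact RingHom.ker_ne_top _

theorem tI_colon_left {U U' : Ideal A} {V : Ideal B} {a : A} (hU : ∀ x, a * x ∈ U → x ∈ U')
    (c : A ⊗[k] B) (hc : (a ⊗ₜ[k] (1 : B)) * c ∈ tI k U V) : c ∈ tI k U' V := by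
  let W : Ideal A := Submodule.comap (LinearMap.mulLeft A a) U
  have hW : W ≤ U' := fun x hx => hU x hx
  let ι : (A ⧸ W) →ₗ[A] (A ⧸ U) := Submodule.mapQ W U (LinearMap.mulLeft A a) le_rfl
  have hι : Function.Injective ι := by
    rw [← LinearMap.ker_eq_bot, LinearMap.ker_eq_bot']
    intro y hy
    obtain ⟨x, rfl⟩ := Ideal.Quotient.mk_surjective y
    exact Ideal.Quotient.eq_zero_iff_mem.mpr ((Submodule.Quotient.mk_eq_zero U).mp hy)
  let ιk : (A ⧸ W) →ₗ[k] (A ⧸ U) := ι.restrictScalars k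
  have hinj : Function.Injective (LinearMap.rTensor (B ⧸ V) ιk) :=
    Module.Flat.rTensor_preserves_injective_linearMap ιk hι
  apply tI_mono k hW le_rfl
  rw [← tI_ker, RingHom.mem_ker] at hc ⊢
  apply hinj
  rw [map_zero, ← hc]
  clear hc
  induction c using TensorProduct.induction_on with
  | zero => simp
  | add x y hx hy => rw [mul_add, map_add, map_add, map_add, hx, hy]
  | tmul x y =>
    rw [Algebra.TensorProduct.tmul_mul_tmul, one_mul, Algebra.TensorProduct.map_tmul,
      Algebra.TensorProduct.map_tmul, LinearMap.rTensor_tmul]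
    rfl

theorem tI_comm (U : Ideal A) (V : Ideal B) (c : A ⊗[k] B) (hc : c ∈ tI k U V) :
    Algebra.TensorProduct.comm k A B c ∈ tI k V U := by
  have := Ideal.mem_map_of_mem (Algebra.TensorProduct.comm k A B) hc
  refine (?_ : Ideal.map (Algebra.TensorProduct.comm k A B) (tI k U V) ≤ tI k V U) this
  rw [Ideal.map_le_iff_le_comap]
  refine sup_le ?_ ?_ <;> rw [Ideal.map_le_iff_le_comap] <;> intro x hx <;>
    simp only [Ideal.mem_comap]
  · exact Ideal.mem_sup_right (Ideal.mem_map_of_mem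
      (Algebra.TensorProduct.includeRight (R := k) (A := B) (B := A)) hx)
  · exact Ideal.mem_sup_left (Ideal.mem_map_of_mem
      (Algebra.TensorProduct.includeLeft (R := k) (S := k) (A := B) (B := A)) hx)

theorem tI_colon_right {U : Ideal A} {V V' : Ideal B} {b : B} (hV : ∀ x, b * x ∈ V → x ∈ V')
    (c : A ⊗[k] B) (hc : ((1 : A) ⊗ₜ[k] b) * c ∈ tI k U V) : c ∈ tI k U V' := by
  have h1 := tI_comm k _ _ _ hc
  rw [map_mul, Algebra.TensorProduct.comm_tmul] at h1
  have h2 := tI_comm k _ _ _ (tI_colon_left k hV _ h1)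
  have h3 : Algebra.TensorProduct.comm k B A (Algebra.TensorProduct.comm k A B c) = c :=
    (Algebra.TensorProduct.comm k A B).symm_apply_apply c
  rwa [h3] at h2

theorem tI_step_left [IsNoetherianRing A] (m : Ideal A) (n : Ideal B) (P : Ideal A) [P.IsPrime]
    (Q : Ideal B) (a : A) (ha : a ∉ P) (N : ℕ) : ∃ N', ∀ c : A ⊗[k] B,
      (a ⊗ₜ[k] (1 : B)) * c ∈ tI k P Q ⊔ (tI k m n) ^ N' → c ∈ tI k P Q ⊔ (tI k m n) ^ N := by
  obtain ⟨n₀, h⟩ := artinRees_colon m P a ha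
  refine ⟨(N + n₀) + (N + n₀), fun c hc => ?_⟩
  have h1 := sup_le_sup_left (tI_pow_le k m n (N + n₀)) (tI k P Q) hc
  rw [← tI_sup] at h1
  have h2 := tI_colon_left k (h N) c h1
  refine sup_le_sup_left (le_tI_pow k m n N) (tI k P Q) ?_
  rw [← tI_sup]
  exact tI_mono k le_rfl (sup_le_sup_left (Ideal.pow_le_pow_right (by omega)) _) h2

theorem tI_step_right [IsNoetherianRing B] (m : Ideal A) (n : Ideal B) (P : Ideal A)
    (Q : Ideal B) [Q.IsPrime] (b : B) (hb : b ∉ Q) (N : ℕ) : ∃ N', ∀ c : A ⊗[k] B,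
      ((1 : A) ⊗ₜ[k] b) * c ∈ tI k P Q ⊔ (tI k m n) ^ N' → c ∈ tI k P Q ⊔ (tI k m n) ^ N := by
  obtain ⟨n₀, h⟩ := artinRees_colon n Q b hb
  refine ⟨(N + n₀) + (N + n₀), fun c hc => ?_⟩
  have h1 := sup_le_sup_left (tI_pow_le k m n (N + n₀)) (tI k P Q) hc
  rw [← tI_sup] at h1
  have h2 := tI_colon_right k (h N) c h1
  refine sup_le_sup_left (le_tI_pow k m n N) (tI k P Q) ?_
  rw [← tI_sup]
  exact tI_mono k (sup_le_sup_left (Ideal.pow_le_pow_right (by omega)) _) le_rfl h2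

theorem mem_tI_left {U : Ideal A} (V : Ideal B) {a : A} (ha : a ∈ U) :
    a ⊗ₜ[k] (1 : B) ∈ tI k U V :=
  Ideal.mem_sup_left (Ideal.mem_map_of_mem
      (Algebra.TensorProduct.includeLeft (R := k) (S := k) (A := A) (B := B)) ha)

theorem mem_tI_right (U : Ideal A) {V : Ideal B} {b : B} (hb : b ∈ V) :
    (1 : A) ⊗ₜ[k] b ∈ tI k U V :=
  Ideal.mem_sup_right (Ideal.mem_map_of_mem
      (Algebra.TensorProduct.includeRight (R := k) (A := A) (B := B)) hb)

/-! ### Lower bound -/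

variable {E : Type*} [CommRing E] [IsNoetherianRing E] {φ : A ⊗[k] B →+* E}
  {m : Ideal A} {n : Ideal B}

theorem lower_left [IsNoetherianRing A] (h : LikeCompletion φ (tI k m n)) (Q : Ideal B)
    (p : LTSeries (PrimeSpectrum A)) :
    ringKrullDim (E ⧸ (tI k p.last.asIdeal Q).map φ) + p.length ≤
      ringKrullDim (E ⧸ (tI k p.head.asIdeal Q).map φ) := by
  induction p using RelSeries.inductionOn with
  | singleton x =>
    simp only [RelSeries.singleton_length, Nat.cast_zero, add_zero]
    exact le_rfl
  | cons p x hx ih =>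
    have hlt : x < p.head := hx
    obtain ⟨a, ha, ha'⟩ := SetLike.exists_of_lt (show x.asIdeal < p.head.asIdeal from hlt)
    have := h.dim_step (tI k x.asIdeal Q) (tI k p.head.asIdeal Q)
      (tI_mono k hlt.le le_rfl) _ (mem_tI_left k Q ha)
      (tI_step_left k m n x.asIdeal Q a ha')
    rw [RelSeries.last_cons, RelSeries.head_cons, RelSeries.cons_length]
    push_cast
    rw [← add_assoc]
    exact (add_le_add_left ih 1).trans this

theorem lower_right [IsNoetherianRing B] (h : LikeCompletion φ (tI k m n)) (P : Ideal A)
    (p : LTSeries (PrimeSpectrum B)) :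
    ringKrullDim (E ⧸ (tI k P p.last.asIdeal).map φ) + p.length ≤
      ringKrullDim (E ⧸ (tI k P p.head.asIdeal).map φ) := by
  induction p using RelSeries.inductionOn with
  | singleton x =>
    simp only [RelSeries.singleton_length, Nat.cast_zero, add_zero]
    exact le_rfl
  | cons p x hx ih =>
    have hlt : x < p.head := hx
    obtain ⟨a, ha, ha'⟩ := SetLike.exists_of_lt (show x.asIdeal < p.head.asIdeal from hlt)
    have := h.dim_step (tI k P x.asIdeal) (tI k P p.head.asIdeal)
      (tI_mono k le_rfl hlt.le) _ (mem_tI_right k P ha)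
      (tI_step_right k m n P x.asIdeal a ha')
    rw [RelSeries.last_cons, RelSeries.head_cons, RelSeries.cons_length]
    push_cast
    rw [← add_assoc]
    exact (add_le_add_left ih 1).trans this

theorem jacobson_sup_ne_top {R : Type*} [CommRing R] (P : Ideal R) (hP : P ≠ ⊤) :
    P ⊔ (⊥ : Ideal R).jacobson ≠ ⊤ := by
  obtain ⟨M, hM, hPM⟩ := Ideal.exists_le_maximal P hP
  intro htop
  apply hM.ne_top
  rw [eq_top_iff, ← htop]
  exact sup_le hPM (sInf_le ⟨bot_le, hM⟩)

theorem add_le_of_nat {x y z : WithBot ℕ∞} (hx : 0 ≤ x) (hy : 0 ≤ y)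
    (h : ∀ a b : ℕ, (a : WithBot ℕ∞) ≤ x → (b : WithBot ℕ∞) ≤ y →
      (a : WithBot ℕ∞) + b ≤ z) : x + y ≤ z := by
  have hz : 0 ≤ z := by simpa using h 0 0 (by simpa using hx) (by simpa using hy)
  lift x to ℕ∞ using (by rintro rfl; simp at hx)
  lift y to ℕ∞ using (by rintro rfl; simp at hy)
  lift z to ℕ∞ using (by rintro rfl; simp at hz)
  have h' : ∀ a b : ℕ, (a : ℕ∞) ≤ x → (b : ℕ∞) ≤ y → (a : ℕ∞) + b ≤ z := by
    intro a b ha hb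
    have := h a b (by exact_mod_cast ha) (by exact_mod_cast hb)
    exact_mod_cast this
  have key : x + y ≤ z := by
    induction x using ENat.recTopCoe with
    | top =>
      rw [top_add, top_le_iff, ENat.eq_top_iff_forall_ge]
      intro a; simpa using h' a 0 le_top (by simp)
    | coe x =>
    induction y using ENat.recTopCoe with
    | top =>
      rw [add_top, top_le_iff, ENat.eq_top_iff_forall_ge]
      intro a; simpa using h' 0 a (by simp) le_top
    | coe y => exact h' x y le_rfl le_rfl
  exact_mod_cast key

theorem lower_bound [Nontrivial A] [Nontrivial B] [IsNoetherianRing A] [IsNoetherianRing B]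
    (h : LikeCompletion φ (tI k (⊥ : Ideal A).jacobson (⊥ : Ideal B).jacobson)) :
    ringKrullDim A + ringKrullDim B ≤ ringKrullDim E := by
  refine add_le_of_nat ringKrullDim_nonneg_of_nontrivial ringKrullDim_nonneg_of_nontrivial
    fun a b ha hb => ?_
  obtain ⟨p, rfl⟩ := Order.le_krullDim_iff.mp ha
  obtain ⟨q, rfl⟩ := Order.le_krullDim_iff.mp hb
  have h1 := lower_left k h q.head.asIdeal p
  have h2 := lower_right k h p.last.asIdeal q
  have : Nontrivial (E ⧸ (tI k p.last.asIdeal q.last.asIdeal).map φ) := by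
    apply h.nontrivial_quot
    rw [← tI_sup]
    exact tI_ne_top k (jacobson_sup_ne_top _ p.last.isPrime.ne_top)
      (jacobson_sup_ne_top _ q.last.isPrime.ne_top)
  have h3 : 0 ≤ ringKrullDim (E ⧸ (tI k p.last.asIdeal q.last.asIdeal).map φ) :=
    ringKrullDim_nonneg_of_nontrivial
  have h4 := ringKrullDim_quotient_le ((tI k p.head.asIdeal q.head.asIdeal).map φ)
  calc (p.length : WithBot ℕ∞) + q.length = (0 + q.length) + p.length := by
        rw [zero_add, add_comm]
    _ ≤ _ := add_le_add_left (add_le_add_left h3 _) _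
    _ ≤ _ := add_le_add_left h2 _
    _ ≤ _ := h1
    _ ≤ _ := h4

end tI

/-! ### Upper bound -/

theorem exists_max_eq_of_jacobson_le {A : Type*} [CommRing A] [Finite (MaximalSpectrum A)]
    (p : Ideal A) [hp : p.IsPrime] (h : (⊥ : Ideal A).jacobson ≤ p) : p.IsMaximal := by
  have := Fintype.ofFinite (MaximalSpectrum A)
  have h1 : (Finset.univ : Finset (MaximalSpectrum A)).inf MaximalSpectrum.asIdeal ≤ p := by
    refine le_trans (le_sInf ?_) h
    rintro M ⟨-, hM⟩
    exact Finset.inf_le (f := MaximalSpectrum.asIdeal) (Finset.mem_univ ⟨M, hM⟩)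
  obtain ⟨M, -, hM⟩ := (Ideal.IsPrime.inf_le' hp).mp h1
  rw [← M.isMaximal.eq_of_le hp.ne_top hM]
  exact M.isMaximal

theorem bot_isMaximal_of_alg (k : Type*) {A B D : Type*} [Field k] [CommRing A] [CommRing B]
    [Algebra k A] [Algebra k B] [CommRing D] [IsDomain D] (α : A →+* D) (β : B →+* D)
    (hcomp : α.comp (algebraMap k A) = β.comp (algebraMap k B))
    (hgen : ∀ S : Subring D, (∀ a, α a ∈ S) → (∀ b, β b ∈ S) → ∀ x, x ∈ S)
    (p : Ideal A) [p.IsMaximal] (hp : ∀ a ∈ p, α a = 0) (hq : (RingHom.ker β).IsMaximal)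
    (halg : Algebra.IsAlgebraic k (A ⧸ p)) : (⊥ : Ideal D).IsMaximal := by
  have hint : β.IsIntegral := by
    let _ := β.toAlgebra
    refine hgen (integralClosure B D).toSubring ?_ ?_
    · intro a
      have h1 : IsIntegral k (Ideal.Quotient.mk p a) :=
        (halg.isAlgebraic (Ideal.Quotient.mk p a)).isIntegral
      obtain ⟨f, hf, hfa⟩ := h1
      refine ⟨f.map (algebraMap k B), hf.map _, ?_⟩
      have h2 : f.eval₂ (algebraMap k A) a ∈ p := by
        rw [← Ideal.Quotient.eq_zero_iff_mem, Polynomial.hom_eval₂]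
        exact hfa
      have h3 := hp _ h2
      rw [Polynomial.hom_eval₂, hcomp] at h3
      rw [Polynomial.eval₂_map]
      exact h3
    · intro b
      exact isIntegral_algebraMap (R := B) (A := D) (x := b)
  exact Ideal.isMaximal_of_isIntegral_of_isMaximal_comap' β hint ⊥ hq

section upper
variable (k : Type*) {A B : Type*} [Field k] [CommRing A] [CommRing B]
  [Algebra k A] [Algebra k B] {E : Type*} [CommRing E] {φ : A ⊗[k] B →+* E}

theorem isMaximal_of_radical_le [Finite (MaximalSpectrum A)] [Finite (MaximalSpectrum B)]
    (h : LikeCompletion φ (tI k (⊥ : Ideal A).jacobson (⊥ : Ideal B).jacobson))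
    (halg : ∀ (p : MaximalSpectrum A) (q : MaximalSpectrum B),
      Algebra.IsAlgebraic k (A ⧸ p.asIdeal) ∨ Algebra.IsAlgebraic k (B ⧸ q.asIdeal))
    (α : A →+* E) (β : B →+* E) (hα : ∀ a, α a = φ (a ⊗ₜ 1)) (hβ : ∀ b, β b = φ (1 ⊗ₜ b))
    (P : Ideal E) [hP : P.IsPrime]
    (hrP : (tI k (⊥ : Ideal A).jacobson (⊥ : Ideal B).jacobson).map φ ≤ P) :
    (P.comap α).IsMaximal ∧ (P.comap β).IsMaximal ∧ P.IsMaximal := by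
  have h1 : (P.comap α).IsMaximal := by
    apply exists_max_eq_of_jacobson_le
    intro a ha
    rw [Ideal.mem_comap, hα]
    exact hrP (Ideal.mem_map_of_mem φ (mem_tI_left k _ ha))
  have h2 : (P.comap β).IsMaximal := by
    apply exists_max_eq_of_jacobson_le
    intro b hb
    rw [Ideal.mem_comap, hβ]
    exact hrP (Ideal.mem_map_of_mem φ (mem_tI_right k _ hb))
  refine ⟨h1, h2, ?_⟩
  let π := Ideal.Quotient.mk P
  have hgen : ∀ S : Subring (E ⧸ P), (∀ a, π.comp α a ∈ S) → (∀ b, π.comp β b ∈ S) →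
      ∀ x, x ∈ S := by
    intro S hA hB x
    obtain ⟨y, rfl⟩ := Ideal.Quotient.mk_surjective x
    obtain ⟨c, hc⟩ := h.surj 1 y
    rw [pow_one] at hc
    rw [Ideal.Quotient.eq.mpr (hrP hc)]
    clear hc
    induction c using TensorProduct.induction_on with
    | zero => rw [map_zero, map_zero]; exact S.zero_mem
    | add x y hx hy => rw [map_add, map_add]; exact S.add_mem hx hy
    | tmul a b =>
      have : a ⊗ₜ[k] b = (a ⊗ₜ 1) * (1 ⊗ₜ b) := by simp
      rw [this, map_mul, map_mul, ← hα, ← hβ]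
      exact S.mul_mem (hA a) (hB b)
  have hcomp : (π.comp α).comp (algebraMap k A) = (π.comp β).comp (algebraMap k B) := by
    ext c
    simp only [RingHom.comp_apply, hα, hβ]
    rw [Algebra.algebraMap_eq_smul_one, Algebra.algebraMap_eq_smul_one, TensorProduct.smul_tmul]
  have hkα : RingHom.ker (π.comp α) = P.comap α :=
    Ideal.ext fun x => Ideal.Quotient.eq_zero_iff_mem
  have hkβ : RingHom.ker (π.comp β) = P.comap β :=
    Ideal.ext fun x => Ideal.Quotient.eq_zero_iff_mem
  have hbot : (⊥ : Ideal (E ⧸ P)).IsMaximal := by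
    rcases halg ⟨_, h1⟩ ⟨_, h2⟩ with ha | hb
    · exact bot_isMaximal_of_alg k (π.comp α) (π.comp β) hcomp hgen (P.comap α)
        (fun a ha => Ideal.Quotient.eq_zero_iff_mem.mpr ha) (hkβ ▸ h2) ha
    · exact bot_isMaximal_of_alg k (π.comp β) (π.comp α) hcomp.symm
        (fun S hA hB => hgen S hB hA) (P.comap β)
        (fun a ha => Ideal.Quotient.eq_zero_iff_mem.mpr ha) (hkα ▸ h1) hb
  exact Ideal.bot_quotient_isMaximal_iff P |>.mp hbot

theorem upper_bound [IsNoetherianRing A] [IsNoetherianRing B] [IsNoetherianRing E]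
    [Finite (MaximalSpectrum A)] [Finite (MaximalSpectrum B)]
    (h : LikeCompletion φ (tI k (⊥ : Ideal A).jacobson (⊥ : Ideal B).jacobson))
    (halg : ∀ (p : MaximalSpectrum A) (q : MaximalSpectrum B),
      Algebra.IsAlgebraic k (A ⧸ p.asIdeal) ∨ Algebra.IsAlgebraic k (B ⧸ q.asIdeal)) :
    ringKrullDim E ≤ ringKrullDim A + ringKrullDim B := by
  classical
  let α : A →+* E := φ.comp (Algebra.TensorProduct.includeLeft (R := k) (S := k)
    (A := A) (B := B)).toRingHom
  let β : B →+* E := φ.comp (Algebra.TensorProduct.includeRight (R := k)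
    (A := A) (B := B)).toRingHom
  have hα : ∀ a, α a = φ (a ⊗ₜ 1) := fun _ => rfl
  have hβ : ∀ b, β b = φ (1 ⊗ₜ b) := fun _ => rfl
  rw [ringKrullDim_le_iff_isMaximal_height_le]
  intro M hM
  have hjM : (⊥ : Ideal E).jacobson ≤ M := sInf_le ⟨bot_le, hM⟩
  obtain ⟨hp, hq, -⟩ := isMaximal_of_radical_le k h halg α β hα hβ M (h.jac.trans hjM)
  obtain ⟨s, hs, hsc⟩ := (M.comap α).exists_finset_card_eq_height_of_isNoetherianRing
  obtain ⟨t, ht, htc⟩ := (M.comap β).exists_finset_card_eq_height_of_isNoetherianRing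
  have hmin : M ∈ (Ideal.span ((s.image α ∪ t.image β : Finset E) : Set E)).minimalPrimes := by
    refine ⟨⟨hM.isPrime, ?_⟩, ?_⟩
    · rw [Ideal.span_le]
      intro x hx
      simp only [Finset.coe_union, Finset.coe_image, Set.mem_union, Set.mem_image] at hx
      rcases hx with ⟨a, ha, rfl⟩ | ⟨b, hb, rfl⟩
      · exact hs.1.2 (Ideal.subset_span ha)
      · exact ht.1.2 (Ideal.subset_span hb)
    · rintro P ⟨hP, hsP⟩ hPM
      have h1 : M.comap α ≤ P.comap α := by
        refine hs.2 ⟨inferInstance, ?_⟩ (Ideal.comap_mono hPM)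
        rw [Ideal.span_le]
        intro a ha
        refine hsP (Ideal.subset_span ?_)
        simp only [Finset.coe_union, Finset.coe_image]
        exact Or.inl ⟨a, ha, rfl⟩
      have h2 : M.comap β ≤ P.comap β := by
        refine ht.2 ⟨inferInstance, ?_⟩ (Ideal.comap_mono hPM)
        rw [Ideal.span_le]
        intro a ha
        refine hsP (Ideal.subset_span ?_)
        simp only [Finset.coe_union, Finset.coe_image]
        exact Or.inr ⟨a, ha, rfl⟩
      have h3 : (tI k (⊥ : Ideal A).jacobson (⊥ : Ideal B).jacobson).map φ ≤ P := by
        rw [Ideal.map_le_iff_le_comap]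
        refine sup_le ?_ ?_ <;> rw [Ideal.map_le_iff_le_comap]
        · exact le_trans (sInf_le ⟨bot_le, hp⟩) h1
        · exact le_trans (sInf_le ⟨bot_le, hq⟩) h2
      exact ((isMaximal_of_radical_le k h halg α β hα hβ P h3).2.2.eq_of_le hM.ne_top hPM).ge
  have h4 := Ideal.height_le_card_of_mem_minimalPrimes_span_finset hmin
  have h5 : M.height ≤ (M.comap α).height + (M.comap β).height := by
    rw [← hsc, ← htc]
    refine h4.trans ?_
    have := (Finset.card_union_le (s.image α) (t.image β)).trans
      (add_le_add Finset.card_image_le Finset.card_image_le)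
    exact_mod_cast this
  calc (M.height : WithBot ℕ∞) ≤ ((M.comap α).height + (M.comap β).height : ℕ∞) := by
        exact_mod_cast h5
    _ = ((M.comap α).height : WithBot ℕ∞) + (M.comap β).height := by push_cast; rfl
    _ ≤ _ := add_le_add Ideal.height_le_ringKrullDim_of_isPrime
      Ideal.height_le_ringKrullDim_of_isPrime

end upper

/-- Let `A` and `B` be two semilocal Noetherian commutative rings
containing a field `k` such that `A ⊗̂[k] B` is Noetherian. If for every maximal ideal
`m_r` of `A` and every maximal ideal `n_s` of `B` at least one of the residue field
extensions `A ⧸ m_r` or `B ⧸ n_s` is algebraic over `k`, then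
`dim (A ⊗̂[k] B) = dim A + dim B`. -/
theorem ringKrullDim_completedTensor_of_algebraic (k A B : Type*) [Field k]
    [CommRing A] [CommRing B] [IsNoetherianRing A] [IsNoetherianRing B]
    [Algebra k A] [Algebra k B]
    [Finite (MaximalSpectrum A)] [Finite (MaximalSpectrum B)]
    (hE : IsNoetherianRing (CompletedTensor k A B))
    (halg : ∀ (p : MaximalSpectrum A) (q : MaximalSpectrum B),
      Algebra.IsAlgebraic k (A ⧸ p.asIdeal) ∨ Algebra.IsAlgebraic k (B ⧸ q.asIdeal)) :
    ringKrullDim (CompletedTensor k A B) = ringKrullDim A + ringKrullDim B := by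

  have h := likeCompletion_adic (tensorRadical k A B) (tI_fg k _ _)
  apply le_antisymm
  · exact upper_bound k h halg
  · rcases subsingleton_or_nontrivial A with hA | hA
    · rw [ringKrullDim_eq_bot_of_subsingleton (R := A), WithBot.bot_add]
      exact bot_le
    rcases subsingleton_or_nontrivial B with hB | hB
    · rw [ringKrullDim_eq_bot_of_subsingleton (R := B), WithBot.add_bot]
      exact bot_le
    exact lower_bound k h
end

section
/- Let σ : A → B be a flat ring homomorphism of Noetherian commutative rings, where A is a complete local ring with maximal ideal m and the extended ideal mB is contained in the Jacobson radical of B. If the fiber B/mB is geometrically reduced over the field A/m and A is reduced, then B is reduced. -/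
open TensorProduct IsLocalRing

universe u v

/-- An algebra `R` over a field `F` is geometrically reduced if `L ⊗[F] R` is reduced
for every finite field extension `L` of `F`. -/
def GeometricallyReduced (F : Type u) (R : Type v) [Field F] [CommRing R]
    [Algebra F R] : Prop :=
  ∀ (L : Type u) [Field L] [Algebra F L] [FiniteDimensional F L], IsReduced (L ⊗[F] R)

lemma aux_algClosed_fg {k S K : Type*} [Field k] [IsAlgClosed k] [CommRing S] [Algebra k S]
    [IsReduced S] [Algebra.FiniteType k S] [Field K] [Algebra k K] : IsReduced (S ⊗[k] K) := by
  refine ⟨fun z hz => ?_⟩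
  let b := Module.Basis.ofVectorSpace k K
  have key : ∀ (φ : S →ₐ[k] k) (z : S ⊗[k] K) (i),
      φ ((b.baseChange S).repr z i) =
        b.repr (Algebra.TensorProduct.lid k K (Algebra.TensorProduct.map φ (AlgHom.id k K) z)) i := by
    intro φ z i
    induction z using TensorProduct.induction_on with
    | zero => simp
    | tmul x y => simp [Module.Basis.baseChange_repr_tmul, mul_comm]
    | add x y hx hy => simp [hx, hy]
  apply (b.baseChange S).repr.injective
  ext i
  have hJ : IsJacobsonRing S := isJacobsonRing_of_finiteType (A := k)
  have hmem : (b.baseChange S).repr z i ∈ (⊥ : Ideal S).jacobson := by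
    rw [Ideal.jacobson, Ideal.mem_sInf]
    rintro M ⟨-, hM⟩
    let : Field (S ⧸ M) := Ideal.Quotient.field M
    have hfin : Module.Finite k (S ⧸ M) := finite_of_finite_type_of_isJacobsonRing k (S ⧸ M)
    let e : k ≃ₐ[k] (S ⧸ M) := AlgEquiv.ofBijective (Algebra.ofId k (S ⧸ M))
      (IsAlgClosed.algebraMap_bijective_of_isIntegral (k := k) (K := S ⧸ M))
    let φ : S →ₐ[k] k := (e.symm : (S ⧸ M) →ₐ[k] k).comp (Ideal.Quotient.mkₐ k M)
    have h0 : Algebra.TensorProduct.lid k K (Algebra.TensorProduct.map φ (AlgHom.id k K) z) = 0 :=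
      ((hz.map (Algebra.TensorProduct.map φ (AlgHom.id k K))).map
        (Algebra.TensorProduct.lid k K)).eq_zero
    have h1 := key φ z i
    rw [h0, map_zero, Finsupp.zero_apply] at h1
    have h2 : e.symm (Ideal.Quotient.mk M ((b.baseChange S).repr z i)) = 0 := h1
    exact Ideal.Quotient.eq_zero_iff_mem.1 ((map_eq_zero_iff _ e.symm.injective).1 h2)
  have hr : (⊥ : Ideal S).IsRadical := fun x hx => by
    obtain ⟨n, hn⟩ := hx
    exact (IsNilpotent.eq_zero ⟨n, by simpa using hn⟩ : x = 0)
  rw [hJ.out hr] at hmem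
  simpa using hmem

lemma aux_algClosed {k S K : Type*} [Field k] [IsAlgClosed k] [CommRing S] [Algebra k S]
    [IsReduced S] [Field K] [Algebra k K] : IsReduced (K ⊗[k] S) := by
  apply IsReduced.tensorProduct_of_flat_of_forall_fg
  intro B hB
  have : Algebra.FiniteType k B := B.fg_iff_finiteType.1 hB
  have : IsReduced B := isReduced_of_injective B.val Subtype.val_injective
  have := aux_algClosed_fg (k := k) (S := B) (K := K)
  exact isReduced_of_injective (Algebra.TensorProduct.comm k K B)
    (Algebra.TensorProduct.comm k K B).injective

lemma aux_geom {F : Type u} {R : Type v} [Field F] [CommRing R] [Algebra F R]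
    (h : GeometricallyReduced F R) (K : Type*) [Field K] [Algebra F K] :
    IsReduced (K ⊗[F] R) := by
  have h1 : IsReduced (R ⊗[F] AlgebraicClosure F) := by
    apply IsReduced.tensorProduct_of_flat_of_forall_fg
    intro B hB
    have hf : IsField B := B.isField_of_algebraic
    let := hf.toField
    have : Algebra.FiniteType F B := B.fg_iff_finiteType.1 hB
    have : Algebra.IsIntegral F B := Algebra.IsIntegral.of_injective B.val Subtype.val_injective
    have : FiniteDimensional F B := Algebra.IsIntegral.finite
    have := h B
    exact isReduced_of_injective (Algebra.TensorProduct.comm F R B)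
      (Algebra.TensorProduct.comm F R B).injective
  have h2 : IsReduced (AlgebraicClosure F ⊗[F] R) :=
    isReduced_of_injective (Algebra.TensorProduct.comm F _ R)
      (Algebra.TensorProduct.comm F _ R).injective
  let f : AlgebraicClosure F →ₐ[F] AlgebraicClosure K := IsAlgClosed.lift
  let := f.toRingHom.toAlgebra
  have : IsScalarTower F (AlgebraicClosure F) (AlgebraicClosure K) :=
    IsScalarTower.of_algebraMap_eq' (f.comp_algebraMap.symm)
  have h3 : IsReduced (AlgebraicClosure K ⊗[AlgebraicClosure F] (AlgebraicClosure F ⊗[F] R)) :=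
    aux_algClosed
  let e := Algebra.TensorProduct.cancelBaseChange F (AlgebraicClosure F) (AlgebraicClosure F)
    (AlgebraicClosure K) R
  have h4 : IsReduced (AlgebraicClosure K ⊗[F] R) := isReduced_of_injective e.symm e.symm.injective
  exact isReduced_of_injective
    (Algebra.TensorProduct.map (IsScalarTower.toAlgHom F K (AlgebraicClosure K)) (AlgHom.id F R))
    (Module.Flat.rTensor_preserves_injective_linearMap _ (RingHom.injective _))

lemma aux_artinian {A : Type*} [CommRing A] [IsNoetherianRing A] [IsLocalRing A] (k : ℕ) :
    IsArtinianRing (A ⧸ maximalIdeal A ^ k) := by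
  rcases k with _ | k
  · have : Subsingleton (A ⧸ maximalIdeal A ^ 0) :=
      Ideal.Quotient.subsingleton_iff.2 (by simp)
    infer_instance
  · apply IsLocalRing.quotient_artinian_of_mem_minimalPrimes_of_isLocalRing
    rw [← Ideal.radical_minimalPrimes, Ideal.radical_pow _ (by simp),
      (maximalIdeal.isMaximal A).isPrime.radical, Ideal.minimalPrimes_eq_subsingleton_self]
    simp

lemma aux_krull {R : Type*} [CommRing R] [IsNoetherianRing R] (I J : Ideal R)
    (h : I ≤ Ideal.jacobson ⊥) (x : R) (hx : ∀ k : ℕ, x ∈ J ⊔ I ^ k) : x ∈ J := by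
  have := Ideal.iInf_pow_smul_eq_bot_of_le_jacobson (M := R ⧸ J) I h
  have h2 : (Submodule.Quotient.mk x : R ⧸ J) ∈ (⨅ i : ℕ, I ^ i • ⊤ : Submodule R (R ⧸ J)) := by
    rw [Submodule.mem_iInf]
    intro k
    obtain ⟨a, ha, b, hb, rfl⟩ := Submodule.mem_sup.1 (hx k)
    have : (Submodule.Quotient.mk (a + b) : R ⧸ J) = b • Submodule.Quotient.mk (1 : R) := by
      rw [← Submodule.Quotient.mk_smul, Submodule.Quotient.eq]
      simpa using ha
    rw [this]
    exact Submodule.smul_mem_smul hb trivial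
  rw [this] at h2
  exact (Submodule.Quotient.mk_eq_zero J).1 h2

lemma aux_chevalley {A : Type*} [CommRing A] [IsNoetherianRing A] [IsLocalRing A]
    [IsAdicComplete (maximalIdeal A) A] (S : Set (Ideal A)) (hne : S.Nonempty)
    (hinf : ∀ I ∈ S, ∀ J ∈ S, I ⊓ J ∈ S) (k : ℕ) :
    ∃ I ∈ S, I ≤ sInf S ⊔ maximalIdeal A ^ k := by
  set m := maximalIdeal A with hm
  have hmin : ∀ k : ℕ, ∃ I ∈ S, ∀ I' ∈ S, I ≤ I' ⊔ m ^ k := by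
    intro k
    have := aux_artinian (A := A) k
    let T : Set (Ideal (A ⧸ m ^ k)) := (Ideal.map (Ideal.Quotient.mk (m ^ k))) '' S
    obtain ⟨_, ⟨I, hI, rfl⟩, hmin⟩ := IsArtinian.set_has_minimal T (hne.image _)
    refine ⟨I, hI, fun I' hI' => ?_⟩
    have h1 := hmin _ ⟨_, hinf I hI I' hI', rfl⟩
    have h2 : Ideal.map (Ideal.Quotient.mk (m ^ k)) (I ⊓ I') ≤ Ideal.map (Ideal.Quotient.mk (m ^ k)) I :=
      Ideal.map_mono inf_le_left
    have h3 : Ideal.map (Ideal.Quotient.mk (m ^ k)) I ≤ Ideal.map (Ideal.Quotient.mk (m ^ k)) I' := by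
      rcases h2.lt_or_eq with h | h
      · exact absurd h h1
      · rw [← h]; exact Ideal.map_mono inf_le_right
    rw [Ideal.map_le_iff_le_comap, Ideal.comap_map_of_surjective _ Ideal.Quotient.mk_surjective,
      ← RingHom.ker_eq_comap_bot, Ideal.mk_ker] at h3
    exact h3
  choose I hIS hI using hmin
  refine ⟨I k, hIS k, fun a ha => ?_⟩
  have step : ∀ j, ∀ a : I j, ∃ b : I (j+1), (a : A) - b ∈ m ^ j := by
    intro j a
    obtain ⟨b, hb, c, hc, h⟩ := Submodule.mem_sup.1 (hI j _ (hIS (j+1)) a.2)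
    exact ⟨⟨b, hb⟩, by rw [← h]; simpa using hc⟩
  choose g hg using step
  let s : ∀ n, I (k + n) := fun n => Nat.rec (motive := fun n => I (k + n)) ⟨a, ha⟩ (fun n x => g (k+n) x) n
  have hs : ∀ n, (s n : A) - s (n+1) ∈ m ^ (k + n) := fun n => hg (k+n) (s n)
  have hs' : ∀ n p, (s n : A) - s (n + p) ∈ m ^ (k + n) := by
    intro n p
    induction p with
    | zero => simp
    | succ p ih =>
      have := add_mem ih (Ideal.pow_le_pow_right (by omega) (hs (n+p)))
      rw [sub_add_sub_cancel] at this
      exact this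
  obtain ⟨L, hL⟩ := IsPrecomplete.prec (I := m) (M := A) inferInstance (f := fun n => (s n : A)) (by
    intro p n hpn
    obtain ⟨q, rfl⟩ := Nat.exists_eq_add_of_le hpn
    rw [SModEq.sub_mem]
    simpa using Ideal.pow_le_pow_right (by omega) (hs' p q))
  have hL' : ∀ n, (s n : A) - L ∈ m ^ n := fun n => by
    have := hL n
    rw [SModEq.sub_mem] at this
    simpa using this
  have hLS : L ∈ sInf S := by
    rw [Ideal.mem_sInf]
    intro I' hI'
    apply aux_krull m I' (maximalIdeal_le_jacobson _)
    intro j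
    have h1 : (s j : A) ∈ I' ⊔ m ^ j :=
      (sup_le_sup_left (Ideal.pow_le_pow_right (Nat.le_add_left j k)) I' :
        I' ⊔ m ^ (k + j) ≤ I' ⊔ m ^ j) (hI _ _ hI' (s j).2)
    have := sub_mem h1 ((le_sup_right : _ ≤ I' ⊔ m ^ j) (hL' j))
    simpa using this
  have h0 : a - L ∈ m ^ k := by
    have h1 := hs' 0 k
    rw [Nat.zero_add] at h1
    have h2 : (s k : A) - L ∈ m ^ k := hL' k
    have := add_mem h1 h2
    have h3 : (s 0 : A) = a := rfl
    rw [sub_add_sub_cancel, h3] at this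
    exact this
  have := add_mem (le_sup_left (b := m ^ k) hLS) (le_sup_right (a := sInf S) h0)
  simpa using this

lemma aux_one_tmul {A B : Type*} [CommRing A] [CommRing B] [Algebra A B] (I : Ideal A) (x : B) :
    TensorProduct.quotTensorEquivQuotSMul B I ((1 : A ⧸ I) ⊗ₜ[A] x) = Submodule.Quotient.mk x := by
  rw [← TensorProduct.quotTensorEquivQuotSMul_symm_mk, LinearEquiv.apply_symm_apply]

lemma aux_tmul_iff {A B : Type*} [CommRing A] [CommRing B] [Algebra A B] (I : Ideal A) (x : B) :
    (1 : A ⧸ I) ⊗ₜ[A] x = 0 ↔ x ∈ I.map (algebraMap A B) := by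
  rw [← (TensorProduct.quotTensorEquivQuotSMul B I).map_eq_zero_iff,
    aux_one_tmul, Submodule.Quotient.mk_eq_zero,
    Ideal.smul_top_eq_map]
  rfl

lemma aux_flat {A B N : Type*} [CommRing A] [CommRing B] [Algebra A B] [Module.Flat A B]
    [AddCommGroup N] [Module A N] (f : A →ₗ[A] N) (x : B) (h : f 1 ⊗ₜ[A] x = 0) :
    x ∈ Ideal.map (algebraMap A B) (LinearMap.ker f) := by
  rw [← aux_tmul_iff]
  let g : (A ⧸ LinearMap.ker f) →ₗ[A] N := (LinearMap.ker f).liftQ f le_rfl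
  have hg : Function.Injective g := by
    rw [← LinearMap.ker_eq_bot]; exact Submodule.ker_liftQ_eq_bot _ _ _ le_rfl
  apply Module.Flat.rTensor_preserves_injective_linearMap (M := B) g hg
  rw [map_zero]
  exact h

lemma aux_inf {A B : Type*} [CommRing A] [CommRing B] [Algebra A B] [Module.Flat A B]
    (I J : Ideal A) (x : B) (hI : x ∈ I.map (algebraMap A B)) (hJ : x ∈ J.map (algebraMap A B)) :
    x ∈ (I ⊓ J).map (algebraMap A B) := by
  have := aux_flat ((Submodule.mkQ I).prod (Submodule.mkQ J)) x (by
    rw [← aux_tmul_iff] at hI hJ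
    have h1 := congrArg ((LinearMap.inl A (A ⧸ I) (A ⧸ J)).rTensor B) hI
    have h2 := congrArg ((LinearMap.inr A (A ⧸ I) (A ⧸ J)).rTensor B) hJ
    rw [map_zero, LinearMap.rTensor_tmul] at h1 h2
    have h3 : ((Submodule.mkQ I).prod (Submodule.mkQ J)) 1 =
      LinearMap.inl A (A ⧸ I) (A ⧸ J) 1 + LinearMap.inr A (A ⧸ I) (A ⧸ J) 1 := by
      simp
    rw [h3, TensorProduct.add_tmul, h1, h2, add_zero])
  simpa [LinearMap.ker_prod] using this

/-- existence of the content ideal -/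
lemma aux_content {A B : Type*} [CommRing A] [CommRing B] [IsNoetherianRing A] [IsNoetherianRing B]
    [IsLocalRing A] [IsAdicComplete (maximalIdeal A) A]
    [Algebra A B] [Module.Flat A B]
    (hrad : Ideal.map (algebraMap A B) (maximalIdeal A) ≤ (⊥ : Ideal B).jacobson) (x : B) :
    ∃ J : Ideal A, x ∈ J.map (algebraMap A B) ∧
      ∀ I : Ideal A, x ∈ I.map (algebraMap A B) → J ≤ I := by
  let S : Set (Ideal A) := {I | x ∈ I.map (algebraMap A B)}
  refine ⟨sInf S, ?_, fun I hI => sInf_le hI⟩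
  apply aux_krull _ _ hrad
  intro k
  obtain ⟨I, hI, hle⟩ := aux_chevalley S ⟨⊤, by simp [S, Ideal.map_top]⟩
    (fun I hI J hJ => aux_inf I J x hI hJ) k
  rw [← Ideal.map_pow, ← Ideal.map_sup]
  exact Ideal.map_mono hle hI

lemma aux_map_max {V C : Type*} [CommRing V] [IsDomain V] [ValuationRing V] [CommRing C]
    (f : V →+* C) (I : Ideal V) (y : C) (hy : y ∈ I.map f) : ∃ v ∈ I, ∃ z, y = f v * z := by
  refine Submodule.span_induction (p := fun y _ => ∃ v ∈ I, ∃ z, y = f v * z) ?_ ?_ ?_ ?_ hy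
  · rintro _ ⟨v, hv, rfl⟩
    exact ⟨v, hv, 1, by simp⟩
  · exact ⟨0, I.zero_mem, 0, by simp⟩
  · rintro _ _ - - ⟨v, hv, z, rfl⟩ ⟨v', hv', z', rfl⟩
    rcases ValuationRing.dvd_total v v' with ⟨c, rfl⟩ | ⟨c, rfl⟩
    · exact ⟨v, hv, z + f c * z', by simp; ring⟩
    · exact ⟨v', hv', f c * z + z', by simp; ring⟩
  · rintro a _ - ⟨v, hv, z, rfl⟩
    exact ⟨v, hv, a * z, by simp; ring⟩

/-- Key step: a valuation ring `V` dominating (a quotient of) `A`. -/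
lemma aux_key {A B V : Type*} [CommRing A] [CommRing B] [IsNoetherianRing A]
    [IsLocalRing A] [Algebra A B] [Module.Flat A B]
    [CommRing V] [IsDomain V] [ValuationRing V] [Algebra A V]
    (hred : IsReduced (ResidueField V ⊗[A] B))
    (x : B) (hx : IsNilpotent x) (J : Ideal A) (hJ : x ∈ J.map (algebraMap A B))
    (hmin : ∀ I : Ideal A, x ∈ I.map (algebraMap A B) → J ≤ I) (a : A) (ha : a ∈ J) :
    algebraMap A V a = 0 := by
  by_contra ha0
  have hprin : (J.map (algebraMap A V)).IsPrincipal :=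
    IsBezout.isPrincipal_of_FG _ (((isNoetherianRing_iff_ideal_fg A).1 inferInstance J).map _)
  obtain ⟨w, hw⟩ := hprin
  have hw' : J.map (algebraMap A V) = Ideal.span {w} := hw
  have hw0 : w ≠ 0 := by
    rintro rfl
    have := Ideal.mem_map_of_mem (algebraMap A V) ha
    rw [hw'] at this
    simp at this
    exact ha0 this
  have h1 : (1 : V) ⊗ₜ[A] x ∈ (Ideal.span {w}).map (algebraMap V (V ⊗[A] B)) := by
    rw [← hw', Ideal.map_map, ← IsScalarTower.algebraMap_eq]
    have := Ideal.mem_map_of_mem (Algebra.TensorProduct.includeRight : B →ₐ[A] V ⊗[A] B) hJ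
    rw [AlgHom.coe_ideal_map, Ideal.map_map] at this
    rwa [AlgHom.comp_algebraMap] at this
  rw [Ideal.map_span, Set.image_singleton, Ideal.mem_span_singleton] at h1
  obtain ⟨y, hy⟩ := h1
  have hynil : IsNilpotent y := by
    have hxn : IsNilpotent ((1 : V) ⊗ₜ[A] x) :=
      hx.map (Algebra.TensorProduct.includeRight : B →ₐ[A] V ⊗[A] B)
    obtain ⟨n, hn⟩ := hxn
    refine ⟨n, ?_⟩
    rw [hy, mul_pow, ← map_pow, ← Algebra.smul_def] at hn
    exact (smul_eq_zero.1 hn).resolve_left (pow_ne_zero n hw0)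
  let π : V →ₐ[A] ResidueField V := IsScalarTower.toAlgHom A V (ResidueField V)
  have hπ : Function.Surjective π := IsLocalRing.residue_surjective
  have hyk : y ∈ RingHom.ker (Algebra.TensorProduct.map π (AlgHom.id A B)) :=
    (hynil.map (Algebra.TensorProduct.map π (AlgHom.id A B))).eq_zero
  rw [Algebra.TensorProduct.rTensor_ker _ hπ] at hyk
  obtain ⟨v, hv, z, hz⟩ := aux_map_max
    (Algebra.TensorProduct.includeLeft : V →ₐ[A] V ⊗[A] B).toRingHom _ y hyk
  have hvm : v ∈ maximalIdeal V := by
    rw [← IsLocalRing.ker_residue]; exact hv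
  -- the ideal of `A` cut out by `w * v`
  let 𝔞 : Ideal V := Ideal.span {w * v}
  let f : A →ₗ[A] (V ⧸ 𝔞) := Algebra.linearMap A (V ⧸ 𝔞)
  have hker : x ∈ Ideal.map (algebraMap A B) (LinearMap.ker f) := by
    apply aux_flat
    have hf1 : f 1 = 1 := by simp [f]
    rw [hf1]
    let q := Algebra.TensorProduct.map (Ideal.Quotient.mkₐ A 𝔞) (AlgHom.id A B)
    have hq : (1 : V ⧸ 𝔞) ⊗ₜ[A] x = q ((1 : V) ⊗ₜ[A] x) := by simp [q]
    have hwv : (algebraMap V (V ⊗[A] B) w) *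
        ((Algebra.TensorProduct.includeLeft : V →ₐ[A] V ⊗[A] B).toRingHom v * z) =
        ((w * v) ⊗ₜ[A] (1 : B)) * z := by
      rw [← mul_assoc]
      congr 1
      simp [Algebra.TensorProduct.algebraMap_apply]
    rw [hq, hy, hz, hwv, map_mul]
    have : q ((w * v) ⊗ₜ[A] (1 : B)) = 0 := by
      have h0 : (Ideal.Quotient.mkₐ A 𝔞) (w * v) = 0 :=
        Ideal.Quotient.eq_zero_iff_mem.2 (Ideal.mem_span_singleton_self _)
      simp only [q, Algebra.TensorProduct.map_tmul, h0, TensorProduct.zero_tmul]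
    rw [this, zero_mul]
  have hle : J.map (algebraMap A V) ≤ 𝔞 := by
    rw [Ideal.map_le_iff_le_comap]
    intro c hc
    have := hmin _ hker hc
    rw [LinearMap.mem_ker] at this
    have h' : Ideal.Quotient.mk 𝔞 (algebraMap A V c) = 0 := this
    exact Ideal.mem_comap.2 (Ideal.Quotient.eq_zero_iff_mem.1 h')
  rw [hw'] at hle
  have hww : w ∈ 𝔞 := hle (Ideal.mem_span_singleton_self w)
  obtain ⟨c, hc⟩ := Ideal.mem_span_singleton.1 hww
  have : v * c = 1 := by
    apply mul_left_cancel₀ hw0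
    rw [mul_one, ← mul_assoc, ← hc]
  exact (IsLocalRing.mem_maximalIdeal v).1 hvm (IsUnit.of_mul_eq_one _ this)

/-- **Statement 10.** Flat base with geometrically reduced closed fibre: `B` is reduced. -/
theorem isReduced_of_flat_of_geometricallyReduced_fiber
    (A B : Type*) [CommRing A] [CommRing B] [IsNoetherianRing A] [IsNoetherianRing B]
    [IsLocalRing A] [IsAdicComplete (maximalIdeal A) A]
    [Algebra A B] [Module.Flat A B]
    (hrad : Ideal.map (algebraMap A B) (maximalIdeal A) ≤ (⊥ : Ideal B).jacobson)
    (hfib : GeometricallyReduced (ResidueField A) (ResidueField A ⊗[A] B))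
    (hA : IsReduced A) : IsReduced B := by
  refine ⟨fun x hx => ?_⟩
  obtain ⟨J, hJ, hmin⟩ := aux_content hrad x
  suffices h : J = ⊥ by simpa [h] using hJ
  rw [eq_bot_iff]
  intro a ha
  have hmem : a ∈ nilradical A := by
    rw [nilradical_eq_sInf, Ideal.mem_sInf]
    intro p hp
    have hp' : p.IsPrime := hp
    obtain ⟨V, hV, hloc⟩ := IsLocalRing.exists_factor_valuationRing
      (algebraMap A (FractionRing (A ⧸ p)))
    let g : A →+* V := (algebraMap A (FractionRing (A ⧸ p))).codRestrict V.toSubring hV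
    let : Algebra A V := g.toAlgebra
    have : IsLocalHom (algebraMap A V) := hloc
    have h1 : IsReduced (ResidueField V ⊗[ResidueField A] (ResidueField A ⊗[A] B)) :=
      aux_geom hfib _
    let e := Algebra.TensorProduct.cancelBaseChange A (ResidueField A) (ResidueField A)
      (ResidueField V) B
    have h2 : IsReduced (ResidueField V ⊗[A] B) :=
      isReduced_of_injective e.symm e.symm.injective
    have h3 := aux_key (V := V) h2 x hx J hJ hmin a ha
    have h4 : algebraMap A (FractionRing (A ⧸ p)) a = 0 := congrArg Subtype.val h3
    rw [IsScalarTower.algebraMap_apply A (A ⧸ p)] at h4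
    exact Ideal.Quotient.eq_zero_iff_mem.1 ((IsFractionRing.to_map_eq_zero_iff).1 h4)
  exact (mem_nilradical.1 hmem).eq_zero
end
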